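/- arXiv:2402.11529 — 5 statements merged into one kernel-verified Lean document; each statement's English description precedes it below -/
import Mathlib

section
/- Let m ≥ 2 be an integer and let M, N be coprime integers with N odd and positive. Then lim_{t→0⁺} (m−1)·Σ_{k=0}^{∞} χ_{4(m−1)}(k)·e^{(2πiM/N − t)·k²/(8(m−1))} = −(1/(16(m−1)N²))·Σ_{k=0}^{4(m−1)N} k²·χ_{4(m−1)}(k)·e^{2πiMk²/(8(m−1)N)}. -/
open Finset

/-- The odd periodic function `χ_{4(m-1)}`. -/
def chiG (m : ℕ) (k : ℤ) : ℤ :=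
  if k % (4 * ((m : ℤ) - 1)) = (2 * (m : ℤ) - 3) % (4 * ((m : ℤ) - 1)) then 1
  else if k % (4 * ((m : ℤ) - 1)) = (2 * (m : ℤ) - 1) % (4 * ((m : ℤ) - 1)) then -1
  else 0

lemma abel_one (F g : ℕ → ℂ) (C : ℝ) (hF : ∀ n, ‖F n‖ ≤ C) (hg : Summable (fun n => ‖g n‖)) :
    ∑' k, (F (k+1) - F k) * g k = -(F 0 * g 0) + ∑' k, F (k+1) * (g k - g (k+1)) := by
  have key : ∀ H : ℕ → ℂ, (∀ n, ‖H n‖ ≤ C) → Summable (fun n => H n * g n) := by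
    intro H hH
    refine Summable.of_norm_bounded (hg.mul_left C) ?_
    intro n
    rw [norm_mul]
    exact mul_le_mul_of_nonneg_right (hH n) (norm_nonneg _)
  have h1 := key F hF
  have h2 := key (fun n => F (n+1)) (fun n => hF _)
  have h3 : Summable (fun n => F (n+1) * g (n+1)) := (summable_nat_add_iff 1).2 h1
  have e1 : ∑' k, (F (k+1) - F k) * g k = ∑' k, F (k+1) * g k - ∑' k, F k * g k := by
    rw [← h2.tsum_sub h1]
    exact tsum_congr fun k => by ring
  have e2 : ∑' k, F (k+1) * (g k - g (k+1))
      = ∑' k, F (k+1) * g k - ∑' k, F (k+1) * g (k+1) := by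
    rw [← h2.tsum_sub h3]
    exact tsum_congr fun k => by ring
  rw [e1, e2, h1.tsum_eq_zero_add]
  ring

lemma partial_periodic (f : ℕ → ℂ) (L : ℕ) (hper : ∀ n, f (n + L) = f n)
    (h0 : ∑ k ∈ Finset.range L, f k = 0) (n : ℕ) :
    ∑ k ∈ Finset.range (n + L), f k = ∑ k ∈ Finset.range n, f k := by
  rw [add_comm n L, Finset.sum_range_add, h0, zero_add]
  exact Finset.sum_congr rfl fun k _ => by rw [add_comm, hper]

lemma periodic_bounded (f : ℕ → ℂ) (L : ℕ) (hL : 0 < L) (hper : ∀ n, f (n + L) = f n) :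
    ∃ C : ℝ, ∀ n, ‖f n‖ ≤ C := by
  refine ⟨∑ k ∈ Finset.range L, ‖f k‖, fun n => ?_⟩
  have hp : Function.Periodic f L := hper
  rw [← hp.map_mod_nat n]
  exact Finset.single_le_sum (f := fun k => ‖f k‖) (fun i _ => norm_nonneg _)
    (Finset.mem_range.2 (Nat.mod_lt _ hL))

lemma avg_eq (f : ℕ → ℂ) (n : ℕ) :
    ∑ k ∈ Finset.range n, ∑ j ∈ Finset.range (k+1), f j
      = n * ∑ j ∈ Finset.range n, f j - ∑ j ∈ Finset.range n, j * f j := by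
  induction n with
  | zero => simp
  | succ n ih =>
    rw [Finset.sum_range_succ, ih, Finset.sum_range_succ _ n, Finset.sum_range_succ _ n]
    push_cast
    ring

/-- The Gaussian weight. -/
noncomputable def gau (s : ℝ) (k : ℕ) : ℝ := Real.exp (-(s * (k:ℝ)^2))

lemma gau_summable (s : ℝ) (hs : 0 < s) : Summable (gau s) := by
  have h2 : Summable (fun k : ℕ => Real.exp (k * (-s))) :=
    Real.summable_exp_nat_mul_iff.2 (by linarith)
  refine Summable.of_nonneg_of_le (fun k => (Real.exp_pos _).le) (fun k => ?_) h2
  apply Real.exp_le_exp.2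
  have : (k:ℝ) ≤ (k:ℝ)^2 := by
    rcases Nat.eq_zero_or_pos k with h | h
    · simp [h]
    · have : (1:ℝ) ≤ k := by exact_mod_cast h
      nlinarith
  nlinarith

lemma gau_diff2 (s : ℝ) (hs : 0 < s) (k : ℕ) :
    |gau s k - 2 * gau s (k+1) + gau s (k+2)| ≤ 80 / ((k:ℝ)+1)^2 := by
  have hle : ∀ j, gau s j ≤ 1 := fun j => by
    unfold gau
    rw [Real.exp_le_one_iff]
    have : 0 ≤ s * (j:ℝ)^2 := by positivity
    linarith
  have hpos : ∀ j, 0 < gau s j := fun j => Real.exp_pos _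
  rcases Nat.eq_zero_or_pos k with h | h
  · subst h
    have a0 := hle 0
    have a1 := hle 1
    have a2 := hle 2
    have b0 := hpos 0
    have b1 := hpos 1
    have b2 := hpos 2
    norm_num
    rw [abs_le]
    constructor <;> linarith
  · have hk : (1:ℝ) ≤ k := by exact_mod_cast h
    obtain ⟨x, hx⟩ : ∃ x : ℝ, x = (k:ℝ) := ⟨_, rfl⟩
    rw [← hx] at hk ⊢
    set u := Real.exp (-(s * (2*x+1))) with hu
    set v := Real.exp (-(s * 2)) with hv
    have hfac : gau s k - 2 * gau s (k+1) + gau s (k+2)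
        = gau s k * ((1-u)^2 - u^2*(1-v)) := by
      have e1 : gau s (k+1) = gau s k * u := by
        unfold gau
        rw [hu, ← Real.exp_add]
        congr 1
        rw [hx]
        push_cast
        ring
      have e2 : gau s (k+2) = gau s k * (u^2 * v) := by
        unfold gau
        rw [hu, hv, sq (Real.exp _), ← Real.exp_add, ← Real.exp_add, ← Real.exp_add]
        congr 1
        rw [hx]
        push_cast
        ring
      rw [e1, e2]
      ring
    have hu0 : 0 < u := Real.exp_pos _
    have hv0 : 0 < v := Real.exp_pos _
    have hu1 : u ≤ 1 := by
      rw [hu, Real.exp_le_one_iff]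
      have : 0 ≤ s * (2*x+1) := by positivity
      linarith
    have hv1 : v ≤ 1 := by
      rw [hv, Real.exp_le_one_iff]
      linarith
    have hu2 : 1 - u ≤ s * (3 * x) := by
      have := Real.add_one_le_exp (-(s * (2*x+1)))
      rw [← hu] at this
      nlinarith
    have hv2 : 1 - v ≤ s * 2 := by
      have := Real.add_one_le_exp (-(s * 2))
      rw [← hv] at this
      linarith
    have hbr : |(1-u)^2 - u^2*(1-v)| ≤ 9 * s^2 * x^2 + 2 * s := by
      have h1 : (1-u)^2 ≤ (s*(3*x))^2 := pow_le_pow_left₀ (by linarith) hu2 2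
      have h2 : u^2 * (1-v) ≤ 1 * (s*2) :=
        mul_le_mul (by nlinarith) hv2 (by linarith) (by norm_num)
      have h3 : 0 ≤ u^2 * (1-v) := mul_nonneg (by positivity) (by linarith)
      have h4 : 0 ≤ (1-u)^2 := sq_nonneg _
      rw [abs_le]
      constructor <;> nlinarith
    rw [hfac, abs_mul, abs_of_pos (hpos k), le_div_iff₀ (by positivity)]
    set y := s * x^2 with hy
    have hy0 : 0 ≤ y := by positivity
    have hq : (9*y^2 + 2*y) * gau s k ≤ 20 := by
      have hexp := Real.quadratic_le_exp_of_nonneg hy0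
      have : gau s k = (Real.exp y)⁻¹ := by
        unfold gau
        rw [← Real.exp_neg, hy, hx]
      rw [this, ← div_eq_mul_inv, div_le_iff₀ (Real.exp_pos _)]
      nlinarith
    have hx4 : (x+1)^2 ≤ 4 * x^2 := by nlinarith
    calc gau s k * |(1-u)^2 - u^2*(1-v)| * (x+1)^2
        ≤ gau s k * (9 * s^2 * x^2 + 2 * s) * (4 * x^2) := by
          have := hpos k
          gcongr
      _ = 4 * ((9*y^2 + 2*y) * gau s k) := by rw [hy]; ring
      _ ≤ 80 := by linarith

lemma gau_tendsto (k : ℕ) : Filter.Tendsto (fun s => gau s k) (nhdsWithin 0 (Set.Ioi 0)) (nhds 1) := by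
  have : Continuous (fun s => gau s k) := by unfold gau; fun_prop
  have h := this.tendsto 0
  have h0 : gau 0 k = 1 := by simp [gau]
  rw [h0] at h
  exact h.mono_left nhdsWithin_le_nhds

lemma main_limit (f : ℕ → ℂ) (L : ℕ) (hL : 0 < L) (hper : ∀ n, f (n + L) = f n)
    (h0 : ∑ k ∈ Finset.range L, f k = 0) :
    Filter.Tendsto (fun s : ℝ => ∑' k, f k * (gau s k : ℂ)) (nhdsWithin 0 (Set.Ioi 0))
      (nhds (-(1 / (L:ℂ)) * ∑ j ∈ Finset.range L, j * f j)) := by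
  have hLc : (L:ℂ) ≠ 0 := by exact_mod_cast hL.ne'
  set A : ℂ := -(1 / (L:ℂ)) * ∑ j ∈ Finset.range L, j * f j with hA
  set F : ℕ → ℂ := fun n => ∑ k ∈ Finset.range n, f k with hF
  have hFper : ∀ n, F (n + L) = F n := partial_periodic f L hper h0
  obtain ⟨C, hC⟩ := periodic_bounded F L hL hFper
  set p : ℕ → ℂ := fun n => F (n+1) - A with hp
  have hpper : ∀ n, p (n + L) = p n := fun n => by
    simp only [hp]
    rw [show n + L + 1 = (n+1) + L by ring, hFper]
  have hp0 : ∑ k ∈ Finset.range L, p k = 0 := by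
    simp only [hp, hF]
    rw [Finset.sum_sub_distrib, avg_eq, h0]
    simp only [Finset.sum_const, Finset.card_range, nsmul_eq_mul, hA]
    field_simp
    ring
  set G : ℕ → ℂ := fun n => ∑ k ∈ Finset.range n, p k with hG
  have hGper : ∀ n, G (n + L) = G n := partial_periodic p L hpper hp0
  obtain ⟨D, hD⟩ := periodic_bounded G L hL hGper
  have hD0 : 0 ≤ D := (norm_nonneg _).trans (hD 0)
  have hid : ∀ s : ℝ, 0 < s → ∑' k, f k * (gau s k : ℂ)
      = A + ∑' k, G (k+1) * ((gau s k - 2 * gau s (k+1) + gau s (k+2) : ℝ) : ℂ) := by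
    intro s hs
    have hg := gau_summable s hs
    have hgn : Summable (fun n => ‖(gau s n : ℂ)‖) := by
      refine hg.congr fun n => ?_
      rw [Complex.norm_real]
      exact (Real.norm_of_nonneg (Real.exp_pos _).le).symm
    have hgn1 : Summable (fun n => ‖(gau s (n+1) : ℂ)‖) :=
      (summable_nat_add_iff (f := fun n => ‖(gau s n : ℂ)‖) 1).2 hgn
    have hgc : Summable (fun n => (gau s n : ℂ)) := hgn.of_norm
    have hgc1 : Summable (fun n => (gau s (n+1) : ℂ)) := hgn1.of_norm
    set d : ℕ → ℂ := fun n => (gau s n : ℂ) - gau s (n+1) with hd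
    have hdn : Summable (fun n => ‖d n‖) :=
      Summable.of_nonneg_of_le (fun n => norm_nonneg _) (fun n => norm_sub_le _ _) (hgn.add hgn1)
    have hdc : Summable d := hdn.of_norm
    have hdsum : ∑' k, d k = 1 := by
      simp only [hd]
      rw [hgc.tsum_sub hgc1, hgc.tsum_eq_zero_add]
      simp [gau]
    have a1 := abel_one F (fun n => (gau s n : ℂ)) C hC hgn
    have a2 := abel_one G d D hD hdn
    have hF0 : F 0 = 0 := by simp [hF]
    have hG0 : G 0 = 0 := by simp [hG]
    have hFs : ∀ k, F (k+1) - F k = f k := fun k => by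
      simp only [hF]; rw [Finset.sum_range_succ]; ring
    have hGs : ∀ k, G (k+1) - G k = p k := fun k => by
      simp only [hG]; rw [Finset.sum_range_succ]; ring
    simp only [hFs, hF0] at a1
    simp only [hGs, hG0] at a2
    have hpd : Summable (fun k => p k * d k) := by
      obtain ⟨E, hE⟩ := periodic_bounded p L hL hpper
      refine Summable.of_norm_bounded (hdn.mul_left E) fun n => ?_
      rw [norm_mul]
      exact mul_le_mul_of_nonneg_right (hE n) (norm_nonneg _)
    have a3 : ∑' k, F (k+1) * d k = A + ∑' k, p k * d k := by
      have : ∑' k, A * d k = A := by rw [tsum_mul_left, hdsum, mul_one]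
      conv_rhs => rw [← this]
      rw [← (hdc.mul_left A).tsum_add hpd]
      exact tsum_congr fun k => by simp only [hp]; ring
    rw [a1, zero_mul, neg_zero, zero_add]
    change ∑' k, F (k+1) * d k = _
    rw [a3, a2, zero_mul, neg_zero, zero_add]
    congr 1
    refine tsum_congr fun k => ?_
    simp only [hd]
    push_cast
    ring
  have hlim : Filter.Tendsto (fun s : ℝ =>
      ∑' k, G (k+1) * ((gau s k - 2 * gau s (k+1) + gau s (k+2) : ℝ) : ℂ))
      (nhdsWithin 0 (Set.Ioi 0)) (nhds (∑' k : ℕ, (0:ℂ))) := by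
    refine tendsto_tsum_of_dominated_convergence
      (bound := fun k : ℕ => D * (80 / ((k:ℝ)+1)^2)) ?_ ?_ ?_
    · apply Summable.mul_left
      have h := (summable_nat_add_iff 1).2 (Real.summable_one_div_nat_pow.2 (by norm_num : 1 < 2))
      refine (h.mul_left 80).congr fun k => ?_
      push_cast
      ring
    · intro k
      have h1 := ((gau_tendsto k).sub ((gau_tendsto (k+1)).const_mul 2)).add (gau_tendsto (k+2))
      have h2 := ((Complex.continuous_ofReal.tendsto _).comp h1).const_mul (G (k+1))
      have h3 : G (k+1) * (((1 - 2 * 1 + 1 : ℝ)) : ℂ) = 0 := by norm_num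
      rw [h3] at h2
      exact h2
    · filter_upwards [self_mem_nhdsWithin] with s hs k
      rw [norm_mul, Complex.norm_real, Real.norm_eq_abs]
      exact mul_le_mul (hD _) (gau_diff2 s hs k) (abs_nonneg _) hD0
  rw [tsum_zero] at hlim
  have hfin := hlim.const_add A
  rw [add_zero] at hfin
  refine hfin.congr' ?_
  filter_upwards [self_mem_nhdsWithin] with s hs
  exact (hid s hs).symm

lemma chiG_add (a : ℕ) (k : ℤ) (j : ℤ) : chiG (a+1) (k + 4 * a * j) = chiG (a+1) k := by
  unfold chiG
  have : (4 * (((a+1:ℕ):ℤ) - 1)) = 4 * a := by push_cast; ring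
  rw [this, Int.add_mul_emod_self_left]

lemma chiG_neg (a : ℕ) (ha : 0 < a) (k : ℤ) : chiG (a+1) (-k) = - chiG (a+1) k := by
  unfold chiG
  have e : (4 * (((a+1:ℕ):ℤ) - 1)) = 4 * a := by push_cast; ring
  have e1 : (2 * ((a+1:ℕ):ℤ) - 3) = 2 * a - 1 := by push_cast; ring
  have e2 : (2 * ((a+1:ℕ):ℤ) - 1) = 2 * a + 1 := by push_cast; ring
  rw [e, e1, e2]
  have ha' : (0:ℤ) < a := by exact_mod_cast ha
  have k1 : (-k) % (4*(a:ℤ)) = (2*a-1) % (4*a) ↔ k % (4*(a:ℤ)) = (2*a+1) % (4*a) := by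
    change Int.ModEq _ _ _ ↔ Int.ModEq _ _ _
    rw [Int.modEq_iff_dvd, Int.modEq_iff_dvd]
    constructor
    · rintro ⟨c, hc⟩
      exact ⟨1 - c, by linarith⟩
    · rintro ⟨c, hc⟩
      exact ⟨1 - c, by linarith⟩
  have k2 : (-k) % (4*(a:ℤ)) = (2*a+1) % (4*a) ↔ k % (4*(a:ℤ)) = (2*a-1) % (4*a) := by
    change Int.ModEq _ _ _ ↔ Int.ModEq _ _ _
    rw [Int.modEq_iff_dvd, Int.modEq_iff_dvd]
    constructor
    · rintro ⟨c, hc⟩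
      exact ⟨1 - c, by linarith⟩
    · rintro ⟨c, hc⟩
      exact ⟨1 - c, by linarith⟩
  have hne : (2*(a:ℤ)-1) % (4*a) ≠ (2*a+1) % (4*a) := by
    rw [Int.emod_eq_of_lt (by linarith) (by linarith), Int.emod_eq_of_lt (by linarith) (by linarith)]
    linarith
  simp only [k1, k2]
  split_ifs with h1 h2 <;> simp_all

theorem stmt12 (m : ℕ) (hm : 2 ≤ m) (M : ℤ) (N : ℕ) (hN : 0 < N) (hNodd : Odd N)
    (hMN : IsCoprime M (N : ℤ)) :
    Filter.Tendsto
      (fun t : ℝ => ((m : ℂ) - 1) *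
        ∑' k : ℕ, (chiG m k : ℂ) *
          Complex.exp ((2 * Real.pi * Complex.I * M / N - t) *
            ((k : ℂ) ^ 2 / (8 * ((m : ℂ) - 1)))))
      (nhdsWithin 0 (Set.Ioi 0))
      (nhds (-(1 / (16 * ((m : ℂ) - 1) * (N : ℂ) ^ 2)) *
        ∑ k ∈ Finset.range (4 * (m - 1) * N + 1),
          (k : ℂ) ^ 2 * (chiG m k : ℂ) *
            Complex.exp (2 * Real.pi * Complex.I * M * (k : ℂ) ^ 2 /
              (8 * ((m : ℂ) - 1) * N)))) := by
  obtain ⟨a, rfl⟩ : ∃ a, m = a + 1 := ⟨m - 1, by omega⟩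
  have ha : 0 < a := by omega
  have hac : (a:ℂ) ≠ 0 := by exact_mod_cast ha.ne'
  have hNc : (N:ℂ) ≠ 0 := by exact_mod_cast hN.ne'
  have hm1 : (((a+1:ℕ):ℂ) - 1) = a := by push_cast; ring
  simp only [hm1, Nat.add_sub_cancel]
  set L := 4 * a * N with hLdef
  have hL : 0 < L := by positivity
  have hLc : (L:ℂ) = 4 * a * N := by rw [hLdef]; push_cast; ring
  set φ : ℤ → ℂ := fun k => (chiG (a+1) k : ℂ) *
    Complex.exp (2 * Real.pi * Complex.I * M * (k : ℂ) ^ 2 / (8 * a * N)) with hφ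
  have φper : ∀ k : ℤ, φ (k + L) = φ k := by
    intro k
    simp only [hφ]
    have : chiG (a+1) (k + L) = chiG (a+1) k := by
      rw [← chiG_add a k N, hLdef]; push_cast; rfl
    rw [this]
    congr 1
    rw [Complex.exp_eq_exp_iff_exists_int]
    refine ⟨M * k + 2 * a * N * M, ?_⟩
    push_cast
    rw [hLc]
    field_simp
    ring
  have φneg : ∀ k : ℤ, φ (-k) = - φ k := by
    intro k
    simp only [hφ]
    rw [chiG_neg a ha]
    push_cast
    rw [neg_sq]
    ring
  set f : ℕ → ℂ := fun k => φ k with hf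
  have fper : ∀ n, f (n + L) = f n := fun n => by
    simp only [hf]; push_cast; exact φper n
  have f0 : f 0 = 0 := by
    have := φneg 0
    simp only [neg_zero] at this
    simp only [hf, Nat.cast_zero]
    linear_combination this / 2
  have fL : f L = 0 := by have := fper 0; rw [zero_add] at this; rw [this, f0]
  have frefl : ∀ j, j ≤ L → f (L - j) = - f j := by
    intro j hj
    simp only [hf]
    rw [Nat.cast_sub hj, ← φneg, ← φper (-j)]
    congr 1
    ring
  have hrefl : ∀ w : ℂ → ℂ, ∑ k ∈ Finset.range (L+1), w k * f k
      = - ∑ k ∈ Finset.range (L+1), w (L - k) * f k := by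
    intro w
    rw [← Finset.sum_range_reflect, ← Finset.sum_neg_distrib]
    refine Finset.sum_congr rfl fun j hj => ?_
    have hj' : j ≤ L := by have := Finset.mem_range.1 hj; omega
    rw [show L + 1 - 1 - j = L - j by omega, frefl j hj', Nat.cast_sub hj']
    ring
  have S0 : ∑ k ∈ Finset.range (L+1), f k = 0 := by
    have := hrefl (fun _ => 1)
    simp only [one_mul] at this
    linear_combination this / 2
  have S0' : ∑ k ∈ Finset.range L, f k = 0 := by
    rw [Finset.sum_range_succ, fL, add_zero] at S0
    exact S0
  have S2 : ∑ k ∈ Finset.range (L+1), (k:ℂ)^2 * f k = L * ∑ j ∈ Finset.range L, j * f j := by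
    have h := hrefl (fun x => x^2)
    have e : ∑ k ∈ Finset.range (L+1), ((L:ℂ) - k)^2 * f k
        = L^2 * ∑ k ∈ Finset.range (L+1), f k - 2 * L * ∑ k ∈ Finset.range (L+1), k * f k
          + ∑ k ∈ Finset.range (L+1), (k:ℂ)^2 * f k := by
      rw [Finset.mul_sum, Finset.mul_sum, ← Finset.sum_sub_distrib, ← Finset.sum_add_distrib]
      exact Finset.sum_congr rfl fun k _ => by ring
    have e' : ∑ k ∈ Finset.range (L+1), (k:ℂ) * f k = ∑ k ∈ Finset.range L, (k:ℂ) * f k := by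
      rw [Finset.sum_range_succ, fL, mul_zero, add_zero]
    rw [e, S0, e'] at h
    linear_combination h / 2
  have hml := main_limit f L hL fper S0'
  have hscale : Filter.Tendsto (fun t : ℝ => t / (8 * a)) (nhdsWithin 0 (Set.Ioi 0))
      (nhdsWithin 0 (Set.Ioi 0)) := by
    refine tendsto_nhdsWithin_iff.2 ⟨?_, ?_⟩
    · have hc : Continuous (fun t : ℝ => t / (8 * a)) := by fun_prop
      have := hc.tendsto 0
      rw [zero_div] at this
      exact this.mono_left nhdsWithin_le_nhds
    · filter_upwards [self_mem_nhdsWithin] with t ht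
      have : (0:ℝ) < t := ht
      exact Set.mem_Ioi.2 (by positivity)
  have hfin := (hml.comp hscale).const_mul (a:ℂ)
  have eR : (-(1 / (16 * (a : ℂ) * (N : ℂ) ^ 2)) *
        ∑ k ∈ Finset.range (L + 1),
          (k : ℂ) ^ 2 * (chiG (a+1) k : ℂ) *
            Complex.exp (2 * Real.pi * Complex.I * M * (k : ℂ) ^ 2 / (8 * a * N)))
      = a * (-(1 / (L:ℂ)) * ∑ j ∈ Finset.range L, j * f j) := by
    have : ∑ k ∈ Finset.range (L + 1),
          (k : ℂ) ^ 2 * (chiG (a+1) k : ℂ) *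
            Complex.exp (2 * Real.pi * Complex.I * M * (k : ℂ) ^ 2 / (8 * a * N))
        = ∑ k ∈ Finset.range (L+1), (k:ℂ)^2 * f k := by
      refine Finset.sum_congr rfl fun k _ => ?_
      simp only [hf, hφ]
      push_cast
      ring
    rw [this, S2, hLc]
    field_simp
    ring
  rw [eR]
  refine hfin.congr fun t => ?_
  simp only [Function.comp]
  congr 1
  refine tsum_congr fun k => ?_
  simp only [hf, hφ, gau]
  rw [mul_assoc, Complex.ofReal_exp, ← Complex.exp_add]
  congr 2
  push_cast
  field_simp
  ring
end

section
/- Let m ≥ 2 be an integer and let M, N be coprime integers with N odd and positive, and set ζ = e^{2πiM/N}. Then U_{m,N}(ζ) = −(1/(16(m−1)N²))·e^{−2πiM(2m−3)²/(8(m−1)N)}·Σ_{k=0}^{4(m−1)N} k²·χ_{4(m−1)}(k)·e^{2πiMk²/(8(m−1)N)}. -/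
open Finset

/-- The q-Pochhammer symbol `(x;q)_n = ∏_{j=0}^{n-1} (1 - x q^j)`. -/
noncomputable def qPoch (x q : ℂ) (n : ℕ) : ℂ := ∏ j ∈ Finset.range n, (1 - x * q ^ j)

/-- The Gaussian binomial coefficient `[n choose k]_q`. -/
noncomputable def qBinom (q : ℂ) (n k : ℕ) : ℂ :=
  if k ≤ n then qPoch q q n / (qPoch q q (n - k) * qPoch q q k) else 0

/-- Extend a tuple `g : Fin k → ℕ` to `ℕ → ℕ` by zero. -/
def pad (k : ℕ) (g : Fin k → ℕ) : ℕ → ℕ := fun j => if h : j < k then g ⟨j, h⟩ else 0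

/-- The general term of the multi-sum `G_m(q)`: here `n j` denotes `n_{j+1}` (0-based indexing),
so `n (m-2)` is `n_{m-1}` and `n 0` is `n_1`. -/
noncomputable def Gterm (m : ℕ) (q : ℂ) (n : ℕ → ℕ) : ℂ :=
  (-1) ^ (n (m - 2)) *
    q ^ (n (m - 2) * (n (m - 2) + 1) +
        ∑ j ∈ Finset.range (m - 2), (2 * (n j) ^ 2 + 2 * n j)) *
    qPoch q (q ^ 2) (n 0) / qPoch (-q) q (2 * n 0 + 1) *
    ∏ i ∈ Finset.range (m - 2), qBinom (q ^ 2) (n (i + 1)) (n i)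

/-- The multi-sum `G_m(q)`. -/
noncomputable def G (m : ℕ) (q : ℂ) : ℂ := ∑' n : Fin (m - 1) → ℕ, Gterm m q (pad (m - 1) n)

/-- The truncated multi-sum `U_{m,N}(q)`. -/
noncomputable def U (m N : ℕ) (q : ℂ) : ℂ :=
  ∑ n ∈ Fintype.piFinset (fun _ : Fin (m - 1) => Finset.range N), Gterm m q (pad (m - 1) n)

lemma qPoch_zero' (x q : ℂ) : qPoch x q 0 = 1 := by simp [qPoch]

lemma qPoch_succ' (x q : ℂ) (n : ℕ) : qPoch x q (n + 1) = qPoch x q n * (1 - x * q ^ n) := by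
  simp [qPoch, Finset.prod_range_succ]

lemma qBinom_zero' (p : ℂ) (hP : ∀ n, qPoch p p n ≠ 0) (n : ℕ) : qBinom p n 0 = 1 := by
  simp [qBinom, qPoch_zero', hP n]

lemma qBinom_gt' (p : ℂ) (n k : ℕ) (h : n < k) : qBinom p n k = 0 := by
  simp [qBinom, h]

lemma qBinom_pascal' (p : ℂ) (hP : ∀ n, qPoch p p n ≠ 0) (n k : ℕ) :
    qBinom p (n + 1) (k + 1) = qBinom p n (k + 1) + p ^ (n - k) * qBinom p n k := by
  rcases lt_trichotomy n k with h | h | h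
  · rw [qBinom_gt' _ _ _ h, qBinom_gt' _ _ _ (by omega), qBinom_gt' _ _ _ (by omega)]; simp
  · subst h
    rw [qBinom_gt' p n (n + 1) (by omega)]
    simp [qBinom, qPoch_zero', hP]
  · obtain ⟨j, rfl⟩ := Nat.exists_eq_add_of_lt h
    have e1 : k + j + 1 + 1 - (k + 1) = j + 1 := by omega
    have e2 : k + j + 1 - (k + 1) = j := by omega
    have e3 : k + j + 1 - k = j + 1 := by omega
    simp only [qBinom, e1, e2, e3]
    rw [if_pos (by omega), if_pos (by omega), if_pos (by omega)]
    have h1 := hP (k + j + 1 + 1)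
    have h2 := hP (k + j + 1)
    have h3 := hP (j + 1)
    have h4 := hP (k + 1)
    have h5 := hP j
    have h6 := hP k
    rw [qPoch_succ'] at h3 h4
    rw [qPoch_succ' p p (k + j + 1), qPoch_succ' p p j, qPoch_succ' p p k]
    have h7 := right_ne_zero_of_mul h3
    have h8 := right_ne_zero_of_mul h4
    field_simp
    ring

/-- q-Vandermonde. -/
lemma vand' (p : ℂ) (hP : ∀ n, qPoch p p n ≠ 0) (L : ℕ) : ∀ c : ℕ,
    ∑ k ∈ range (L + 1), p ^ (k * (k + c)) * qBinom p L k / qPoch p p (k + c)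
      = 1 / qPoch p p (L + c) := by
  induction L with
  | zero => intro c; simp [qBinom_zero' p hP]
  | succ L ih =>
    intro c
    rw [Finset.sum_range_succ']
    have h1 : ∀ k ∈ range (L + 1), p ^ ((k + 1) * (k + 1 + c)) * qBinom p (L + 1) (k + 1) /
        qPoch p p (k + 1 + c) =
        p ^ ((k + 1) * (k + 1 + c)) * qBinom p L (k + 1) / qPoch p p (k + 1 + c) +
        p ^ (L + 1 + c) * (p ^ (k * (k + (c + 1))) * qBinom p L k / qPoch p p (k + (c + 1))) := by
      intro k hk
      rw [qBinom_pascal' p hP, show k + (c + 1) = k + 1 + c by ring]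
      have hk' : k ≤ L := by simpa [Nat.lt_succ_iff] using hk
      have : p ^ ((k + 1) * (k + 1 + c)) * p ^ (L - k) =
          p ^ (L + 1 + c) * p ^ (k * (k + 1 + c)) := by
        rw [← pow_add, ← pow_add]
        congr 1
        obtain ⟨j, rfl⟩ := Nat.exists_eq_add_of_le hk'
        rw [Nat.add_sub_cancel_left]; ring
      rw [mul_add, ← mul_assoc, this]
      ring
    rw [Finset.sum_congr rfl h1, Finset.sum_add_distrib, ← Finset.mul_sum, ih (c + 1)]
    have h2 := ih c
    rw [← add_zero (∑ k ∈ range (L + 1), p ^ (k * (k + c)) * qBinom p L k / qPoch p p (k + c))] at h2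
    have h3 : (0 : ℂ) = p ^ ((L + 1) * (L + 1 + c)) * qBinom p L (L + 1) / qPoch p p (L + 1 + c) := by
      rw [qBinom_gt' p L (L + 1) (by omega)]; simp
    rw [h3, ← Finset.sum_range_succ (fun k => p ^ (k * (k + c)) * qBinom p L k / qPoch p p (k + c)),
      Finset.sum_range_succ'] at h2
    rw [qBinom_zero' p hP] at h2 ⊢
    rw [add_right_comm, h2]
    have e1 : L + (c + 1) = L + c + 1 := by ring
    have e2 : L + 1 + c = L + c + 1 := by ring
    have h4 := hP (L + c)
    have h5 := hP (L + c + 1)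
    rw [qPoch_succ'] at h5
    have h6 := right_ne_zero_of_mul h5
    rw [e1, e2, qPoch_succ']
    field_simp
    ring

/-- finite q-binomial theorem in base `q^2`. -/
lemma qbinthm' (q : ℂ) (hP : ∀ n, qPoch (q ^ 2) (q ^ 2) n ≠ 0) (x : ℂ) (L : ℕ) :
    ∏ i ∈ range L, (x - (q ^ 2) ^ i) =
      ∑ j ∈ range (L + 1), qBinom (q ^ 2) L j * (-1) ^ j * q ^ (j * (j - 1)) * x ^ (L - j) := by
  induction L with
  | zero => simp [qBinom_zero' _ hP]
  | succ L ih =>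
    rw [Finset.prod_range_succ, ih, Finset.sum_range_succ' _ (L + 1)]
    have h1 : ∀ k ∈ range (L + 1), qBinom (q ^ 2) (L + 1) (k + 1) * (-1) ^ (k + 1) *
        q ^ ((k + 1) * (k + 1 - 1)) * x ^ (L + 1 - (k + 1)) =
        qBinom (q ^ 2) L (k + 1) * (-1) ^ (k + 1) *
        q ^ ((k + 1) * (k + 1 - 1)) * x ^ (L + 1 - (k + 1)) -
        (q ^ 2) ^ L * (qBinom (q ^ 2) L k * (-1) ^ k * q ^ (k * (k - 1)) * x ^ (L - k)) := by
      intro k hk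
      rw [qBinom_pascal' _ hP]
      have hk' : k ≤ L := by simpa [Nat.lt_succ_iff] using hk
      have : (q ^ 2) ^ (L - k) * q ^ ((k + 1) * (k + 1 - 1)) = (q ^ 2) ^ L * q ^ (k * (k - 1)) := by
        rw [← pow_mul, ← pow_mul, ← pow_add, ← pow_add]
        congr 1
        obtain ⟨j, rfl⟩ := Nat.exists_eq_add_of_le hk'
        rw [Nat.add_sub_cancel_left]
        cases k with
        | zero => simp
        | succ k => simp only [Nat.add_sub_cancel]; ring
      rw [show L + 1 - (k + 1) = L - k by omega]
      generalize q ^ ((k + 1) * (k + 1 - 1)) = y at this ⊢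
      linear_combination (-1) ^ (k + 1) * qBinom (q ^ 2) L k * x ^ (L - k) * this
    rw [Finset.sum_congr rfl h1, Finset.sum_sub_distrib, ← Finset.mul_sum, mul_sub, sub_add_eq_add_sub,
      mul_comm _ ((q ^ 2) ^ L)]
    congr 1
    have h2 : qBinom (q ^ 2) (L + 1) 0 = qBinom (q ^ 2) L 0 := by
      rw [qBinom_zero' _ hP, qBinom_zero' _ hP]
    rw [h2, ← Finset.sum_range_succ' (fun k => qBinom (q ^ 2) L k * (-1) ^ k * q ^ (k * (k - 1)) *
      x ^ (L + 1 - k)), Finset.sum_range_succ _ (L + 1), qBinom_gt' _ L (L + 1) (by omega), Finset.sum_mul]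
    simp only [zero_mul, add_zero]
    refine Finset.sum_congr rfl fun k hk => ?_
    have hk' : k ≤ L := by simpa [Nat.lt_succ_iff] using hk
    rw [show L + 1 - k = (L - k) + 1 by omega, pow_succ]; ring

lemma qPoch_split' (q : ℂ) (n : ℕ) : qPoch (q ^ 2) (q ^ 2) (2 * n + 1) =
    qPoch q (q ^ 2) (n + 1) * qPoch (q ^ 2) (q ^ 2) n * qPoch (-q) q (2 * n + 1) := by
  induction n with
  | zero => simp [qPoch]; ring
  | succ n ih =>
    rw [show 2 * (n + 1) + 1 = 2 * n + 1 + 1 + 1 by ring]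
    rw [qPoch_succ', qPoch_succ', ih]
    rw [qPoch_succ' q (q ^ 2) (n + 1), qPoch_succ' (q ^ 2) (q ^ 2) n,
      qPoch_succ' (-q) q (2 * n + 1 + 1), qPoch_succ' (-q) q (2 * n + 1)]
    ring

lemma prod_split' (q : ℂ) (n : ℕ) : ∏ i ∈ range (2 * n + 1), (q ^ (2 * n + 1) - (q ^ 2) ^ i) =
    (-1) ^ (n + 1) * q ^ (n * (3 * n + 2)) * qPoch q (q ^ 2) n * qPoch q (q ^ 2) (n + 1) := by
  have h1 : ∀ n k : ℕ, ∏ i ∈ range k, (q ^ (2 * (n + 1) - 1) - (q ^ 2) ^ (n + 1 + i)) =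
      q ^ ((2 * n + 1) * k) * qPoch q (q ^ 2) k := by
    intro n k
    rw [qPoch, pow_mul, ← Finset.card_range k, ← Finset.prod_const, Finset.card_range,
      ← Finset.prod_mul_distrib]
    refine Finset.prod_congr rfl fun i _ => ?_
    rw [show 2 * (n + 1) - 1 = 2 * n + 1 by omega]
    ring
  have h2 : ∀ n : ℕ, ∏ i ∈ range (n + 1), (q ^ (2 * n + 1) - (q ^ 2) ^ i) =
      (-1) ^ (n + 1) * q ^ (n * (n + 1)) * qPoch q (q ^ 2) (n + 1) := by
    intro n
    induction n with
    | zero => simp [qPoch]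
    | succ n ih =>
      rw [Finset.prod_range_succ', qPoch_succ']
      have : ∀ i ∈ range (n + 1), (q ^ (2 * (n + 1) + 1) - (q ^ 2) ^ (i + 1)) =
          q ^ 2 * (q ^ (2 * n + 1) - (q ^ 2) ^ i) := by
        intro i _; ring
      rw [Finset.prod_congr rfl this, Finset.prod_mul_distrib, ih, Finset.prod_const,
        Finset.card_range]
      ring
  rw [show 2 * n + 1 = (n + 1) + n by ring, Finset.prod_range_add,
    show n + 1 + n = 2 * n + 1 by ring, h2]
  have := h1 n n
  rw [show 2 * (n + 1) - 1 = 2 * n + 1 by omega] at this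
  rw [this]
  ring

/-- the initial Bailey pair -/
lemma bailey0' (q : ℂ) (hq : q ≠ 0) (hP : ∀ n, qPoch (q ^ 2) (q ^ 2) n ≠ 0) (n : ℕ) :
    ∑ r ∈ range (n + 1), (-1) ^ r * q ^ (r ^ 2) * (1 - q ^ (2 * r + 1)) /
      (qPoch (q ^ 2) (q ^ 2) (n - r) * qPoch (q ^ 2) (q ^ 2) (n + r + 1)) =
    qPoch q (q ^ 2) n / (qPoch (q ^ 2) (q ^ 2) n * qPoch (-q) q (2 * n + 1)) := by
  have h := qbinthm' q hP (q ^ (2 * n + 1)) (2 * n + 1)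
  rw [prod_split', show 2 * n + 1 + 1 = (n + 1) + (n + 1) by ring, Finset.sum_range_add,
    ← Finset.sum_range_reflect, ← Finset.sum_add_distrib] at h
  have h1 : ∀ r ∈ range (n + 1),
      (qBinom (q ^ 2) (2 * n + 1) (n + 1 - 1 - r) * (-1) ^ (n + 1 - 1 - r) *
        q ^ ((n + 1 - 1 - r) * (n + 1 - 1 - r - 1)) *
        (q ^ (2 * n + 1)) ^ (2 * n + 1 - (n + 1 - 1 - r)) +
      qBinom (q ^ 2) (2 * n + 1) (n + 1 + r) * (-1) ^ (n + 1 + r) *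
        q ^ ((n + 1 + r) * (n + 1 + r - 1)) *
        (q ^ (2 * n + 1)) ^ (2 * n + 1 - (n + 1 + r))) =
      ((-1) ^ (n + 1) * q ^ (n * (3 * n + 2)) * qPoch (q ^ 2) (q ^ 2) (2 * n + 1)) *
      ((-1) ^ r * q ^ (r ^ 2) * (1 - q ^ (2 * r + 1)) /
      (qPoch (q ^ 2) (q ^ 2) (n - r) * qPoch (q ^ 2) (q ^ 2) (n + r + 1))) := by
    intro r hr
    have hr' : r ≤ n := by simpa [Nat.lt_succ_iff] using hr
    obtain ⟨k, rfl⟩ := Nat.exists_eq_add_of_le hr'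
    have e1 : r + k + 1 - 1 - r = k := by omega
    have e2 : 2 * (r + k) + 1 - k = 2 * r + k + 1 := by omega
    have e3 : 2 * (r + k) + 1 - (r + k + 1 + r) = k := by omega
    have e4 : r + k + 1 + r - 1 = 2 * r + k := by omega
    have e5 : r + k - r = k := by omega
    have e6 : r + k + 1 + r = 2 * r + k + 1 := by omega
    have e7 : r + k + r + 1 = 2 * r + k + 1 := by omega
    rw [e1, e2, e3, e4, e5, e6, e7]
    simp only [qBinom]
    rw [if_pos (by omega), if_pos (by omega), e2, show 2 * (r + k) + 1 - (2 * r + k + 1) = k by omega]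
    have x1 : q ^ (k * (k - 1)) * (q ^ (2 * (r + k) + 1)) ^ (2 * r + k + 1) =
        q ^ ((r + k) * (3 * (r + k) + 2)) * q ^ ((r + 1) ^ 2) := by
      rw [← pow_mul, ← pow_add, ← pow_add]
      congr 1
      cases k with
      | zero => simp; ring
      | succ k => simp only [Nat.add_sub_cancel]; ring
    have x2 : q ^ ((2 * r + k + 1) * (2 * r + k)) * (q ^ (2 * (r + k) + 1)) ^ k =
        q ^ ((r + k) * (3 * (r + k) + 2)) * q ^ (r ^ 2) := by
      rw [← pow_mul, ← pow_add, ← pow_add]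
      congr 1
      ring
    have x3 : (-1 : ℂ) ^ k = (-1) ^ (r + k) * (-1) ^ r := by
      rw [pow_add, mul_right_comm, ← pow_add, ← two_mul, pow_mul]; simp
    have x4 : (-1 : ℂ) ^ (2 * r + k + 1) = -((-1) ^ (r + k) * (-1) ^ r) := by
      ring
    rw [mul_assoc _ (q ^ (k * (k - 1))), x1, mul_assoc _ (q ^ ((2 * r + k + 1) * (2 * r + k))), x2,
      x3, x4]
    have h1 := hP k
    have h2 := hP (2 * r + k + 1)
    field_simp
    ring
  rw [Finset.sum_congr rfl h1, ← Finset.mul_sum] at h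
  have h2 := hP (2 * n + 1)
  have h3 := qPoch_split' q n
  have h4 := h2
  rw [h3] at h4
  have h5 := right_ne_zero_of_mul h4
  have h6 := right_ne_zero_of_mul (left_ne_zero_of_mul h4)
  have h7 := left_ne_zero_of_mul (left_ne_zero_of_mul h4)
  have h8 : (-1 : ℂ) ^ (n + 1) * q ^ (n * (3 * n + 2)) ≠ 0 :=
    mul_ne_zero (by simp) (pow_ne_zero _ hq)
  rw [eq_div_iff (mul_ne_zero h6 h5)]
  apply mul_left_cancel₀ (mul_ne_zero h8 h7)
  rw [h3] at h
  linear_combination -h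

/-- iterated Bailey chain -/
noncomputable def betaB (q : ℂ) : ℕ → ℕ → ℂ
  | 0, n => qPoch q (q ^ 2) n / (qPoch (q ^ 2) (q ^ 2) n * qPoch (-q) q (2 * n + 1))
  | k + 1, n => ∑ j ∈ range (n + 1), q ^ (2 * j ^ 2 + 2 * j) * betaB q k j /
      qPoch (q ^ 2) (q ^ 2) (n - j)

lemma bailey' (q : ℂ) (hq : q ≠ 0) (hP : ∀ n, qPoch (q ^ 2) (q ^ 2) n ≠ 0) (k : ℕ) : ∀ n : ℕ,
    betaB q k n = ∑ r ∈ range (n + 1), (q ^ (2 * r ^ 2 + 2 * r)) ^ k *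
      ((-1) ^ r * q ^ (r ^ 2) * (1 - q ^ (2 * r + 1))) /
      (qPoch (q ^ 2) (q ^ 2) (n - r) * qPoch (q ^ 2) (q ^ 2) (n + r + 1)) := by
  induction k with
  | zero => intro n; rw [betaB, ← bailey0' q hq hP n]; simp
  | succ k ih =>
    intro n
    rw [betaB]
    simp_rw [ih, Finset.mul_sum, Finset.sum_div]
    rw [Finset.sum_comm' (t' := range (n + 1)) (s' := fun r => Finset.Ico r (n + 1))
      (by intro x y; simp only [mem_range, mem_Ico]; omega)]
    refine Finset.sum_congr rfl fun r hr => ?_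
    have hr' : r ≤ n := by simpa [Nat.lt_succ_iff] using hr
    obtain ⟨L, rfl⟩ := Nat.exists_eq_add_of_le hr'
    rw [Finset.sum_Ico_eq_sum_range, show r + L + 1 - r = L + 1 by omega,
      show r + L - r = L by omega]
    have hv := vand' (q ^ 2) hP L (2 * r + 1)
    have h1 : ∀ i ∈ range (L + 1), q ^ (2 * (r + i) ^ 2 + 2 * (r + i)) *
        ((q ^ (2 * r ^ 2 + 2 * r)) ^ k *
          ((-1) ^ r * q ^ (r ^ 2) * (1 - q ^ (2 * r + 1))) /
          (qPoch (q ^ 2) (q ^ 2) (r + i - r) * qPoch (q ^ 2) (q ^ 2) (r + i + r + 1))) /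
          qPoch (q ^ 2) (q ^ 2) (r + L - (r + i)) =
        (q ^ (2 * r ^ 2 + 2 * r)) ^ (k + 1) *
          ((-1) ^ r * q ^ (r ^ 2) * (1 - q ^ (2 * r + 1))) / qPoch (q ^ 2) (q ^ 2) L *
        ((q ^ 2) ^ (i * (i + (2 * r + 1))) * qBinom (q ^ 2) L i /
          qPoch (q ^ 2) (q ^ 2) (i + (2 * r + 1))) := by
      intro i hi
      have hi' : i ≤ L := by simpa [Nat.lt_succ_iff] using hi
      rw [show r + i - r = i by omega, show r + L - (r + i) = L - i by omega,
        show r + i + r + 1 = i + (2 * r + 1) by ring, qBinom, if_pos hi']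
      have h1 := hP i
      have h2 := hP (L - i)
      have h3 := hP L
      have h4 := hP (i + (2 * r + 1))
      have h5 : q ^ (2 * (r + i) ^ 2 + 2 * (r + i)) =
        q ^ (2 * r ^ 2 + 2 * r) * (q ^ 2) ^ (i * (i + (2 * r + 1))) := by
        rw [← pow_mul, ← pow_add]; congr 1; ring
      rw [h5, pow_succ (q ^ (2 * r ^ 2 + 2 * r)) k]
      generalize q ^ (2 * r ^ 2 + 2 * r) = A
      generalize (q ^ 2) ^ (i * (i + (2 * r + 1))) = B
      generalize ((-1) ^ r * q ^ (r ^ 2) * (1 - q ^ (2 * r + 1))) = C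
      field_simp
    rw [Finset.sum_congr rfl h1, ← Finset.mul_sum, hv,
      show L + (2 * r + 1) = r + L + r + 1 by ring]
    have h3 := hP L
    have h4 := hP (r + L + r + 1)
    generalize q ^ (2 * r ^ 2 + 2 * r) = A
    generalize ((-1) ^ r * q ^ (r ^ 2) * (1 - q ^ (2 * r + 1))) = C
    field_simp

lemma sum_snoc' (N k : ℕ) (F : (Fin (k + 1) → ℕ) → ℂ) :
    ∑ n ∈ Fintype.piFinset (fun _ : Fin (k + 1) => range N), F n =
    ∑ a ∈ range N, ∑ g ∈ Fintype.piFinset (fun _ : Fin k => range N),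
      F (Fin.snoc (α := fun _ => ℕ) g a) := by
  rw [← Finset.sum_product']
  refine Finset.sum_nbij' (fun g => (g (Fin.last _), Fin.init (α := fun _ => ℕ) g))
    (fun x => Fin.snoc (α := fun _ => ℕ) x.2 x.1) ?_ ?_ ?_ ?_ ?_
  · intro g hg
    simp only [Fintype.mem_piFinset, mem_range, mem_product] at hg ⊢
    exact ⟨hg _, fun i => hg _⟩
  · rintro ⟨a, g⟩ hg
    simp only [Fintype.mem_piFinset, mem_range, mem_product] at hg ⊢
    intro i
    refine Fin.lastCases ?_ (fun i => ?_) i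
    · simpa using hg.1
    · simpa using hg.2 i
  · intro g _; simp
  · rintro ⟨a, g⟩ _; simp
  · intro g _; simp

lemma pad_snoc_last' (k : ℕ) (g : Fin k → ℕ) (a : ℕ) :
    pad (k + 1) (Fin.snoc (α := fun _ => ℕ) g a) k = a := by
  simp [pad, Fin.snoc]

lemma pad_snoc_lt' (k : ℕ) (g : Fin k → ℕ) (a j : ℕ) (h : j < k) :
    pad (k + 1) (Fin.snoc (α := fun _ => ℕ) g a) j = pad k g j := by
  simp [pad, Fin.snoc, h, Nat.lt_succ_of_lt h]

lemma multi' (q : ℂ) (hP : ∀ n, qPoch (q ^ 2) (q ^ 2) n ≠ 0) (N k : ℕ) : ∀ w : ℕ → ℂ,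
    ∑ n ∈ Fintype.piFinset (fun _ : Fin (k + 1) => range N),
      (w (pad (k + 1) n k) *
        q ^ (∑ j ∈ range k, (2 * (pad (k + 1) n j) ^ 2 + 2 * pad (k + 1) n j)) *
        (qPoch q (q ^ 2) (pad (k + 1) n 0) / qPoch (-q) q (2 * pad (k + 1) n 0 + 1)) *
        ∏ i ∈ range k, qBinom (q ^ 2) (pad (k + 1) n (i + 1)) (pad (k + 1) n i)) =
    ∑ n ∈ range N, w n * (qPoch (q ^ 2) (q ^ 2) n * betaB q k n) := by
  induction k with
  | zero =>
    intro w
    rw [sum_snoc']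
    refine Finset.sum_congr rfl fun a _ => ?_
    simp only [pad_snoc_last', Fintype.piFinset_of_isEmpty, Finset.univ_unique, Finset.sum_singleton,
      Finset.range_zero, Finset.sum_empty, Finset.prod_empty, betaB]
    have := hP a
    field_simp
  | succ k ih =>
    intro w
    rw [sum_snoc', Finset.sum_comm]
    have h1 : ∀ g ∈ Fintype.piFinset (fun _ : Fin (k + 1) => range N), ∀ a ∈ range N,
      (w (pad (k + 1 + 1) (Fin.snoc (α := fun _ => ℕ) g a) (k + 1)) *
        q ^ (∑ j ∈ range (k + 1), (2 * (pad (k + 1 + 1) (Fin.snoc (α := fun _ => ℕ) g a) j) ^ 2 +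
          2 * pad (k + 1 + 1) (Fin.snoc (α := fun _ => ℕ) g a) j)) *
        (qPoch q (q ^ 2) (pad (k + 1 + 1) (Fin.snoc (α := fun _ => ℕ) g a) 0) /
          qPoch (-q) q (2 * pad (k + 1 + 1) (Fin.snoc (α := fun _ => ℕ) g a) 0 + 1)) *
        ∏ i ∈ range (k + 1), qBinom (q ^ 2) (pad (k + 1 + 1) (Fin.snoc (α := fun _ => ℕ) g a) (i + 1))
          (pad (k + 1 + 1) (Fin.snoc (α := fun _ => ℕ) g a) i)) =
      (w a * q ^ (2 * (pad (k + 1) g k) ^ 2 + 2 * pad (k + 1) g k) *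
          qBinom (q ^ 2) a (pad (k + 1) g k)) *
        (q ^ (∑ j ∈ range k, (2 * (pad (k + 1) g j) ^ 2 + 2 * pad (k + 1) g j)) *
        (qPoch q (q ^ 2) (pad (k + 1) g 0) / qPoch (-q) q (2 * pad (k + 1) g 0 + 1)) *
        ∏ i ∈ range k, qBinom (q ^ 2) (pad (k + 1) g (i + 1)) (pad (k + 1) g i)) := by
      intro g _ a _
      rw [Finset.sum_range_succ, Finset.prod_range_succ, pad_snoc_last',
        pad_snoc_lt' (k + 1) g a 0 (by omega), pad_snoc_lt' (k + 1) g a k (by omega)]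
      have e1 : ∑ j ∈ range k, (2 * (pad (k + 1 + 1) (Fin.snoc (α := fun _ => ℕ) g a) j) ^ 2 +
          2 * pad (k + 1 + 1) (Fin.snoc (α := fun _ => ℕ) g a) j) =
          ∑ j ∈ range k, (2 * (pad (k + 1) g j) ^ 2 + 2 * pad (k + 1) g j) := by
        refine Finset.sum_congr rfl fun j hj => ?_
        have hj' := mem_range.1 hj
        rw [pad_snoc_lt' (k + 1) g a j (by omega)]
      have e2 : ∏ i ∈ range k, qBinom (q ^ 2)
            (pad (k + 1 + 1) (Fin.snoc (α := fun _ => ℕ) g a) (i + 1))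
            (pad (k + 1 + 1) (Fin.snoc (α := fun _ => ℕ) g a) i) =
          ∏ i ∈ range k, qBinom (q ^ 2) (pad (k + 1) g (i + 1)) (pad (k + 1) g i) := by
        refine Finset.prod_congr rfl fun j hj => ?_
        have hj' := mem_range.1 hj
        rw [pad_snoc_lt' (k + 1) g a j (by omega), pad_snoc_lt' (k + 1) g a (j + 1) (by omega)]
      rw [e1, e2, pow_add]
      ring
    rw [Finset.sum_congr rfl fun g hg => Finset.sum_congr rfl (h1 g hg)]
    simp_rw [← Finset.sum_mul]
    have h2 := ih (fun b => ∑ a ∈ range N, w a * q ^ (2 * b ^ 2 + 2 * b) * qBinom (q ^ 2) a b)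
    simp_rw [mul_assoc] at h2 ⊢
    rw [h2]
    simp_rw [Finset.sum_mul]
    rw [Finset.sum_comm]
    refine Finset.sum_congr rfl fun a ha => ?_
    have ha' := mem_range.1 ha
    rw [betaB, Finset.mul_sum, Finset.mul_sum]
    rw [← Finset.sum_subset (s₁ := range (a + 1))]
    · refine Finset.sum_congr rfl fun b hb => ?_
      have hb' : b ≤ a := by simpa [Nat.lt_succ_iff] using hb
      rw [qBinom, if_pos hb']
      have x1 := hP b
      have x2 := hP (a - b)
      field_simp
    · intro x; simp only [mem_range]; omega
    · intro b _ hb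
      rw [qBinom_gt' _ a b (by simpa using hb)]; simp

lemma U_eq' (q : ℂ) (hP : ∀ n, qPoch (q ^ 2) (q ^ 2) n ≠ 0) (N e : ℕ) :
    U (e + 2) N q = ∑ n ∈ range N, ((-1) ^ n * q ^ (n * (n + 1))) *
      (qPoch (q ^ 2) (q ^ 2) n * betaB q e n) := by
  rw [← multi' q hP N e, U]
  change ∑ n ∈ Fintype.piFinset (fun _ : Fin (e + 1) => range N), Gterm (e + 2) q (pad (e + 1) n) = _
  refine Finset.sum_congr rfl fun g _ => ?_
  rw [Gterm]
  simp only [Nat.add_sub_cancel]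
  rw [pow_add]
  ring

noncomputable def ttB (q : ℂ) (n r : ℕ) : ℂ :=
  if r ≤ n then (-1) ^ (n + r) * q ^ (n * (n + 1)) * (q ^ (r * (r + 1)))⁻¹ *
    qPoch (q ^ 2) (q ^ 2) n / (qPoch (q ^ 2) (q ^ 2) (n - r) * qPoch (q ^ 2) (q ^ 2) (n + r + 1))
  else 0

noncomputable def hhB (q : ℂ) (n r : ℕ) : ℂ :=
  if r ≤ n then (-1) ^ (n + r + 1) * q ^ (n * (n + 1)) * (q ^ (r * (r + 1)))⁻¹ *
    qPoch (q ^ 2) (q ^ 2) n / (qPoch (q ^ 2) (q ^ 2) (n - r) * qPoch (q ^ 2) (q ^ 2) (n + r))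
  else 0

lemma tt_step' (q : ℂ) (hq : q ≠ 0) (hP : ∀ n, qPoch (q ^ 2) (q ^ 2) n ≠ 0) (n r : ℕ) :
    ttB q n (r + 1) - ttB q n r =
      (1 + q ^ (2 * (r + 1))) * (hhB q (n + 1) (r + 1) - hhB q n (r + 1)) := by
  simp only [ttB, hhB]
  rcases lt_trichotomy n r with h | h | h
  · rw [if_neg (by omega), if_neg (by omega), if_neg (by omega), if_neg (by omega)]; simp
  · subst h
    rw [if_neg (by omega), if_pos (by omega), if_pos (by omega), if_neg (by omega)]
    have e1 : n + n + 1 = 2 * n + 1 := by ring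
    have e2 : n + 1 + (n + 1) = 2 * n + 1 + 1 := by ring
    rw [Nat.sub_self, Nat.sub_self, e1, e2]
    have h1 := hP (2 * n + 1 + 1)
    rw [qPoch_succ'] at h1
    have h2 := right_ne_zero_of_mul h1
    have h3 := left_ne_zero_of_mul h1
    rw [qPoch_succ' _ _ (2 * n + 1), qPoch_succ' _ _ n, qPoch_zero']
    have h4 : (-1 : ℂ) ^ (n + n) = 1 := by rw [← two_mul, pow_mul]; simp
    have h5 : (-1 : ℂ) ^ (2 * n + 1 + 1 + 1) = -1 := by
      rw [show 2 * n + 1 + 1 + 1 = 2 * (n + 1) + 1 by ring, pow_succ, pow_mul]; simp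
    rw [h4, h5]
    have h6 : q ^ (n * (n + 1)) ≠ 0 := pow_ne_zero _ hq
    have h7 : q ^ ((n + 1) * (n + 1 + 1)) ≠ 0 := pow_ne_zero _ hq
    have h8 : (1 - q ^ 2 * (q ^ 2) ^ (2 * n + 1)) =
      (1 + q ^ (2 * (n + 1))) * (1 - q ^ 2 * (q ^ 2) ^ n) := by ring
    rw [h8] at h2 ⊢
    have h9 := right_ne_zero_of_mul h2
    have h10 := left_ne_zero_of_mul h2
    generalize q ^ (n * (n + 1)) = A at *
    generalize q ^ ((n + 1) * (n + 1 + 1)) = B at *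
    generalize (1 - q ^ 2 * (q ^ 2) ^ n) = C at *
    generalize (1 + q ^ (2 * (n + 1))) = D at *
    field_simp
    ring
  · obtain ⟨k, rfl⟩ := Nat.exists_eq_add_of_lt h
    rw [if_pos (by omega), if_pos (by omega), if_pos (by omega), if_pos (by omega)]
    have e1 : r + k + 1 - (r + 1) = k := by omega
    have e2 : r + k + 1 - r = k + 1 := by omega
    have e3 : r + k + 1 + 1 - (r + 1) = k + 1 := by omega
    have e4 : r + k + 1 + (r + 1) + 1 = 2 * r + k + 1 + 1 + 1 := by ring
    have e5 : r + k + 1 + r + 1 = 2 * r + k + 1 + 1 := by ring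
    have e6 : r + k + 1 + 1 + (r + 1) = 2 * r + k + 1 + 1 + 1 := by ring
    have e7 : r + k + 1 + (r + 1) = 2 * r + k + 1 + 1 := by ring
    rw [e1, e2, e3, e4, e5, e6, e7]
    have h1 := hP (2 * r + k + 1 + 1)
    have h2 := hP (2 * r + k + 1 + 1 + 1)
    have h3 := hP (k + 1)
    have h4 := hP k
    rw [qPoch_succ'] at h2 h3
    have h5 := right_ne_zero_of_mul h2
    have h6 := right_ne_zero_of_mul h3
    rw [qPoch_succ' _ _ (2 * r + k + 1 + 1), qPoch_succ' _ _ k, qPoch_succ' _ _ (r + k + 1)]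
    have s1 : (-1 : ℂ) ^ (2 * r + k + 1 + 1) = (-1) ^ k := by
      rw [show 2 * r + k + 1 + 1 = k + 2 * (r + 1) by ring, pow_add, pow_mul]; simp
    have s2 : (-1 : ℂ) ^ (r + k + 1 + r) = - (-1) ^ k := by
      rw [show r + k + 1 + r = k + 2 * r + 1 by ring, pow_succ, pow_add, pow_mul]; simp
    rw [pow_succ (-1 : ℂ) (2 * r + k + 1 + 1 + 1), pow_succ (-1 : ℂ) (2 * r + k + 1 + 1), s1, s2]
    have p1 : q ^ ((r + 1) * (r + 1 + 1)) = q ^ (r * (r + 1)) * (q ^ (r + 1)) ^ 2 := by ring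
    have p2 : q ^ ((r + k + 1 + 1) * (r + k + 1 + 1 + 1)) =
      q ^ ((r + k + 1) * (r + k + 1 + 1)) * ((q ^ (r + 1)) ^ 2 * (q ^ (k + 1)) ^ 2) := by ring
    have p3 : q ^ 2 * (q ^ 2) ^ (2 * r + k + 1 + 1) = (q ^ (r + 1)) ^ 4 * (q ^ (k + 1)) ^ 2 := by ring
    have p4 : q ^ 2 * (q ^ 2) ^ k = (q ^ (k + 1)) ^ 2 := by ring
    have p5 : q ^ 2 * (q ^ 2) ^ (r + k + 1) = (q ^ (r + 1)) ^ 2 * (q ^ (k + 1)) ^ 2 := by ring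
    have p6 : q ^ (2 * (r + 1)) = (q ^ (r + 1)) ^ 2 := by ring
    rw [p1, p2, p3, p4, p5, p6]
    rw [p3] at h5
    rw [p4] at h6
    have h7 : q ^ (r * (r + 1)) ≠ 0 := pow_ne_zero _ hq
    have h8 : q ^ (r + 1) ≠ 0 := pow_ne_zero _ hq
    clear h2 h3 p1 p2 p3 p4 p5 p6 s1 s2
    generalize q ^ (r * (r + 1)) = A at *
    generalize q ^ ((r + k + 1) * (r + k + 1 + 1)) = B at *
    generalize q ^ (r + 1) = x at *
    generalize q ^ (k + 1) = y at *
    generalize qPoch (q ^ 2) (q ^ 2) (2 * r + k + 1 + 1) = C at *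
    generalize qPoch (q ^ 2) (q ^ 2) k = D at *
    generalize qPoch (q ^ 2) (q ^ 2) (r + k + 1) = E at *
    generalize (-1 : ℂ) ^ k = S at *
    field_simp
    ring

lemma vv' (q : ℂ) (hq : q ≠ 0) (hP : ∀ n, qPoch (q ^ 2) (q ^ 2) n ≠ 0) (N r : ℕ) :
    ∑ n ∈ range N, ttB q n r = ∑ n ∈ range N, ttB q n 0 +
      ∑ s ∈ range r, (1 + q ^ (2 * (s + 1))) * hhB q N (s + 1) := by
  induction r with
  | zero => simp
  | succ r ih =>
    rw [Finset.sum_range_succ, ← add_assoc, ← ih, ← sub_eq_iff_eq_add', ← Finset.sum_sub_distrib,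
      Finset.sum_congr rfl fun n _ => tt_step' q hq hP n r, ← Finset.mul_sum,
      Finset.sum_range_sub (fun n => hhB q n (r + 1))]
    simp [hhB]

/-- exponent -/
def aB (e r : ℕ) : ℕ := (2 * e + 1) * (r ^ 2 + r) + r ^ 2

lemma U_eq2' (q : ℂ) (hq : q ≠ 0) (hP : ∀ n, qPoch (q ^ 2) (q ^ 2) n ≠ 0) (N e : ℕ) :
    U (e + 2) N q = ∑ r ∈ range N, (q ^ aB e r - q ^ (aB e r + 2 * r + 1)) *
      ∑ n ∈ range N, ttB q n r := by
  rw [U_eq' q hP]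
  simp_rw [bailey' q hq hP, Finset.mul_sum]
  rw [Finset.sum_comm' (t' := range N) (s' := fun r => Finset.Ico r N)
      (by intro x y; simp only [mem_range, mem_Ico]; omega)]
  refine Finset.sum_congr rfl fun r _ => ?_
  rw [← Finset.sum_subset (s₁ := Finset.Ico r N) (s₂ := range N)]
  · refine Finset.sum_congr rfl fun n hn => ?_
    rw [ttB, if_pos (Finset.mem_Ico.1 hn).1]
    have h0 : q ^ (r * (r + 1)) ≠ 0 := pow_ne_zero _ hq
    have h1 : q ^ aB e r - q ^ (aB e r + 2 * r + 1) = (q ^ (2 * r ^ 2 + 2 * r)) ^ e *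
      (q ^ (r ^ 2) * (1 - q ^ (2 * r + 1))) * q ^ (r * (r + 1)) := by
      rw [aB]; ring
    rw [h1, pow_add (-1 : ℂ)]
    have x1 := hP (n - r)
    have x2 := hP (n + r + 1)
    generalize (q ^ (2 * r ^ 2 + 2 * r)) ^ e = A
    generalize q ^ (r ^ 2) = A2
    generalize q ^ (r * (r + 1)) = A3 at *
    generalize q ^ (n * (n + 1)) = A4
    generalize q ^ (2 * r + 1) = A5
    field_simp
  · intro x; simp only [mem_range, mem_Ico]; omega
  · intro n hn hn'
    simp only [mem_range, mem_Ico] at hn hn'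
    rw [ttB, if_neg (by omega)]; simp

open Filter Topology in
lemma cont_P' (k : ℕ) : Continuous (fun q : ℂ => qPoch (q ^ 2) (q ^ 2) k) := by
  unfold qPoch; fun_prop

lemma P_ne' {N : ℕ} {ω : ℂ} (h : IsPrimitiveRoot ω N) (k : ℕ) (hk : k < N) :
    qPoch ω ω k ≠ 0 := by
  rw [qPoch, Finset.prod_ne_zero_iff]
  intro j hj h0
  have hj' := mem_range.1 hj
  have : ω ^ (j + 1) = 1 := by rw [pow_succ']; linear_combination -h0
  exact h.pow_ne_one_of_pos_of_lt (by omega) (by omega) this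

lemma neg_ne' {N : ℕ} (hN : Odd N) {ζ : ℂ} (h : ζ ^ N = 1) (k : ℕ) :
    qPoch (-ζ) ζ k ≠ 0 := by
  rw [qPoch, Finset.prod_ne_zero_iff]
  intro j hj h0
  have h1 : ζ ^ (j + 1) = -1 := by rw [pow_succ']; linear_combination h0
  have h2 : (ζ ^ (j + 1)) ^ N = 1 := by rw [← pow_mul, mul_comm, pow_mul, h, one_pow]
  rw [h1, hN.neg_one_pow] at h2
  norm_num at h2

lemma cont_U' {N : ℕ} (hN : Odd N) {ζ : ℂ} (h : ζ ^ N = 1) (hω : IsPrimitiveRoot (ζ ^ 2) N)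
    (e : ℕ) : ContinuousAt (U (e + 2) N) ζ := by
  have : U (e + 2) N = fun q => ∑ n ∈ Fintype.piFinset (fun _ : Fin (e + 2 - 1) => Finset.range N),
    Gterm (e + 2) q (pad (e + 2 - 1) n) := by
    funext q; rfl
  rw [this]
  refine tendsto_finsetSum _ fun g hg => ?_
  have hpad : ∀ j, pad (e + 2 - 1) g j < N := by
    intro j
    rw [pad]
    split_ifs with hj
    · exact mem_range.1 (Fintype.mem_piFinset.1 hg _)
    · exact hN.pos
  change ContinuousAt (fun q => Gterm (e + 2) q (pad (e + 2 - 1) g)) ζ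
  generalize pad (e + 2 - 1) g = n at hpad
  unfold Gterm
  refine ContinuousAt.mul (ContinuousAt.div ?_ ?_ (neg_ne' hN h _)) ?_
  · unfold qPoch; fun_prop
  · unfold qPoch; fun_prop
  · refine tendsto_finsetProd _ fun i _ => ?_
    change ContinuousAt (fun q => qBinom (q ^ 2) (n (i + 1)) (n i)) ζ
    unfold qBinom
    split_ifs with hi
    · refine ContinuousAt.div (cont_P' _).continuousAt
        ((cont_P' _).continuousAt.mul (cont_P' _).continuousAt) ?_
      exact mul_ne_zero (P_ne' hω _ (lt_of_le_of_lt (Nat.sub_le _ _) (hpad _))) (P_ne' hω _ (hpad _))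
    · exact continuousAt_const

lemma P_ne_ball' {q : ℂ} (hq : ‖q‖ < 1) (n : ℕ) : qPoch (q ^ 2) (q ^ 2) n ≠ 0 := by
  rw [qPoch, Finset.prod_ne_zero_iff]
  intro j hj h0
  have : q ^ (2 * j + 2) = 1 := by linear_combination -h0
  have h2 : ‖q‖ ^ (2 * j + 2) = 1 := by rw [← norm_pow, this, norm_one]
  have := pow_lt_one₀ (norm_nonneg q) hq (n := 2 * j + 2) (by omega)
  linarith

noncomputable def eB (N s : ℕ) (q : ℂ) : ℂ :=
  (1 + q ^ (2 * s)) * ((-1) ^ (N + s + 1) * q ^ (N * (N + 1)) * (q ^ (s * (s + 1)))⁻¹ /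
    (qPoch (q ^ 2) (q ^ 2) (N - s) * qPoch ((q ^ 2) ^ (N + 1)) (q ^ 2) s))

lemma qPoch_add' (p : ℂ) (N s : ℕ) : qPoch p p (N + s) = qPoch p p N * qPoch (p ^ (N + 1)) p s := by
  rw [qPoch, Finset.prod_range_add, qPoch, qPoch]
  congr 1
  refine Finset.prod_congr rfl fun i _ => ?_
  ring

lemma eB_eq' (q : ℂ) (hP : ∀ n, qPoch (q ^ 2) (q ^ 2) n ≠ 0) (N s : ℕ) (hs : s ≤ N) :
    (1 + q ^ (2 * s)) * hhB q N s = eB N s q := by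
  rw [hhB, if_pos hs, eB, qPoch_add']
  have := hP N
  congr 1
  field_simp

lemma cont_eB' {N s : ℕ} (hs : 0 < s) (hsN : s < N) {ζ : ℂ} (h : ζ ^ N = 1)
    (hω : IsPrimitiveRoot (ζ ^ 2) N) : ContinuousAt (eB N s) ζ := by
  have h0 : ζ ≠ 0 := by
    rintro rfl
    rw [zero_pow (by omega)] at h; norm_num at h
  have h1 : (ζ ^ 2) ^ (N + 1) = ζ ^ 2 := by rw [pow_succ, hω.pow_eq_one, one_mul]
  unfold eB
  refine ContinuousAt.mul (by fun_prop) (ContinuousAt.div ?_ ?_ ?_)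
  · refine ContinuousAt.mul (by fun_prop) (ContinuousAt.inv₀ (by fun_prop) (pow_ne_zero _ h0))
  · unfold qPoch; fun_prop
  · rw [h1]
    exact mul_ne_zero (P_ne' hω _ (by omega)) (P_ne' hω _ hsN)

lemma eB_symm' {N s t : ℕ} (hN : Odd N) (hst : s + t = N) {ζ : ℂ} (h : ζ ^ N = 1)
    (hω : IsPrimitiveRoot (ζ ^ 2) N) : eB N s ζ = - eB N t ζ := by
  have h0 : ζ ≠ 0 := by
    rintro rfl
    rw [zero_pow (by have := hN.pos; omega)] at h; norm_num at h
  have h1 : (ζ ^ 2) ^ (N + 1) = ζ ^ 2 := by rw [pow_succ, hω.pow_eq_one, one_mul]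
  unfold eB
  rw [h1, show N - s = t by omega, show N - t = s by omega, mul_comm (qPoch _ _ t)]
  have s1 : (-1 : ℂ) ^ (N + s + 1) = (-1) ^ s := by
    rw [show N + s + 1 = N + (s + 1) by ring, pow_add, hN.neg_one_pow]; ring
  have s2 : (-1 : ℂ) ^ (N + t + 1) = - (-1) ^ s := by
    have : (-1 : ℂ) ^ (N + t + 1) * (-1) ^ s = -((-1) ^ s * (-1) ^ s) := by
      rw [← pow_add, show N + t + 1 + s = 2 * N + 1 by omega, pow_succ, pow_mul, ← pow_add,
        ← two_mul, pow_mul]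
      simp
    have h3 : (-1 : ℂ) ^ s ≠ 0 := by simp
    apply mul_right_cancel₀ h3
    rw [this]; ring
  rw [s1, s2]
  have key : ζ ^ (t * (t + 1)) = ζ ^ (2 * t) * ζ ^ (s * (s + 1)) := by
    have e1 : t * (t + 1) + N * (s + 1) = 2 * t + s * (s + 1) + N * t := by
      subst hst; ring
    have : ζ ^ (t * (t + 1)) * (ζ ^ N) ^ (s + 1) =
        ζ ^ (2 * t) * ζ ^ (s * (s + 1)) * (ζ ^ N) ^ t := by
      rw [← pow_mul, ← pow_mul, ← pow_add, e1]; ring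
    simpa [h] using this
  have k2 : ζ ^ (2 * s) * ζ ^ (2 * t) = 1 := by
    rw [← pow_add, show 2 * s + 2 * t = N * 2 by omega, pow_mul, h, one_pow]
  have h4 : ζ ^ (s * (s + 1)) ≠ 0 := pow_ne_zero _ h0
  have h5 : ζ ^ (2 * t) ≠ 0 := pow_ne_zero _ h0
  have h6 : (1 + ζ ^ (2 * s)) * (ζ ^ (s * (s + 1)))⁻¹ =
      (1 + ζ ^ (2 * t)) * (ζ ^ (t * (t + 1)))⁻¹ := by
    rw [key]
    field_simp
    linear_combination k2
  linear_combination ((-1) ^ s * ζ ^ (N * (N + 1)) /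
    (qPoch (ζ ^ 2) (ζ ^ 2) s * qPoch (ζ ^ 2) (ζ ^ 2) t)) * h6

lemma cB_symm' {N r t : ℕ} (hN : Odd N) (hrt : r + t + 1 = N) {ζ : ℂ} (h : ζ ^ N = 1)
    (hω : IsPrimitiveRoot (ζ ^ 2) N) :
    ∑ s ∈ range r, eB N (s + 1) ζ = ∑ s ∈ range t, eB N (s + 1) ζ := by
  have key : ∀ r t, r + t + 1 = N → ∑ s ∈ range (r + t), eB N (s + 1) ζ =
      ∑ s ∈ range r, eB N (s + 1) ζ - ∑ s ∈ range t, eB N (s + 1) ζ := by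
    intro r t hrt
    rw [Finset.sum_range_add, sub_eq_add_neg, ← Finset.sum_neg_distrib]
    congr 1
    rw [← Finset.sum_range_reflect]
    refine Finset.sum_congr rfl fun s hs => ?_
    have hs' := mem_range.1 hs
    exact eB_symm' hN (by omega) h hω
  have h1 := key 0 (N - 1) (by have := hN.pos; omega)
  have h2 := key r t hrt
  rw [show r + t = N - 1 by omega] at h2
  simp only [zero_add, Finset.range_zero, Finset.sum_empty] at h1
  linear_combination h1 / 2 - h2

lemma f_symm' {N r t : ℕ} (hrt : r + t + 1 = N) {ζ : ℂ} (h : ζ ^ N = 1) (e : ℕ) :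
    ζ ^ aB e t = ζ ^ (aB e r + 2 * r + 1) := by
  have e1 : aB e t + N * ((2 * e + 1) * r + r + 1) =
      aB e r + 2 * r + 1 + N * ((2 * e + 1) * t + t) := by
    subst hrt; simp only [aB]; ring
  have : ζ ^ aB e t * (ζ ^ N) ^ ((2 * e + 1) * r + r + 1) =
      ζ ^ (aB e r + 2 * r + 1) * (ζ ^ N) ^ ((2 * e + 1) * t + t) := by
    rw [← pow_mul, ← pow_mul, ← pow_add, ← pow_add, e1]
  simpa [h] using this

lemma f_sum' {N : ℕ} {ζ : ℂ} (h : ζ ^ N = 1) (e : ℕ) (c : ℕ → ℂ)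
    (hc : ∀ r t, r + t + 1 = N → c r = c t) :
    ∑ r ∈ range N, (ζ ^ aB e r - ζ ^ (aB e r + 2 * r + 1)) * c r = 0 := by
  have h1 : ∑ r ∈ range N, (ζ ^ aB e r - ζ ^ (aB e r + 2 * r + 1)) * c r =
      - ∑ r ∈ range N, (ζ ^ aB e r - ζ ^ (aB e r + 2 * r + 1)) * c r := by
    conv_lhs => rw [← Finset.sum_range_reflect]
    rw [← Finset.sum_neg_distrib]
    refine Finset.sum_congr rfl fun r hr => ?_
    have hr' := mem_range.1 hr
    have x1 : r + (N - 1 - r) + 1 = N := by omega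
    rw [f_symm' x1 h e, ← f_symm' (r := N - 1 - r) (t := r) (by omega) h e, hc r (N - 1 - r) x1]
    ring
  linear_combination h1 / 2

open Filter Topology in
lemma U_val' {N : ℕ} (hN : Odd N) {ζ : ℂ} (hζ : IsPrimitiveRoot ζ N) (hn : ‖ζ‖ = 1) (e : ℕ) :
    U (e + 2) N ζ = -(1 / (2 * (N : ℂ) ^ 2)) * ∑ r ∈ range N,
      (aB e r * ζ ^ aB e r - (aB e r + 2 * r + 1) * ζ ^ (aB e r + 2 * r + 1)) := by
  have hω : IsPrimitiveRoot (ζ ^ 2) N := hζ.pow_of_coprime 2 hN.coprime_two_left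
  have h := hζ.pow_eq_one
  have h0 : ζ ≠ 0 := by rintro rfl; simp at hn
  have hN0 : (N : ℂ) ≠ 0 := by exact_mod_cast hN.pos.ne'
  set l : Filter ℂ := 𝓝[Metric.ball 0 1] ζ with hl
  have hbot : l.NeBot := by
    rw [hl, ← mem_closure_iff_nhdsWithin_neBot, closure_ball _ one_ne_zero]
    simp [hn]
  have hle : l ≤ 𝓝 ζ := nhdsWithin_le_nhds
  have hle' : l ≤ 𝓝[≠] ζ := by
    refine nhdsWithin_mono _ ?_
    intro x hx
    rintro rfl
    simp [hn] at hx
  set F : ℂ → ℂ := fun q => ∑ r ∈ range N, (q ^ aB e r - q ^ (aB e r + 2 * r + 1)) with hF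
  set D : ℂ := ∑ r ∈ range N,
      (aB e r * ζ ^ aB e r - (aB e r + 2 * r + 1) * ζ ^ (aB e r + 2 * r + 1)) with hD
  have hpow : ∀ k : ℕ, HasDerivAt (fun q : ℂ => q ^ k) (k * ζ ^ k / ζ) ζ := by
    intro k
    have := hasDerivAt_pow k ζ
    have hk : (k : ℂ) * ζ ^ k / ζ = k * ζ ^ (k - 1) := by
      cases k with
      | zero => simp
      | succ k => rw [Nat.add_sub_cancel, pow_succ]; field_simp
    rw [hk]
    exact this
  have hFd : HasDerivAt F (D / ζ) ζ := by
    have : HasDerivAt F (∑ r ∈ range N, ((aB e r : ℕ) * ζ ^ aB e r / ζ -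
        ((aB e r + 2 * r + 1 : ℕ) : ℂ) * ζ ^ (aB e r + 2 * r + 1) / ζ)) ζ :=
      HasDerivAt.fun_sum fun r _ => (hpow _).sub (hpow _)
    convert this using 1
    rw [hD, Finset.sum_div]
    refine Finset.sum_congr rfl fun r _ => ?_
    push_cast; ring
  have hF0 : F ζ = 0 := by
    have := f_sum' h e (fun _ => 1) (fun _ _ _ => rfl)
    simpa [hF] using this
  have hF1 : Tendsto (fun q => F q / (q - ζ)) l (𝓝 (D / ζ)) := by
    have := (hasDerivAt_iff_tendsto_slope.1 hFd).mono_left hle'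
    refine this.congr fun q => ?_
    rw [slope_def_field, hF0, sub_zero]
  have hV : Tendsto (fun q => (q - ζ) * ∑ n ∈ range N, ttB q n 0) l
      (𝓝 (-(ζ / (2 * (N : ℂ) ^ 2)))) := by
    obtain ⟨n, rfl⟩ : ∃ n, N = n + 1 := ⟨N - 1, by have := hN.pos; omega⟩
    have hd : Tendsto (fun q => (q - ζ) / (1 - q ^ 2 * (q ^ 2) ^ n)) l
        (𝓝 (-(ζ / (2 * ((n + 1 : ℕ) : ℂ))))) := by
      have h1 := ((hpow (2 * (n + 1))).const_sub 1)
      have h2 := (hasDerivAt_iff_tendsto_slope.1 h1).mono_left hle'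
      have h3 : ζ ^ (2 * (n + 1)) = 1 := by rw [mul_comm, pow_mul, h, one_pow]
      have h4 := h2.inv₀ (by
        rw [h3]; simp only [ne_eq, neg_eq_zero]
        push_cast at hN0 ⊢
        field_simp; simpa using hN0)
      have h5 : (-(ζ / (2 * ((n + 1 : ℕ) : ℂ)))) =
          (-(((2 * (n + 1) : ℕ) : ℂ) * ζ ^ (2 * (n + 1)) / ζ))⁻¹ := by
        rw [h3, inv_neg, mul_one, inv_div]; push_cast; ring
      rw [h5]
      refine h4.congr fun q => ?_
      rw [slope_def_field, inv_div, h3]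
      congr 1
      ring
    have hr : Tendsto (fun q : ℂ => (q - ζ) * ∑ k ∈ range n, (-1) ^ k * q ^ (k * (k + 1)) /
        qPoch (q ^ 2) (q ^ 2) (k + 1)) l (𝓝 0) := by
      have : ContinuousAt (fun q : ℂ => (q - ζ) * ∑ k ∈ range n, (-1) ^ k * q ^ (k * (k + 1)) /
        qPoch (q ^ 2) (q ^ 2) (k + 1)) ζ := by
        refine ContinuousAt.mul (by fun_prop) (tendsto_finsetSum _ fun k hk => ?_)
        exact ContinuousAt.div (by fun_prop) (cont_P' _).continuousAt
          (P_ne' hω _ (by have := mem_range.1 hk; omega))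
      have h2 := this.tendsto.mono_left hle
      simpa using h2
    have hs : Tendsto (fun q : ℂ => (-1) ^ n * q ^ (n * (n + 1)) / qPoch (q ^ 2) (q ^ 2) n) l
        (𝓝 (1 / ((n + 1 : ℕ) : ℂ))) := by
      have : ContinuousAt (fun q : ℂ => (-1) ^ n * q ^ (n * (n + 1)) / qPoch (q ^ 2) (q ^ 2) n) ζ :=
        ContinuousAt.div (by fun_prop) (cont_P' _).continuousAt (P_ne' hω _ (by omega))
      have h2 := this.tendsto.mono_left hle
      have hne : Even n := by
        rcases Nat.even_or_odd n with h' | h'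
        · exact h'
        · exact absurd hN (Nat.not_odd_iff_even.2 h'.add_one)
      have h3 : qPoch (ζ ^ 2) (ζ ^ 2) n = ((n + 1 : ℕ) : ℂ) := by
        push_cast
        rw [← hω.prod_one_sub_pow_eq_order, qPoch]
        refine Finset.prod_congr rfl fun i _ => ?_
        rw [pow_succ' (ζ ^ 2) i]
      have h4 : ζ ^ (n * (n + 1)) = 1 := by rw [mul_comm, pow_mul, h, one_pow]
      rw [h3, h4, hne.neg_one_pow, one_mul] at h2
      rw [hne.neg_one_pow]
      exact h2
    have hmain := hr.add (hs.mul hd)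
    have e1 : 0 + 1 / ((n + 1 : ℕ) : ℂ) * -(ζ / (2 * ((n + 1 : ℕ) : ℂ))) =
        -(ζ / (2 * ((n + 1 : ℕ) : ℂ) ^ 2)) := by
      field_simp; ring
    rw [e1] at hmain
    refine hmain.congr' ?_
    filter_upwards [self_mem_nhdsWithin] with q hq
    have hP := P_ne_ball' (q := q) (by simpa using hq)
    have h6 : ∀ k, ttB q k 0 = (-1) ^ k * q ^ (k * (k + 1)) / qPoch (q ^ 2) (q ^ 2) (k + 1) := by
      intro k
      have := hP k
      simp only [ttB, Nat.zero_le, if_true, Nat.sub_zero, add_zero, zero_mul, pow_zero, inv_one,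
        mul_one]
      rw [mul_comm (qPoch (q ^ 2) (q ^ 2) k), mul_div_mul_right _ _ this]
    rw [Finset.sum_congr rfl fun k _ => h6 k, Finset.sum_range_succ, qPoch_succ', mul_add,
      div_mul_div_comm]
    ring
  have hC : Tendsto (fun q => ∑ r ∈ range N, (q ^ aB e r - q ^ (aB e r + 2 * r + 1)) *
      ∑ s ∈ range r, eB N (s + 1) q) l (𝓝 0) := by
    have : ContinuousAt (fun q => ∑ r ∈ range N, (q ^ aB e r - q ^ (aB e r + 2 * r + 1)) *
      ∑ s ∈ range r, eB N (s + 1) q) ζ := by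
      refine tendsto_finsetSum _ fun r hr => ?_
      refine ContinuousAt.mul (by fun_prop) (tendsto_finsetSum _ fun s hs => ?_)
      have h1 := mem_range.1 hr
      have h2 := mem_range.1 hs
      exact cont_eB' (by omega) (by omega) h hω
    have h2 := this.tendsto.mono_left hle
    rwa [f_sum' h e (fun r => ∑ s ∈ range r, eB N (s + 1) ζ)
      (fun r t hrt => cB_symm' hN hrt h hω)] at h2
  have hU : Tendsto (U (e + 2) N) l (𝓝 (U (e + 2) N ζ)) :=
    (cont_U' hN h hω e).tendsto.mono_left hle
  have hU2 := (hF1.mul hV).add hC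
  have hev : (fun q => F q / (q - ζ) * ((q - ζ) * ∑ n ∈ range N, ttB q n 0) +
      ∑ r ∈ range N, (q ^ aB e r - q ^ (aB e r + 2 * r + 1)) *
      ∑ s ∈ range r, eB N (s + 1) q) =ᶠ[l] U (e + 2) N := by
    filter_upwards [self_mem_nhdsWithin, hle (eventually_ne_nhds h0),
      hle' self_mem_nhdsWithin] with q hq hq0 hqζ
    have hP := P_ne_ball' (q := q) (by simpa using hq)
    have hsub : q - ζ ≠ 0 := sub_ne_zero.2 hqζ
    rw [U_eq2' q hq0 hP, ← mul_assoc, div_mul_cancel₀ _ hsub, hF, Finset.sum_mul,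
      ← Finset.sum_add_distrib]
    refine Finset.sum_congr rfl fun r hr => ?_
    rw [vv' q hq0 hP N r, mul_add]
    congr 2
    refine Finset.sum_congr rfl fun s hs => ?_
    have h1 := mem_range.1 hr
    have h2 := mem_range.1 hs
    rw [eB_eq' q hP N (s + 1) (by omega)]
  have := tendsto_nhds_unique hU (hU2.congr' hev)
  rw [this]
  field_simp
  ring

lemma chi_sum' (e N : ℕ) (f : ℕ → ℂ) :
    ∑ k ∈ range (4 * (e + 1) * N), (chiG (e + 2) k : ℂ) * f k =
      ∑ r ∈ range N, (f (4 * (e + 1) * r + (2 * e + 1)) - f (4 * (e + 1) * r + (2 * e + 3))) := by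
  induction N with
  | zero => simp
  | succ N ih =>
    rw [Nat.mul_succ, Finset.sum_range_add, ih, Finset.sum_range_succ]
    congr 1
    have h1 : ∀ i ∈ range (4 * (e + 1)), (chiG (e + 2) ((4 * (e + 1) * N + i : ℕ) : ℤ) : ℂ) *
        f (4 * (e + 1) * N + i) =
        (if i = 2 * e + 1 then f (4 * (e + 1) * N + i) else 0) -
        (if i = 2 * e + 3 then f (4 * (e + 1) * N + i) else 0) := by
      intro i hi
      have hi' := mem_range.1 hi
      have e1 : ((4 * (e + 1) * N + i : ℕ) : ℤ) % (4 * (((e + 2 : ℕ) : ℤ) - 1)) = i := by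
        rw [show (4 * (((e + 2 : ℕ) : ℤ) - 1)) = 4 * ((e : ℤ) + 1) by push_cast; ring]
        push_cast
        rw [Int.mul_add_emod_self_left]
        exact Int.emod_eq_of_lt (by omega) (by omega)
      have e2 : (2 * ((e + 2 : ℕ) : ℤ) - 3) % (4 * (((e + 2 : ℕ) : ℤ) - 1)) = 2 * e + 1 := by
        rw [Int.emod_eq_of_lt] <;> push_cast <;> omega
      have e3 : (2 * ((e + 2 : ℕ) : ℤ) - 1) % (4 * (((e + 2 : ℕ) : ℤ) - 1)) = 2 * e + 3 := by
        rw [Int.emod_eq_of_lt] <;> push_cast <;> omega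
      rw [chiG, e1, e2, e3]
      by_cases c1 : i = 2 * e + 1
      · rw [if_pos (by omega), if_pos c1, if_neg (by omega)]; simp
      · by_cases c2 : i = 2 * e + 3
        · rw [if_neg (by omega), if_pos (by omega), if_neg c1, if_pos c2]; simp
        · rw [if_neg (by omega), if_neg (by omega), if_neg c1, if_neg c2]; simp
    rw [Finset.sum_congr rfl h1, Finset.sum_sub_distrib, Finset.sum_ite_eq', Finset.sum_ite_eq',
      if_pos (mem_range.2 (by omega)), if_pos (mem_range.2 (by omega))]

lemma chi_last' (e N : ℕ) : chiG (e + 2) ((4 * (e + 1) * N : ℕ) : ℤ) = 0 := by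
  have e1 : ((4 * (e + 1) * N : ℕ) : ℤ) % (4 * (((e + 2 : ℕ) : ℤ) - 1)) = 0 := by
    rw [show (4 * (((e + 2 : ℕ) : ℤ) - 1)) = 4 * ((e : ℤ) + 1) by push_cast; ring]
    push_cast
    exact Int.mul_emod_right _ _
  have e2 : (2 * ((e + 2 : ℕ) : ℤ) - 3) % (4 * (((e + 2 : ℕ) : ℤ) - 1)) = 2 * e + 1 := by
    rw [Int.emod_eq_of_lt] <;> push_cast <;> omega
  have e3 : (2 * ((e + 2 : ℕ) : ℤ) - 1) % (4 * (((e + 2 : ℕ) : ℤ) - 1)) = 2 * e + 3 := by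
    rw [Int.emod_eq_of_lt] <;> push_cast <;> omega
  rw [chiG, e1, e2, e3, if_neg (by omega), if_neg (by omega)]

theorem stmt13 (m : ℕ) (hm : 2 ≤ m) (M : ℤ) (N : ℕ) (hN : 0 < N) (hNodd : Odd N)
    (hMN : IsCoprime M (N : ℤ)) :
    U m N (Complex.exp (2 * Real.pi * Complex.I * M / N)) =
      -(1 / (16 * ((m : ℂ) - 1) * (N : ℂ) ^ 2)) *
        Complex.exp (-(2 * Real.pi * Complex.I * M * ((2 * (m : ℂ) - 3) ^ 2) /
          (8 * ((m : ℂ) - 1) * N))) *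
        ∑ k ∈ Finset.range (4 * (m - 1) * N + 1),
          (k : ℂ) ^ 2 * (chiG m k : ℂ) *
            Complex.exp (2 * Real.pi * Complex.I * M * (k : ℂ) ^ 2 / (8 * ((m : ℂ) - 1) * N)) := by
  obtain ⟨e, rfl⟩ : ∃ e, m = e + 2 := ⟨m - 2, by omega⟩
  set ζ := Complex.exp (2 * Real.pi * Complex.I * M / N) with hζdef
  have hN0 : (N : ℂ) ≠ 0 := by exact_mod_cast hN.ne'
  have hζ : IsPrimitiveRoot ζ N := by
    have h1 := Complex.isPrimitiveRoot_exp N hN.ne'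
    have h2 := h1.zpow_of_gcd_eq_one M (Int.isCoprime_iff_gcd_eq_one.1 hMN)
    rw [← Complex.exp_int_mul] at h2
    have h3 : (2 * Real.pi * Complex.I * M / N : ℂ) = M * (2 * Real.pi * Complex.I / N) := by ring
    rw [hζdef, h3]
    exact h2
  have hn : ‖ζ‖ = 1 := by
    rw [hζdef, show (2 * Real.pi * Complex.I * M / N : ℂ) =
      ((2 * Real.pi * M / N : ℝ) : ℂ) * Complex.I by push_cast; ring]
    exact Complex.norm_exp_ofReal_mul_I _
  have he0 : (e : ℂ) + 1 ≠ 0 := by exact_mod_cast Nat.succ_ne_zero e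
  rw [U_val' hNodd hζ hn e, show 4 * (e + 2 - 1) * N = 4 * (e + 1) * N from rfl,
    Finset.sum_range_succ, chi_last']
  have hsum := chi_sum' e N (fun k => (k : ℂ) ^ 2 *
    Complex.exp (2 * Real.pi * Complex.I * M * (k : ℂ) ^ 2 / (8 * (((e + 2 : ℕ) : ℂ) - 1) * N)))
  have hsum2 : ∑ k ∈ range (4 * (e + 1) * N), (k : ℂ) ^ 2 * (chiG (e + 2) k : ℂ) *
      Complex.exp (2 * Real.pi * Complex.I * M * (k : ℂ) ^ 2 / (8 * (((e + 2 : ℕ) : ℂ) - 1) * N)) =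
      _ := (Finset.sum_congr rfl fun k _ => by ring).trans hsum
  rw [hsum2]
  set X := Complex.exp (2 * Real.pi * Complex.I * M * ((2 * ((e + 2 : ℕ) : ℂ) - 3) ^ 2) /
          (8 * (((e + 2 : ℕ) : ℂ) - 1) * N)) with hX
  have hX0 : X ≠ 0 := Complex.exp_ne_zero _
  have hexp : ∀ k a : ℕ, k ^ 2 = 8 * (e + 1) * a + (2 * e + 1) ^ 2 →
      Complex.exp (2 * Real.pi * Complex.I * M * (k : ℂ) ^ 2 /
        (8 * (((e + 2 : ℕ) : ℂ) - 1) * N)) = X * ζ ^ a := by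
    intro k a hk
    rw [hζdef, ← Complex.exp_nat_mul, hX, ← Complex.exp_add]
    congr 1
    have hk' : (k : ℂ) ^ 2 = 8 * (e + 1) * a + (2 * e + 1) ^ 2 := by exact_mod_cast hk
    rw [hk']
    have : (((e + 2 : ℕ) : ℂ) - 1) = e + 1 := by push_cast; ring
    rw [this]
    push_cast
    field_simp
    ring
  have hterm : ∀ r ∈ range N,
      ((((4 * (e + 1) * r + (2 * e + 1) : ℕ) : ℂ)) ^ 2 *
        Complex.exp (2 * Real.pi * Complex.I * M * ((4 * (e + 1) * r + (2 * e + 1) : ℕ) : ℂ) ^ 2 /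
          (8 * (((e + 2 : ℕ) : ℂ) - 1) * N)) -
      (((4 * (e + 1) * r + (2 * e + 3) : ℕ) : ℂ)) ^ 2 *
        Complex.exp (2 * Real.pi * Complex.I * M * ((4 * (e + 1) * r + (2 * e + 3) : ℕ) : ℂ) ^ 2 /
          (8 * (((e + 2 : ℕ) : ℂ) - 1) * N))) =
      X * (8 * (e + 1)) *
        (aB e r * ζ ^ aB e r - (aB e r + 2 * r + 1) * ζ ^ (aB e r + 2 * r + 1)) +
      X * (2 * e + 1) ^ 2 * ((ζ ^ aB e r - ζ ^ (aB e r + 2 * r + 1)) * 1) := by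
    intro r _
    have k1 : (4 * (e + 1) * r + (2 * e + 1)) ^ 2 = 8 * (e + 1) * aB e r + (2 * e + 1) ^ 2 := by
      rw [aB]; ring
    have k2 : (4 * (e + 1) * r + (2 * e + 3)) ^ 2 =
        8 * (e + 1) * (aB e r + 2 * r + 1) + (2 * e + 1) ^ 2 := by
      rw [aB]; ring
    rw [hexp _ _ k1, hexp _ _ k2, ← Nat.cast_pow, ← Nat.cast_pow, k1, k2]
    push_cast
    ring
  rw [Finset.sum_congr rfl hterm, Finset.sum_add_distrib, ← Finset.mul_sum, ← Finset.mul_sum,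
    f_sum' hζ.pow_eq_one e (fun _ => 1) (fun _ _ _ => rfl), Complex.exp_neg, ← hX]
  have : (((e + 2 : ℕ) : ℂ) - 1) = e + 1 := by push_cast; ring
  rw [this]
  simp only [Int.cast_zero, mul_zero, zero_mul, add_zero]
  field_simp
  ring
end

section
/- Let m ≥ 2 and 0 ≤ a ≤ m−2 be integers. For every real q with 0 < q < 1, ((2m−1)/2)·q^{(m−a−1)²/(2m−1)}·L_m^{(a)}(q) = ((2m−1)/2)·Σ_{k=0}^{∞} χ_{2(2m−1)}^{(a)}(k)·q^{k²/(4(2m−1))}, where the powers of q are real powers. -/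
open Finset
/-- The general term of the multi-sum `L_m^{(a)}(q)`: here `n j` denotes `n_{j+1}`
(0-based indexing), so `n (m-2)` is `n_{m-1}` and `n 0` is `n_1`. -/
noncomputable def Lterm (m a : ℕ) (q : ℂ) (n : ℕ → ℕ) : ℂ :=
  (-1) ^ (n (m - 2)) *
    q ^ (n (m - 2) * (n (m - 2) + 1) + (∑ j ∈ Finset.range (m - 2), 2 * (n j) ^ 2) +
        ∑ j ∈ Finset.Ico a (m - 2), 2 * n j) /
    qPoch (-q) (q ^ 2) (n 0 + if a = 0 then 1 else 0) *
    ∏ i ∈ Finset.range (m - 2), qBinom (q ^ 2) (n (i + 1) + if i + 1 = a then 1 else 0) (n i)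

/-- The multi-sum `L_m^{(a)}(q)`. -/
noncomputable def L (m a : ℕ) (q : ℂ) : ℂ := ∑' n : Fin (m - 1) → ℕ, Lterm m a q (pad (m - 1) n)

/-- The truncated multi-sum `V_{m,N}^{(a)}(q)`. -/
noncomputable def V (m a N : ℕ) (q : ℂ) : ℂ :=
  ∑ n ∈ Fintype.piFinset (fun _ : Fin (m - 1) => Finset.range N), Lterm m a q (pad (m - 1) n)

/-- The odd periodic function `χ_{2(2m-1)}^{(a)}`. -/
def chiL (m a : ℕ) (k : ℤ) : ℤ :=
  if k % (2 * (2 * m - 1)) = (2 * ((m : ℤ) - a - 1)) % (2 * (2 * m - 1)) then 1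
  else if k % (2 * (2 * m - 1)) = (2 * ((m : ℤ) + a)) % (2 * (2 * m - 1)) then -1
  else 0

/-- `(q²;q²)_n` over the reals. -/
noncomputable def PP (q : ℝ) (n : ℕ) : ℝ := ∏ j ∈ Finset.range n, (1 - (q ^ 2) ^ (j + 1))

/-- `(-q;q²)_n` over the reals. -/
noncomputable def NN (q : ℝ) (n : ℕ) : ℝ := ∏ j ∈ Finset.range n, (1 + q * (q ^ 2) ^ j)

lemma PP_zero (q : ℝ) : PP q 0 = 1 := by simp [PP]

lemma PP_succ (q : ℝ) (n : ℕ) : PP q (n + 1) = PP q n * (1 - (q ^ 2) ^ (n + 1)) := by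
  simp [PP, Finset.prod_range_succ]

lemma NN_succ (q : ℝ) (n : ℕ) : NN q (n + 1) = NN q n * (1 + q * (q ^ 2) ^ n) := by
  simp [NN, Finset.prod_range_succ]

lemma fac_pos {q : ℝ} (h0 : 0 < q) (h1 : q < 1) (n : ℕ) : 0 < 1 - (q ^ 2) ^ (n + 1) := by
  have : (q ^ 2) ^ (n + 1) < 1 := pow_lt_one₀ (by positivity) (by nlinarith) (by omega)
  linarith

lemma PP_pos {q : ℝ} (h0 : 0 < q) (h1 : q < 1) (n : ℕ) : 0 < PP q n :=
  Finset.prod_pos fun j _ => fac_pos h0 h1 j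

lemma NN_pos {q : ℝ} (h0 : 0 < q) (n : ℕ) : 0 < NN q n :=
  Finset.prod_pos fun j _ => by positivity

lemma PP_anti {q : ℝ} (h0 : 0 < q) (h1 : q < 1) : Antitone (PP q) := by
  apply antitone_nat_of_succ_le
  intro n
  rw [PP_succ]
  have := PP_pos h0 h1 n
  have h3 : 0 < (q ^ 2) ^ (n + 1) := by positivity
  nlinarith

lemma PP_le_one {q : ℝ} (h0 : 0 < q) (h1 : q < 1) (n : ℕ) : PP q n ≤ 1 := by
  simpa [PP_zero] using PP_anti h0 h1 (Nat.zero_le n)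

/-- The inverse Pochhammer symbols are bounded. -/
lemma PP_inv_bdd {q : ℝ} (h0 : 0 < q) (h1 : q < 1) : ∃ C : ℝ, 0 < C ∧ ∀ n, 1 / PP q n ≤ C := by
  have hQ0 : 0 < q ^ 2 := by positivity
  have hQ1 : q ^ 2 < 1 := by nlinarith
  have h1Q : 0 < 1 - q ^ 2 := by linarith
  refine ⟨Real.exp ((1 - q ^ 2)⁻¹ * (1 - q ^ 2)⁻¹), Real.exp_pos _, fun n => ?_⟩
  have key : 1 / PP q n ≤ Real.exp (∑ j ∈ Finset.range n, (q ^ 2) ^ j * (1 - q ^ 2)⁻¹) := by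
    rw [Real.exp_sum, PP, one_div, ← Finset.prod_inv_distrib]
    refine Finset.prod_le_prod (fun j _ => (inv_pos.2 (fac_pos h0 h1 j)).le) fun j _ => ?_
    have hf := fac_pos h0 h1 j
    have e : (1 - (q ^ 2) ^ (j + 1))⁻¹ = (q ^ 2) ^ (j + 1) * (1 - (q ^ 2) ^ (j + 1))⁻¹ + 1 := by
      field_simp; ring
    rw [e]
    refine (Real.add_one_le_exp _).trans (Real.exp_le_exp.2 ?_)
    have a1 : (q ^ 2) ^ (j + 1) ≤ (q ^ 2) ^ j := pow_le_pow_of_le_one hQ0.le hQ1.le (by omega)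
    have a2 : (q ^ 2) ^ (j + 1) ≤ q ^ 2 := by
      simpa using pow_le_pow_of_le_one hQ0.le hQ1.le (show 1 ≤ j + 1 by omega)
    have a3 : (1 - (q ^ 2) ^ (j + 1))⁻¹ ≤ (1 - q ^ 2)⁻¹ := inv_anti₀ h1Q (by linarith)
    exact mul_le_mul a1 a3 (inv_pos.2 hf).le (by positivity)
  refine key.trans (Real.exp_le_exp.2 ?_)
  rw [← Finset.sum_mul]
  refine mul_le_mul_of_nonneg_right ?_ (inv_pos.2 h1Q).le
  rw [← tsum_geometric_of_lt_one hQ0.le hQ1]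
  exact (summable_geometric_of_lt_one hQ0.le hQ1).sum_le_tsum _ (fun i _ => by positivity)

/-- A limiting case of the `q`-Chu–Vandermonde sum. -/
lemma vand {q : ℝ} (h0 : 0 < q) (h1 : q < 1) (N : ℕ) : ∀ d : ℕ,
    ∑ j ∈ Finset.range (N + 1), (q ^ 2) ^ (j * (j + d)) / (PP q (N - j) * PP q j * PP q (j + d))
      = 1 / (PP q N * PP q (N + d)) := by
  induction N with
  | zero => intro d; simp [PP_zero]
  | succ N ih =>
    intro d
    have hf := fac_pos h0 h1 N
    have hp := fun n => (PP_pos h0 h1 n).ne'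
    have e1 : (∑ j ∈ Finset.range (N + 2), (q ^ 2) ^ (j * (j + d)) /
        (PP q (N + 1 - j) * PP q j * PP q (j + d))) * (1 - (q ^ 2) ^ (N + 1))
        = ∑ j ∈ Finset.range (N + 1), (q ^ 2) ^ (j * (j + (d + 1))) /
        (PP q (N - j) * PP q j * PP q (j + (d + 1))) := by
      have s1 : (∑ j ∈ Finset.range (N + 2), (q ^ 2) ^ (j * (j + d)) /
        (PP q (N + 1 - j) * PP q j * PP q (j + d))) * (1 - (q ^ 2) ^ (N + 1))
        = ∑ j ∈ Finset.range (N + 2), (q ^ 2) ^ (j * (j + d)) /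
        (PP q (N + 1 - j) * PP q j * PP q (j + d)) * (1 - (q ^ 2) ^ j) +
          ∑ j ∈ Finset.range (N + 2), (q ^ 2) ^ (j * (j + d)) /
        (PP q (N + 1 - j) * PP q j * PP q (j + d)) * ((q ^ 2) ^ j * (1 - (q ^ 2) ^ (N + 1 - j))) := by
        rw [Finset.sum_mul, ← Finset.sum_add_distrib]
        refine Finset.sum_congr rfl fun j hj => ?_
        rw [← mul_add]
        congr 1
        have : j ≤ N + 1 := by simp at hj; omega
        obtain ⟨i, hi⟩ := Nat.exists_eq_add_of_le this
        rw [hi, Nat.add_sub_cancel_left, pow_add]; ring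
      rw [s1, Finset.sum_range_succ' _ (N + 1)]
      rw [Finset.sum_range_succ _ (N + 1)]
      simp only [Nat.sub_self, pow_zero, sub_self, mul_zero, add_zero]
      rw [← Finset.sum_add_distrib]
      refine Finset.sum_congr rfl fun j hj => ?_
      have : j ≤ N := by simp at hj; omega
      obtain ⟨i, rfl⟩ := Nat.exists_eq_add_of_le this
      have q1 : j + i + 1 - (j + 1) = i := by omega
      have q2 : j + i + 1 - j = i + 1 := by omega
      have q3 : j + i - j = i := by omega
      have q4 : j + 1 + d = j + d + 1 := by ring
      have q5 : j + (d + 1) = j + d + 1 := by ring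
      rw [q1, q2, q3, q4, q5, PP_succ q i, PP_succ q j, PP_succ q (j + d)]
      have f1 := (fac_pos h0 h1 i).ne'
      have f2 := (fac_pos h0 h1 j).ne'
      have f3 := (fac_pos h0 h1 (j + d)).ne'
      have := hp i
      have := hp j
      have := hp (j + d)
      field_simp
      ring
    rw [ih (d + 1)] at e1
    rw [eq_div_of_mul_eq hf.ne' e1, PP_succ q N]
    have q6 : N + 1 + d = N + (d + 1) := by ring
    rw [q6]
    have := hp N
    have := hp (N + (d + 1))
    have := hf.ne'
    field_simp

/-- The Bailey lemma with both parameters sent to infinity. -/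
lemma bailey {q : ℝ} (h0 : 0 < q) (h1 : q < 1) (c : ℕ) (α : ℕ → ℝ) (n : ℕ) :
    ∑ s ∈ Finset.range (n + 1), (q ^ 2) ^ (s ^ 2 + c * s) / PP q (n - s) *
      (∑ r ∈ Finset.range (s + 1), α r / (PP q (s - r) * PP q (s + r + c)))
    = ∑ r ∈ Finset.range (n + 1), ((q ^ 2) ^ (r ^ 2 + c * r) * α r) /
        (PP q (n - r) * PP q (n + r + c)) := by
  simp_rw [Finset.mul_sum]
  rw [Finset.sum_comm' (t' := Finset.range (n + 1)) (s' := fun r => Finset.Ico r (n + 1))]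
  · refine Finset.sum_congr rfl fun r hr => ?_
    have : r ≤ n := by simp at hr; omega
    obtain ⟨i, rfl⟩ := Nat.exists_eq_add_of_le this
    rw [Finset.sum_Ico_eq_sum_range]
    have e1 : r + i + 1 - r = i + 1 := by omega
    have e2 : r + i - r = i := by omega
    have e3 : r + i + r + c = i + (2 * r + c) := by ring
    have v := vand h0 h1 i (2 * r + c)
    rw [e1, e2, e3, div_eq_mul_one_div, ← v, Finset.mul_sum]
    refine Finset.sum_congr rfl fun j hj => ?_
    have e4 : r + i - (r + j) = i - j := by omega
    have e5 : r + j - r = j := by omega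
    have e6 : r + j + r + c = j + (2 * r + c) := by ring
    rw [e4, e5, e6]
    have := (PP_pos h0 h1 (i - j)).ne'
    have := (PP_pos h0 h1 j).ne'
    have := (PP_pos h0 h1 (j + (2 * r + c))).ne'
    field_simp
    ring
  · intro x y
    simp only [Finset.mem_range, Finset.mem_Ico]
    omega

/-- The `α` of the Bailey pair relative to `1`. -/
noncomputable def alp (q : ℝ) (j : ℕ) : ℕ → ℝ
  | 0 => 1
  | r + 1 => (-1) ^ (r + 1) * (q ^ (2 * (j + 1) * (r + 1) ^ 2 + (r + 1)) +
      q ^ (2 * j * (r + 1) ^ 2 + 2 * r ^ 2 + 3 * r + 1))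

/-- The `α` of the Bailey pair relative to `q²`. -/
noncomputable def gam (q : ℝ) (j r : ℕ) : ℝ :=
  (-1) ^ r * (q ^ (2 * (j + 1) * r ^ 2 + r) - q ^ (2 * j * (r + 1) ^ 2 + 2 * r ^ 2 + 3 * r + 1))

noncomputable def ff (q : ℝ) (j n : ℕ) : ℝ :=
  ∑ r ∈ Finset.range (n + 1), alp q j r / (PP q (n - r) * PP q (n + r))

noncomputable def gg (q : ℝ) (j n : ℕ) : ℝ :=
  ∑ r ∈ Finset.range (n + 1), gam q j r / (PP q (n - r) * PP q (n + r + 1))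

lemma trans_pair {q : ℝ} (h0 : 0 < q) (h1 : q < 1) (j n : ℕ) :
    (1 - (q ^ 2) ^ (n + 1)) * ff q j (n + 1) = gg q j n := by
  have hp := fun n => (PP_pos h0 h1 n).ne'
  have hf := fun n => (fac_pos h0 h1 n).ne'
  have s1 : gg q j n = ∑ r ∈ Finset.range (n + 1),
      (-1) ^ r * q ^ (2 * (j + 1) * r ^ 2 + r) / (PP q (n - r) * PP q (n + r + 1)) -
      ∑ r ∈ Finset.range (n + 1), (-1) ^ r * q ^ (2 * j * (r + 1) ^ 2 + 2 * r ^ 2 + 3 * r + 1)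
        / (PP q (n - r) * PP q (n + r + 1)) := by
    rw [gg, ← Finset.sum_sub_distrib]
    refine Finset.sum_congr rfl fun r _ => ?_
    rw [gam]; ring
  have s2 : ∑ r ∈ Finset.range (n + 1),
      (-1) ^ r * q ^ (2 * (j + 1) * r ^ 2 + r) / (PP q (n - r) * PP q (n + r + 1)) =
      1 / (PP q n * PP q (n + 1)) + ∑ r ∈ Finset.range (n + 1),
       (-1) ^ (r + 1) * q ^ (2 * (j + 1) * (r + 1) ^ 2 + (r + 1)) * (1 - (q ^ 2) ^ (n - r))
        / (PP q (n - r) * PP q (n + r + 2)) := by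
    rw [Finset.sum_range_succ', Finset.sum_range_succ _ n]
    simp only [Nat.sub_self, pow_zero, sub_self, mul_zero, zero_div, add_zero]
    rw [add_comm]
    congr 1
    · simp
    · refine Finset.sum_congr rfl fun r hr => ?_
      have : r + 1 ≤ n := by simp at hr; omega
      obtain ⟨i, rfl⟩ := Nat.exists_eq_add_of_le this
      have e1 : r + 1 + i - (r + 1) = i := by omega
      have e2 : r + 1 + i - r = i + 1 := by omega
      rw [e1, e2, PP_succ q i]
      have := hp i
      have := hf i
      have := hp (r + 1 + i + r + 2)
      have e3 : r + 1 + i + (r + 1) + 1 = r + 1 + i + r + 2 := by omega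
      rw [e3]
      field_simp
  rw [s1, s2, add_sub_assoc, ← Finset.sum_sub_distrib, ff, Finset.sum_range_succ', mul_add]
  refine (add_comm _ _).trans ?_
  congr 1
  · simp only [alp, Nat.sub_zero, add_zero]
    rw [PP_succ]
    have := hp n
    have := hf n
    field_simp
  · rw [Finset.mul_sum]
    refine Finset.sum_congr rfl fun r hr => ?_
    have : r ≤ n := by simp at hr; omega
    obtain ⟨i, rfl⟩ := Nat.exists_eq_add_of_le this
    have e1 : r + i + 1 - (r + 1) = i := by omega
    have e2 : r + i - r = i := by omega
    have e3 : r + i + 1 + (r + 1) = r + i + r + 1 + 1 := by omega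
    rw [e1, e2, e3, PP_succ q (r + i + r + 1), alp]
    have := hp i
    have := hf (r + i + r + 1)
    have := hp (r + i + r + 1)
    field_simp
    ring

lemma base_step {q : ℝ} (h0 : 0 < q) (h1 : q < 1) (n : ℕ) :
    ff q 0 n = (1 + q * (q ^ 2) ^ n) * gg q 0 n := by
  have hp := fun n => (PP_pos h0 h1 n).ne'
  have hf := fun n => (fac_pos h0 h1 n).ne'
  have s1 : ff q 0 n = ∑ r ∈ Finset.range (n + 1),
      (-1) ^ r * q ^ (2 * r ^ 2 + r) / (PP q (n - r) * PP q (n + r)) +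
      ∑ r ∈ Finset.range (n + 1), (-1) ^ (r + 1) * q ^ (2 * r ^ 2 + 3 * r + 1)
        * (1 - (q ^ 2) ^ (n - r)) / (PP q (n - r) * PP q (n + r + 1)) := by
    rw [ff, Finset.sum_range_succ', Finset.sum_range_succ' _ n, Finset.sum_range_succ _ n]
    simp only [Nat.sub_self, pow_zero, sub_self, mul_zero, zero_div, add_zero]
    rw [add_right_comm, ← Finset.sum_add_distrib]
    congr 1
    · refine Finset.sum_congr rfl fun r hr => ?_
      have : r + 1 ≤ n := by simp at hr; omega
      obtain ⟨i, rfl⟩ := Nat.exists_eq_add_of_le this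
      have e1 : r + 1 + i - (r + 1) = i := by omega
      have e2 : r + 1 + i - r = i + 1 := by omega
      have e3 : r + 1 + i + (r + 1) = r + 1 + i + r + 1 := by omega
      rw [e1, e2, e3, PP_succ q i, alp]
      have := hp i
      have := hf i
      have := hp (r + 1 + i + r + 1)
      field_simp
      ring
    · simp [alp]
  rw [s1, ← Finset.sum_add_distrib, gg, Finset.mul_sum]
  refine Finset.sum_congr rfl fun r hr => ?_
  have : r ≤ n := by simp at hr; omega
  obtain ⟨i, rfl⟩ := Nat.exists_eq_add_of_le this
  have e2 : r + i - r = i := by omega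
  rw [e2, PP_succ q (r + i + r), gam]
  have := hp i
  have := hf (r + i + r)
  have := hp (r + i + r)
  field_simp
  ring

lemma base_pair {q : ℝ} (h0 : 0 < q) (h1 : q < 1) (n : ℕ) :
    ff q 0 n = 1 / (PP q n * NN q n) := by
  induction n with
  | zero => simp [ff, alp, PP_zero, NN]
  | succ n ih =>
    have a := trans_pair h0 h1 0 n
    have b := base_step h0 h1 n
    rw [← a, ih] at b
    rw [PP_succ, NN_succ]
    have := (PP_pos h0 h1 n).ne'
    have := (fac_pos h0 h1 n).ne'
    have := (NN_pos h0 n).ne'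
    have : 1 + q * (q ^ 2) ^ n ≠ 0 := by positivity
    field_simp at b ⊢
    linarith

/-- Gaussian binomial over the reals in base `q²`. -/
noncomputable def qbr (q : ℝ) (n k : ℕ) : ℝ :=
  if k ≤ n then PP q n / (PP q (n - k) * PP q k) else 0

noncomputable def wt (q : ℝ) (a i s x : ℕ) : ℝ :=
  q ^ (2 * s ^ 2 + if a ≤ i then 2 * s else 0) * qbr q (x + if i + 1 = a then 1 else 0) s

/-- The iterated inner sums. -/
noncomputable def HH (q : ℝ) (a : ℕ) : ℕ → ℕ → ℝ
  | 0, x => 1 / NN q (x + if a = 0 then 1 else 0)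
  | i + 1, x => ∑ s ∈ Finset.range (x + 2), wt q a i s x * HH q a i s

noncomputable def gj (q : ℝ) (a j n : ℕ) : ℝ :=
  ∑ r ∈ Finset.range (n + 1), ((q ^ 2) ^ (j * (r ^ 2 + r)) * gam q a r) /
    (PP q (n - r) * PP q (n + r + 1))

lemma alp_succ (q : ℝ) (j r : ℕ) : alp q (j + 1) r = (q ^ 2) ^ (r ^ 2) * alp q j r := by
  cases r with
  | zero => simp [alp]
  | succ r => simp only [alp]; ring

lemma stepA {q : ℝ} (h0 : 0 < q) (h1 : q < 1) (i x : ℕ) :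
    ∑ s ∈ Finset.range (x + 1), q ^ (2 * s ^ 2) * qbr q x s * (PP q s * ff q i s) =
      PP q x * ff q (i + 1) x := by
  have b := bailey h0 h1 0 (alp q i) x
  simp only [add_zero, zero_mul, ← alp_succ] at b
  rw [ff, ← b, Finset.mul_sum]
  refine Finset.sum_congr rfl fun s hs => ?_
  have hs' : s ≤ x := by simp at hs; omega
  rw [qbr, if_pos hs', ff, pow_mul]
  have := (PP_pos h0 h1 s).ne'
  have := (PP_pos h0 h1 (x - s)).ne'
  field_simp

lemma stepB {q : ℝ} (h0 : 0 < q) (h1 : q < 1) (a j x : ℕ) :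
    ∑ s ∈ Finset.range (x + 1), q ^ (2 * s ^ 2 + 2 * s) * qbr q x s * (PP q s * gj q a j s) =
      PP q x * gj q a (j + 1) x := by
  have b := bailey h0 h1 1 (fun r => (q ^ 2) ^ (j * (r ^ 2 + r)) * gam q a r) x
  have e : ∀ r : ℕ, (q ^ 2) ^ ((j + 1) * (r ^ 2 + r)) * gam q a r =
    (q ^ 2) ^ (r ^ 2 + 1 * r) * ((q ^ 2) ^ (j * (r ^ 2 + r)) * gam q a r) := by
    intro r; ring
  rw [gj]
  simp_rw [e]
  rw [← b, Finset.mul_sum]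
  refine Finset.sum_congr rfl fun s hs => ?_
  have hs' : s ≤ x := by simp at hs; omega
  rw [qbr, if_pos hs', gj, show 2 * s ^ 2 + 2 * s = 2 * (s ^ 2 + 1 * s) by ring, pow_mul]
  have := (PP_pos h0 h1 s).ne'
  have := (PP_pos h0 h1 (x - s)).ne'
  field_simp

lemma HH_lt {q : ℝ} (h0 : 0 < q) (h1 : q < 1) (a i : ℕ) (hi : i < a) (x : ℕ) :
    HH q a i x = PP q x * ff q i x := by
  induction i generalizing x with
  | zero =>
    have := (PP_pos h0 h1 x).ne'
    have := (NN_pos h0 x).ne'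
    rw [HH, if_neg (by omega), base_pair h0 h1, add_zero]
    field_simp
  | succ i ih =>
    rw [HH, Finset.sum_range_succ, ← stepA h0 h1]
    have e : wt q a i (x + 1) x = 0 := by
      have h : ¬ (i + 1 = a) := by omega
      simp [wt, qbr, h]
    rw [e, zero_mul, add_zero]
    refine Finset.sum_congr rfl fun s _ => ?_
    rw [wt, ih (by omega), if_neg (by omega), if_neg (by omega), add_zero, add_zero]

lemma HH_eq {q : ℝ} (h0 : 0 < q) (h1 : q < 1) (a : ℕ) (x : ℕ) :
    HH q a a x = PP q x * gj q a 0 x := by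
  have key : HH q a a x = PP q (x + 1) * ff q a (x + 1) := by
    cases a with
    | zero =>
      have := (PP_pos h0 h1 (x + 1)).ne'
      have := (NN_pos h0 (x + 1)).ne'
      rw [HH, if_pos rfl, base_pair h0 h1]
      field_simp
    | succ a =>
      rw [HH, ← stepA h0 h1]
      refine Finset.sum_congr rfl fun s _ => ?_
      rw [wt, HH_lt h0 h1 _ _ (by omega), if_neg (by omega), if_pos rfl, add_zero]
  have t := trans_pair h0 h1 a x
  have e : gj q a 0 x = gg q a x := by simp [gj, gg]
  rw [key, PP_succ, mul_assoc, t, e]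

lemma HH_ge {q : ℝ} (h0 : 0 < q) (h1 : q < 1) (a j : ℕ) (x : ℕ) :
    HH q a (a + j) x = PP q x * gj q a j x := by
  induction j generalizing x with
  | zero => exact HH_eq h0 h1 a x
  | succ j ih =>
    rw [← add_assoc, HH, Finset.sum_range_succ, ← stepB h0 h1]
    have e : wt q a (a + j) (x + 1) x = 0 := by
      have h : ¬ (a + j + 1 = a) := by omega
      simp [wt, qbr, h]
    rw [e, zero_mul, add_zero]
    refine Finset.sum_congr rfl fun s _ => ?_
    rw [wt, ih, if_pos (by omega), if_neg (by omega), add_zero]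

lemma hasSum_of_eq {ι : Type*} {f g : ι → ℝ} {a : ℝ} (h : ∀ i, f i = g i) (H : HasSum g a) :
    HasSum f a := by
  rw [funext h]; exact H

/-- A limiting case of the `q`-Gauss sum. -/
lemma gauss {q : ℝ} (h0 : 0 < q) (h1 : q < 1) (r : ℕ) : ∀ k : ℕ,
    HasSum (fun j : ℕ => (-1) ^ j * q ^ (j * (j + 1) + 2 * k * j) * PP q (r + j) /
      (PP q j * PP q (r + k + 1 + j))) (PP q r / PP q k) := by
  obtain ⟨C, hC, hC'⟩ := PP_inv_bdd h0 h1
  induction r with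
  | zero =>
    intro k
    have hp := fun n => (PP_pos h0 h1 n).ne'
    have hf := fun n => (fac_pos h0 h1 n).ne'
    set g : ℕ → ℝ := fun j => (-1) ^ j * q ^ (j * (j + 1) + 2 * k * j) *
      (1 / PP q (k + j)) with hg
    have e : ∀ j : ℕ, (-1) ^ j * q ^ (j * (j + 1) + 2 * k * j) * PP q (0 + j) /
      (PP q j * PP q (0 + k + 1 + j)) = g j - g (j + 1) := by
      intro j
      have e1 : 0 + k + 1 + j = k + j + 1 := by ring
      have e2 : k + (j + 1) = k + j + 1 := by ring
      simp only [hg]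
      rw [e1, e2, zero_add, PP_succ q (k + j)]
      have := hp j
      have := hp (k + j)
      have := hf (k + j)
      field_simp
      ring
    have hs : Summable g := by
      refine Summable.of_norm_bounded
        ((summable_geometric_of_lt_one h0.le h1).mul_right C) fun j => ?_
      rw [hg, norm_mul, norm_mul, norm_pow, norm_neg, norm_one, one_pow, one_mul,
        Real.norm_of_nonneg (by positivity),
        Real.norm_of_nonneg (one_div_pos.2 (PP_pos h0 h1 _)).le]
      refine mul_le_mul (pow_le_pow_of_le_one h0.le h1.le ?_) (hC' _)
        (one_div_pos.2 (PP_pos h0 h1 _)).le (by positivity)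
      nlinarith [Nat.zero_le (k * j), Nat.zero_le (j * j)]
    have a := hs.hasSum.sub ((hasSum_nat_add_iff' 1).2 hs.hasSum)
    refine hasSum_of_eq e ?_
    simpa [hg, PP_zero] using a
  | succ r ih =>
    intro k
    have a := (ih k).sub ((ih (k + 1)).mul_left ((q ^ 2) ^ (r + 1) * (1 - (q ^ 2) ^ (k + 1))))
    have hp := fun n => (PP_pos h0 h1 n).ne'
    have hf := fun n => (fac_pos h0 h1 n).ne'
    have hval : PP q (r + 1) / PP q k = PP q r / PP q k -
        (q ^ 2) ^ (r + 1) * (1 - (q ^ 2) ^ (k + 1)) * (PP q r / PP q (k + 1)) := by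
      rw [PP_succ, PP_succ]
      have := hp k
      have := hf k
      field_simp
    rw [hval]
    refine hasSum_of_eq (fun j => ?_) a
    have e1 : r + 1 + j = r + j + 1 := by ring
    have e2 : r + 1 + k + 1 + j = r + k + 1 + j + 1 := by ring
    have e3 : r + (k + 1) + 1 + j = r + k + 1 + j + 1 := by ring
    rw [e1, e2, e3, PP_succ q (r + j), PP_succ q (r + k + 1 + j)]
    have := hp j
    have := hp (r + k + 1 + j)
    have := hf (r + k + 1 + j)
    field_simp
    ring

lemma dsum {q : ℝ} (h0 : 0 < q) (h1 : q < 1) (α : ℕ → ℝ) (D : ℝ) (hD : ∀ r, |α r| ≤ D) :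
    HasSum (fun N : ℕ => (-1) ^ N * q ^ (N * (N + 1)) * (PP q N *
      ∑ r ∈ Finset.range (N + 1), α r / (PP q (N - r) * PP q (N + r + 1))))
      (∑' r, α r * ((-1) ^ r * q ^ (r * (r + 1)))) := by
  obtain ⟨C, hC, hC'⟩ := PP_inv_bdd h0 h1
  have hp := fun n => (PP_pos h0 h1 n).ne'
  set E : ℕ × ℕ → ℝ := fun p => if p.1 ≤ p.2 then (-1) ^ p.2 * q ^ (p.2 * (p.2 + 1)) * (PP q p.2 *
    (α p.1 / (PP q (p.2 - p.1) * PP q (p.2 + p.1 + 1)))) else 0 with hE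
  have hgeo := summable_geometric_of_lt_one h0.le h1
  have hD0 : 0 ≤ D := (abs_nonneg _).trans (hD 0)
  have hsum : Summable E := by
    have hb : Summable fun p : ℕ × ℕ => (D * C * C) * (q ^ p.1 * q ^ p.2) :=
      (hgeo.mul_of_nonneg hgeo (fun _ => by positivity) (fun _ => by positivity)).mul_left _
    refine Summable.of_norm_bounded hb ?_
    rintro ⟨r, N⟩
    simp only [hE]
    split_ifs with h
    · have p1 := one_div_pos.2 (PP_pos h0 h1 (N - r))
      have p2 := one_div_pos.2 (PP_pos h0 h1 (N + r + 1))
      have e : (-1) ^ N * q ^ (N * (N + 1)) * (PP q N *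
          (α r / (PP q (N - r) * PP q (N + r + 1)))) =
          (-1) ^ N * (q ^ (N * (N + 1)) * (PP q N * (α r * (1 / PP q (N - r)) *
            (1 / PP q (N + r + 1))))) := by
        have := hp (N - r)
        have := hp (N + r + 1)
        field_simp
      rw [e, norm_mul, norm_pow, norm_neg, norm_one, one_pow, one_mul, norm_mul, norm_mul,
        norm_mul, norm_mul, Real.norm_of_nonneg (show 0 ≤ q ^ (N * (N + 1)) by positivity),
        Real.norm_of_nonneg (PP_pos h0 h1 N).le, Real.norm_of_nonneg p1.le,
        Real.norm_of_nonneg p2.le, Real.norm_eq_abs]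
      have b1 : q ^ (N * (N + 1)) ≤ q ^ r * q ^ N := by
        rw [← pow_add]
        apply pow_le_pow_of_le_one h0.le h1.le
        nlinarith [Nat.le_mul_self N]
      have b2 : PP q N * (|α r| * (1 / PP q (N - r)) * (1 / PP q (N + r + 1))) ≤
          1 * (D * C * C) := by
        refine mul_le_mul (PP_le_one h0 h1 N) ?_ (by positivity) (by norm_num)
        refine mul_le_mul ?_ (hC' _) p2.le (by positivity)
        exact mul_le_mul (hD r) (hC' _) p1.le hD0
      rw [mul_comm (D * C * C)]
      refine mul_le_mul b1 (by simpa using b2) ?_ (by positivity)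
      have := PP_pos h0 h1 N
      positivity
    · simp only [norm_zero]
      positivity
  have f1 : ∀ r, HasSum (fun N => E (r, N)) (α r * ((-1) ^ r * q ^ (r * (r + 1)))) := by
    intro r
    have inj : Function.Injective (fun j : ℕ => r + j) := fun x y h => by simpa using h
    rw [← inj.hasSum_iff]
    · have g := (gauss h0 h1 r r).mul_left (α r * ((-1) ^ r * q ^ (r * (r + 1))))
      rw [div_self (hp r), mul_one] at g
      refine hasSum_of_eq (fun j => ?_) g
      have e1 : r + j - r = j := by omega
      have e2 : r + j + r + 1 = r + r + 1 + j := by ring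
      simp only [hE, Function.comp, if_pos (Nat.le_add_right r j), e1, e2]
      have := hp j
      have := hp (r + r + 1 + j)
      field_simp
      ring
    · intro N hN
      simp only [hE]
      rw [if_neg]
      intro h
      exact hN ⟨N - r, by simp; omega⟩
  have f2 : ∀ N, HasSum (fun r => E (r, N)) ((-1) ^ N * q ^ (N * (N + 1)) * (PP q N *
      ∑ r ∈ Finset.range (N + 1), α r / (PP q (N - r) * PP q (N + r + 1)))) := by
    intro N
    have : ((-1) ^ N * q ^ (N * (N + 1)) * (PP q N *
      ∑ r ∈ Finset.range (N + 1), α r / (PP q (N - r) * PP q (N + r + 1)))) =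
      ∑ r ∈ Finset.range (N + 1), E (r, N) := by
      rw [Finset.mul_sum, Finset.mul_sum]
      refine Finset.sum_congr rfl fun r hr => ?_
      simp only [hE]
      rw [if_pos]
      simp at hr; omega
    rw [this]
    refine hasSum_sum_of_ne_finset_zero fun r hr => ?_
    simp only [hE]
    rw [if_neg]
    simp at hr; omega
  have t1 := hsum.hasSum.prod_fiberwise f1
  rw [t1.tsum_eq]
  exact ((Equiv.prodComm ℕ ℕ).hasSum_iff.2 hsum.hasSum).prod_fiberwise f2

/-- Fubini from absolute fibrewise sums. -/
lemma hasSum_prod_of_abs {β γ : Type*} {f : β × γ → ℝ} {g g' : β → ℝ} {a : ℝ}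
    (h : ∀ b, HasSum (fun c => f (b, c)) (g b))
    (h' : ∀ b, HasSum (fun c => |f (b, c)|) (g' b)) (hg' : Summable g') (hg : HasSum g a) :
    HasSum f a := by
  have hs : Summable f := by
    rw [← summable_abs_iff, summable_prod_of_nonneg (fun _ => abs_nonneg _)]
    refine ⟨fun b => (h' b).summable, ?_⟩
    simpa only [(h' _).tsum_eq] using hg'
  have := hs.hasSum.prod_fiberwise h
  rw [hg.unique this]
  exact hs.hasSum

noncomputable def TT (q : ℝ) (a k : ℕ) (n : ℕ → ℕ) : ℝ :=
  1 / NN q (n 0 + if a = 0 then 1 else 0) * ∏ i ∈ Finset.range k, wt q a i (n i) (n (i + 1))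

/-- Append a last entry to a tuple. -/
def snc {k : ℕ} (g : Fin k → ℕ) (x : ℕ) : Fin (k + 1) → ℕ := Fin.snocEquiv (fun _ => ℕ) (x, g)

lemma pad_snc_last {k : ℕ} (g : Fin k → ℕ) (x : ℕ) : pad (k + 1) (snc g x) k = x := by
  simp [pad, snc, Fin.snocEquiv, Fin.snoc]

lemma pad_snc_lt {k : ℕ} (g : Fin k → ℕ) (x i : ℕ) (hi : i < k) :
    pad (k + 1) (snc g x) i = pad k g i := by
  simp [pad, snc, Fin.snocEquiv, Fin.snoc, hi, Nat.lt_succ_of_lt hi]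

lemma TT_snc (q : ℝ) (a k : ℕ) (g : Fin k → ℕ) (s x : ℕ) :
    TT q a (k + 1) (pad (k + 2) (snc (snc g s) x)) =
      wt q a k s x * TT q a k (pad (k + 1) (snc g s)) := by
  rw [TT, TT, Finset.prod_range_succ, pad_snc_last, pad_snc_lt _ _ k (by omega), pad_snc_last,
    pad_snc_lt _ _ 0 (by omega)]
  have : ∏ i ∈ Finset.range k, wt q a i (pad (k + 2) (snc (snc g s) x) i)
      (pad (k + 2) (snc (snc g s) x) (i + 1)) = ∏ i ∈ Finset.range k,
      wt q a i (pad (k + 1) (snc g s) i) (pad (k + 1) (snc g s) (i + 1)) := by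
    refine Finset.prod_congr rfl fun i hi => ?_
    have := Finset.mem_range.1 hi
    rw [pad_snc_lt _ _ i (by omega), pad_snc_lt _ _ (i + 1) (by omega)]
  rw [this]
  ring

lemma wt_nonneg {q : ℝ} (h0 : 0 < q) (h1 : q < 1) (a i s x : ℕ) : 0 ≤ wt q a i s x := by
  rw [wt, qbr]
  refine mul_nonneg (by positivity) ?_
  generalize (x + if i + 1 = a then 1 else 0) = y
  split_ifs
  · exact div_nonneg (PP_pos h0 h1 _).le (mul_pos (PP_pos h0 h1 _) (PP_pos h0 h1 _)).le
  · exact le_rfl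

lemma TT_nonneg {q : ℝ} (h0 : 0 < q) (h1 : q < 1) (a k : ℕ) (n : ℕ → ℕ) : 0 ≤ TT q a k n :=
  mul_nonneg (one_div_pos.2 (NN_pos h0 _)).le (Finset.prod_nonneg fun _ _ => wt_nonneg h0 h1 _ _ _ _)

lemma tup {q : ℝ} (h0 : 0 < q) (h1 : q < 1) (a k : ℕ) : ∀ x : ℕ,
    HasSum (fun g : Fin k → ℕ => TT q a k (pad (k + 1) (snc g x))) (HH q a k x) := by
  induction k with
  | zero =>
    intro x
    have e : ∀ g : Fin 0 → ℕ, TT q a 0 (pad 1 (snc g x)) = HH q a 0 x := by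
      intro g
      rw [TT, HH, pad_snc_last]; simp
    simp [e]
  | succ k ih =>
    intro x
    rw [← (Fin.snocEquiv (fun _ : Fin (k + 1) => ℕ)).hasSum_iff]
    have hF : HasSum (fun s => wt q a k s x * HH q a k s) (HH q a (k + 1) x) := by
      rw [HH]
      refine hasSum_sum_of_ne_finset_zero fun s hs => ?_
      rw [wt, qbr, if_neg (c := s ≤ _)]
      · ring
      · simp at hs
        split_ifs <;> omega
    have hfib : ∀ s, HasSum (fun g : Fin k → ℕ => TT q a (k + 1) (pad (k + 2) (snc (snc g s) x)))
        (wt q a k s x * HH q a k s) := by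
      intro s
      simp_rw [TT_snc]
      exact (ih s).mul_left _
    refine hasSum_prod_of_abs (g' := fun s => wt q a k s x * HH q a k s) hfib ?_ hF.summable hF
    intro s
    refine hasSum_of_eq (fun g => ?_) (hfib s)
    exact abs_of_nonneg (TT_nonneg h0 h1 _ _ _)

lemma tup_full {q : ℝ} (h0 : 0 < q) (h1 : q < 1) (a k : ℕ) (φ : ℕ → ℝ) (S : ℝ)
    (hS : HasSum (fun x => φ x * HH q a k x) S) :
    HasSum (fun n : Fin (k + 1) → ℕ => φ (pad (k + 1) n k) * TT q a k (pad (k + 1) n)) S := by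
  rw [← (Fin.snocEquiv (fun _ : Fin (k + 1) => ℕ)).hasSum_iff]
  have hfib : ∀ s, HasSum (fun g : Fin k → ℕ => φ (pad (k + 1) (snc g s) k) *
      TT q a k (pad (k + 1) (snc g s))) (φ s * HH q a k s) := by
    intro s
    simp_rw [pad_snc_last]
    exact (tup h0 h1 a k s).mul_left _
  refine hasSum_prod_of_abs (g' := fun s => |φ s * HH q a k s|) hfib ?_ hS.summable.abs hS
  intro s
  have hn : 0 ≤ HH q a k s := (tup h0 h1 a k s).nonneg (fun g => TT_nonneg h0 h1 _ _ _)
  have := (tup h0 h1 a k s).mul_left |φ s|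
  rw [abs_mul, abs_of_nonneg hn]
  refine hasSum_of_eq (fun g => ?_) this
  change |φ (pad (k + 1) (snc g s) k) * TT q a k (pad (k + 1) (snc g s))| = _
  rw [abs_mul, abs_of_nonneg (TT_nonneg h0 h1 _ _ _), pad_snc_last]

lemma qPoch_PP (q : ℝ) (n : ℕ) : qPoch ((q : ℂ) ^ 2) ((q : ℂ) ^ 2) n = (PP q n : ℂ) := by
  rw [qPoch, PP]
  push_cast
  refine Finset.prod_congr rfl fun j _ => ?_
  rw [pow_succ' _ j]

lemma qPoch_NN (q : ℝ) (n : ℕ) : qPoch (-(q : ℂ)) ((q : ℂ) ^ 2) n = (NN q n : ℂ) := by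
  rw [qPoch, NN]
  push_cast
  refine Finset.prod_congr rfl fun j _ => ?_
  ring

lemma qBinom_qbr (q : ℝ) (n k : ℕ) : qBinom ((q : ℂ) ^ 2) n k = (qbr q n k : ℂ) := by
  rw [qBinom, qbr]
  split_ifs
  · simp only [qPoch_PP]; push_cast; rfl
  · simp

lemma Lterm_real (q : ℝ) (a k : ℕ) (n : ℕ → ℕ) :
    Lterm (k + 2) a (q : ℂ) n =
      (((-1) ^ (n k) * q ^ (n k * (n k + 1)) * TT q a k n : ℝ) : ℂ) := by
  have hw : ∏ i ∈ Finset.range k, wt q a i (n i) (n (i + 1)) =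
      q ^ ((∑ j ∈ Finset.range k, 2 * (n j) ^ 2) + ∑ j ∈ Finset.Ico a k, 2 * n j) *
      ∏ i ∈ Finset.range k, qbr q (n (i + 1) + if i + 1 = a then 1 else 0) (n i) := by
    simp only [wt]
    rw [Finset.prod_mul_distrib, Finset.prod_pow_eq_pow_sum, Finset.sum_add_distrib,
      ← Finset.sum_filter]
    have : Finset.filter (fun i => a ≤ i) (Finset.range k) = Finset.Ico a k := by
      ext i; simp; omega
    rw [this]
  rw [Lterm, TT, hw, Nat.add_sub_cancel, qPoch_NN]
  simp only [qBinom_qbr]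
  push_cast
  ring

lemma hasSum_L {q : ℝ} (h0 : 0 < q) (h1 : q < 1) (a j : ℕ) :
    HasSum (fun n : Fin (a + j + 1) → ℕ => Lterm (a + j + 2) a (q : ℂ) (pad (a + j + 1) n))
      ((∑' r : ℕ, (q ^ ((2 * a + 2 * j + 3) * r ^ 2 + 2 * (j + 1) * r) -
        q ^ ((2 * a + 2 * j + 3) * r ^ 2 + (4 * a + 2 * j + 4) * r + (2 * a + 1))) : ℝ) : ℂ) := by
  simp_rw [Lterm_real]
  rw [Complex.hasSum_ofReal]
  refine tup_full h0 h1 a (a + j) (fun x => (-1) ^ x * q ^ (x * (x + 1))) _ ?_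
  simp_rw [HH_ge h0 h1, gj]
  have := dsum h0 h1 (fun r => (q ^ 2) ^ (j * (r ^ 2 + r)) * gam q a r) 2 ?_
  · convert this using 3 with r
    rw [gam]
    have e : ((-1 : ℝ) ^ r) * (-1) ^ r = 1 := by rw [← mul_pow]; simp
    linear_combination (-(q ^ ((2 * a + 2 * j + 3) * r ^ 2 + 2 * (j + 1) * r) -
        q ^ ((2 * a + 2 * j + 3) * r ^ 2 + (4 * a + 2 * j + 4) * r + (2 * a + 1)))) * e
  · intro r
    have b : ∀ n : ℕ, |q ^ n| ≤ 1 := fun n => by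
      rw [abs_of_nonneg (by positivity)]; exact pow_le_one₀ h0.le h1.le
    rw [gam, ← pow_mul, abs_mul, abs_mul, abs_pow (-1 : ℝ), abs_neg, abs_one, one_pow, one_mul]
    have c := abs_sub (q ^ (2 * (a + 1) * r ^ 2 + r))
      (q ^ (2 * a * (r + 1) ^ 2 + 2 * r ^ 2 + 3 * r + 1))
    have := b (2 * (a + 1) * r ^ 2 + r)
    have := b (2 * a * (r + 1) ^ 2 + 2 * r ^ 2 + 3 * r + 1)
    calc _ ≤ 1 * 2 := mul_le_mul (b _) (by linarith) (abs_nonneg _) (by norm_num)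
      _ = 2 := by norm_num

lemma hasSum_residue (F : ℕ → ℝ) (M c : ℕ) (hc : c < M) (S : ℝ)
    (h : HasSum (fun r => F (M * r + c)) S) :
    HasSum (fun k => if k % M = c then F k else 0) S := by
  have inj : Function.Injective (fun r : ℕ => M * r + c) := by
    intro x y h
    have hM : M ≠ 0 := by omega
    simpa [hM] using h
  rw [← inj.hasSum_iff]
  · refine hasSum_of_eq (fun r => ?_) h
    simp [Function.comp, Nat.mod_eq_of_lt hc]
  · intro k hk
    rw [if_neg]
    intro h
    exact hk ⟨k / M, by simp only; rw [← h]; exact Nat.div_add_mod k M⟩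

lemma chi_eq (a j k : ℕ) : (chiL (a + j + 2) a k : ℝ) =
    (if k % (2 * (2 * a + 2 * j + 3)) = 2 * (j + 1) then 1 else 0) -
    (if k % (2 * (2 * a + 2 * j + 3)) = 2 * (2 * a + j + 2) then 1 else 0) := by
  have e0 : (2 * (2 * ((a + j + 2 : ℕ) : ℤ) - 1)) = ((2 * (2 * a + 2 * j + 3) : ℕ) : ℤ) := by
    push_cast; ring
  have e1 : (2 * (((a + j + 2 : ℕ) : ℤ) - a - 1)) = ((2 * (j + 1) : ℕ) : ℤ) := by
    push_cast; ring
  have e2 : (2 * (((a + j + 2 : ℕ) : ℤ) + a)) = ((2 * (2 * a + j + 2) : ℕ) : ℤ) := by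
    push_cast; ring
  rw [chiL, e0, e1, e2]
  norm_cast
  rw [Nat.mod_eq_of_lt (show 2 * (j + 1) < 2 * (2 * a + 2 * j + 3) by omega),
    Nat.mod_eq_of_lt (show 2 * (2 * a + j + 2) < 2 * (2 * a + 2 * j + 3) by omega)]
  split_ifs <;> first | omega | rfl

lemma main_aux (a j : ℕ) (q : ℝ) (h0 : 0 < q) (h1 : q < 1) :
    HasSum (fun k : ℕ => (chiL (a + j + 2) a k : ℝ) *
      q ^ ((k : ℝ) ^ 2 / (4 * (2 * ((a + j + 2 : ℕ) : ℝ) - 1))))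
    (q ^ ((((a + j + 2 : ℕ) : ℝ) - a - 1) ^ 2 / (2 * ((a + j + 2 : ℕ) : ℝ) - 1)) *
      ∑' r : ℕ, (q ^ ((2 * a + 2 * j + 3) * r ^ 2 + 2 * (j + 1) * r) -
        q ^ ((2 * a + 2 * j + 3) * r ^ 2 + (4 * a + 2 * j + 4) * r + (2 * a + 1)))) := by
  have hgeo := summable_geometric_of_lt_one h0.le h1
  have s1 : Summable fun r : ℕ => q ^ ((2 * a + 2 * j + 3) * r ^ 2 + 2 * (j + 1) * r) := by
    refine Summable.of_nonneg_of_le (fun _ => by positivity) (fun r => ?_) hgeo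
    apply pow_le_pow_of_le_one h0.le h1.le
    have : 0 ≤ (2 * a + 2 * j + 3) * r ^ 2 := Nat.zero_le _
    nlinarith [Nat.zero_le (j * r)]
  have s2 : Summable fun r : ℕ =>
      q ^ ((2 * a + 2 * j + 3) * r ^ 2 + (4 * a + 2 * j + 4) * r + (2 * a + 1)) := by
    refine Summable.of_nonneg_of_le (fun _ => by positivity) (fun r => ?_) hgeo
    apply pow_le_pow_of_le_one h0.le h1.le
    have : 0 ≤ (2 * a + 2 * j + 3) * r ^ 2 := Nat.zero_le _
    nlinarith [Nat.zero_le (j * r), Nat.zero_le (a * r)]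
  have hP : (2 * ((a + j + 2 : ℕ) : ℝ) - 1) = 2 * a + 2 * j + 3 := by push_cast; ring
  have hP0 : (2 * (a : ℝ) + 2 * j + 3) ≠ 0 := by positivity
  have hJ : (((a + j + 2 : ℕ) : ℝ) - a - 1) = j + 1 := by push_cast; ring
  rw [hP, hJ, s1.tsum_sub s2, mul_sub]
  set c := q ^ (((j : ℝ) + 1) ^ 2 / (2 * a + 2 * j + 3)) with hc
  have r1 := hasSum_residue (fun k => q ^ ((k : ℝ) ^ 2 / (4 * (2 * a + 2 * j + 3))))
    (2 * (2 * a + 2 * j + 3)) (2 * (j + 1)) (by omega) _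
    (hasSum_of_eq (fun r => ?_) (s1.hasSum.mul_left c))
  have r2 := hasSum_residue (fun k => q ^ ((k : ℝ) ^ 2 / (4 * (2 * a + 2 * j + 3))))
    (2 * (2 * a + 2 * j + 3)) (2 * (2 * a + j + 2)) (by omega) _
    (hasSum_of_eq (fun r => ?_) (s2.hasSum.mul_left c))
  · refine hasSum_of_eq (fun k => ?_) (r1.sub r2)
    rw [chi_eq]
    split_ifs <;> simp
  · rw [hc, ← Real.rpow_natCast q, ← Real.rpow_add h0]
    congr 1
    push_cast
    field_simp
    ring
  · rw [hc, ← Real.rpow_natCast q, ← Real.rpow_add h0]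
    congr 1
    push_cast
    field_simp
    ring

theorem stmt15 (m a : ℕ) (hm : 2 ≤ m) (ha : a ≤ m - 2) (q : ℝ) (hq0 : 0 < q) (hq1 : q < 1) :
    ((2 * (m : ℂ) - 1) / 2) *
        ((q ^ (((m : ℝ) - a - 1) ^ 2 / (2 * (m : ℝ) - 1)) : ℝ) : ℂ) * L m a (q : ℂ) =
      ((2 * (m : ℂ) - 1) / 2) *
        ∑' k : ℕ, (chiL m a k : ℂ) *
          ((q ^ ((k : ℝ) ^ 2 / (4 * (2 * (m : ℝ) - 1))) : ℝ) : ℂ) := by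
  obtain ⟨j, rfl⟩ : ∃ j, m = a + j + 2 := ⟨m - 2 - a, by omega⟩
  have hL : L (a + j + 2) a (q : ℂ) = _ := (hasSum_L hq0 hq1 a j).tsum_eq
  have hR := (Complex.hasSum_ofReal.2 (main_aux a j q hq0 hq1)).tsum_eq
  rw [mul_assoc, hL]
  congr 1
  rw [← Complex.ofReal_mul, ← hR]
  refine tsum_congr fun k => ?_
  push_cast
  rfl
end

section
/- Let m ≥ 2 and 0 ≤ a ≤ m−2 be integers, and let M, N be coprime integers with N positive. Then lim_{t→0⁺} ((2m−1)/2)·Σ_{k=0}^{∞} χ_{2(2m−1)}^{(a)}(k)·e^{(2πiM/N − t)·k²/(4(2m−1))} = −(1/(8(2m−1)N²))·Σ_{k=0}^{(4m−2)N} k²·χ_{2(2m−1)}^{(a)}(k)·e^{2πiMk²/(4(2m−1)N)}. -/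
open Finset

lemma gs_deriv (s x : ℝ) : HasDerivAt (fun x : ℝ => Real.exp (-s * x ^ 2))
    (-2 * s * x * Real.exp (-s * x ^ 2)) x := by
  have h : HasDerivAt (fun x : ℝ => -s * x ^ 2) (-s * (2 * x)) x := by
    simpa using (hasDerivAt_pow 2 x).const_mul (-s)
  convert h.exp using 1; ring

lemma gs_deriv2 (s x : ℝ) : HasDerivAt (fun x : ℝ => -2 * s * x * Real.exp (-s * x ^ 2))
    ((-2 * s + 4 * s ^ 2 * x ^ 2) * Real.exp (-s * x ^ 2)) x := by
  have h := ((hasDerivAt_id' x).const_mul (-2 * s)).fun_mul (gs_deriv s x)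
  refine h.congr_deriv ?_
  ring

lemma gs_bound2 (s x a : ℝ) (hs : 0 < s) (ha : 0 < a) (hx : a ≤ x) :
    |(-2 * s + 4 * s ^ 2 * x ^ 2) * Real.exp (-s * x ^ 2)| ≤ 10 / a ^ 2 := by
  have hx0 : 0 < x := lt_of_lt_of_le ha hx
  have hy : 0 < s * x ^ 2 := by positivity
  have h1 := Real.quadratic_le_exp_of_nonneg hy.le
  have he := Real.exp_pos (s * x ^ 2)
  have e : Real.exp (-s * x ^ 2) = (Real.exp (s * x ^ 2))⁻¹ := by
    rw [← Real.exp_neg]; ring_nf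
  have hax : a ^ 2 ≤ x ^ 2 := by gcongr
  rw [abs_mul, abs_of_pos (Real.exp_pos _), e, ← div_eq_mul_inv, div_le_div_iff₀ he (by positivity)]
  have h2 : |-2 * s + 4 * s ^ 2 * x ^ 2| ≤ 2 * s + 4 * s ^ 2 * x ^ 2 := by
    rw [abs_le]; constructor <;> nlinarith [mul_pos hs hy]
  calc |-2 * s + 4 * s ^ 2 * x ^ 2| * a ^ 2 ≤ (2 * s + 4 * s ^ 2 * x ^ 2) * x ^ 2 := by gcongr
    _ = 2 * (s * x ^ 2) + 4 * (s * x ^ 2) ^ 2 := by ring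
    _ ≤ _ := by nlinarith

lemma gs_interp (s a r p : ℝ) (hs : 0 < s) (ha : 0 < a) (hr : 0 ≤ r) (hrp : r ≤ p) (hp : 0 < p) :
    |Real.exp (-s * a ^ 2) - Real.exp (-s * (a + r) ^ 2)
      - r / p * (Real.exp (-s * a ^ 2) - Real.exp (-s * (a + p) ^ 2))| ≤ 10 * p ^ 2 / a ^ 2 := by
  rcases hr.eq_or_lt with rfl | hr0
  · simp; positivity
  have mvt : ∀ q : ℝ, 0 < q → ∃ c ∈ Set.Ioo a (a + q), -2 * s * c * Real.exp (-s * c ^ 2) =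
      (Real.exp (-s * (a + q) ^ 2) - Real.exp (-s * a ^ 2)) / (a + q - a) := fun q hq =>
    exists_hasDerivAt_eq_slope (fun x : ℝ => Real.exp (-s * x ^ 2)) _ (by linarith)
      (by fun_prop) (fun x _ => gs_deriv s x)
  obtain ⟨c, hc, h1⟩ := mvt r hr0
  obtain ⟨d, hd, h2⟩ := mvt p hp
  have key := (convex_Icc a (a + p)).norm_image_sub_le_of_norm_hasDerivWithin_le
    (f := fun x : ℝ => -2 * s * x * Real.exp (-s * x ^ 2)) (C := 10 / a ^ 2)
    (fun x hx => (gs_deriv2 s x).hasDerivWithinAt)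
    (fun x hx => gs_bound2 s x a hs ha hx.1) (x := c) (y := d)
    ⟨hc.1.le, by linarith [hc.2]⟩ ⟨hd.1.le, hd.2.le⟩
  simp only [Real.norm_eq_abs] at key
  rw [h1, h2] at key
  rw [add_sub_cancel_left, add_sub_cancel_left] at key
  have hcd : |d - c| ≤ p := by
    rw [abs_le]; constructor <;> linarith [hc.1, hc.2, hd.1, hd.2]
  set A := Real.exp (-s * a ^ 2)
  set B := Real.exp (-s * (a + r) ^ 2)
  set C := Real.exp (-s * (a + p) ^ 2)
  have e : A - B - r / p * (A - C) = r * ((C - A) / p - (B - A) / r) := by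
    field_simp; ring
  rw [e, abs_mul, abs_of_pos hr0]
  calc r * |(C - A) / p - (B - A) / r| ≤ p * (10 / a ^ 2 * p) := by
        gcongr
        exact key.trans (by gcongr)
    _ = _ := by ring

lemma gs_summable (s r : ℝ) (P : ℕ) (hs : 0 < s) (hr : 0 ≤ r) (hP : 0 < P) :
    Summable (fun n : ℕ => Real.exp (-s * ((n : ℝ) * P + r) ^ 2)) := by
  have h : Summable (fun n : ℕ => Real.exp ((n : ℝ) * (-s))) :=
    Real.summable_exp_nat_mul_iff.2 (by linarith)
  refine Summable.of_nonneg_of_le (fun _ => (Real.exp_pos _).le) (fun n => ?_) h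
  apply Real.exp_le_exp.2
  have h1 : (1 : ℝ) ≤ P := by exact_mod_cast hP
  have h2 : (n : ℝ) ≤ (n : ℝ) ^ 2 := by exact_mod_cast Nat.le_self_pow two_ne_zero n
  have h3 : (n : ℝ) ≤ (n : ℝ) * P + r := by
    have := Nat.cast_nonneg (α := ℝ) n
    nlinarith
  have h4 : (n : ℝ) ^ 2 ≤ ((n : ℝ) * P + r) ^ 2 := by gcongr
  nlinarith

lemma gs_tendsto (P r : ℕ) (hP : 0 < P) (hr : r ≤ P) :
    Filter.Tendsto (fun s : ℝ => ∑' n : ℕ, (Real.exp (-s * ((n : ℝ) * P) ^ 2)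
      - Real.exp (-s * ((n : ℝ) * P + r) ^ 2))) (nhdsWithin 0 (Set.Ioi 0))
      (nhds ((r : ℝ) / P)) := by
  have hP' : (0 : ℝ) < P := by exact_mod_cast hP
  have hr' : (r : ℝ) ≤ P := by exact_mod_cast hr
  set h : ℝ → ℕ → ℝ := fun s n => Real.exp (-s * ((n : ℝ) * P) ^ 2)
      - Real.exp (-s * ((n : ℝ) * P + r) ^ 2) - (r : ℝ) / P * (Real.exp (-s * ((n : ℝ) * P) ^ 2)
      - Real.exp (-s * ((n : ℝ) * P + P) ^ 2)) with hh
  have hlim : Filter.Tendsto (fun s : ℝ => ∑' n : ℕ, h s n) (nhdsWithin 0 (Set.Ioi 0))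
      (nhds (∑' n : ℕ, (0 : ℝ))) := by
    apply tendsto_tsum_of_dominated_convergence (bound := fun n : ℕ => 40 * (1 / ((n + 1 : ℕ) : ℝ) ^ 2))
    · exact ((summable_nat_add_iff 1).2 (Real.summable_one_div_nat_pow.2 one_lt_two)).mul_left 40
    · intro n
      have : Continuous (fun s => h s n) := by rw [hh]; fun_prop
      have h0 := this.tendsto 0
      have e : h 0 n = 0 := by simp [hh]
      rw [e] at h0
      exact h0.mono_left nhdsWithin_le_nhds
    · filter_upwards [self_mem_nhdsWithin] with s hs n
      have hs : 0 < s := hs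
      rw [Real.norm_eq_abs]
      rcases Nat.eq_zero_or_pos n with rfl | hn
      · have b : ∀ x : ℝ, 0 < Real.exp (-s * x ^ 2) ∧ Real.exp (-s * x ^ 2) ≤ 1 := fun x =>
          ⟨Real.exp_pos _, Real.exp_le_one_iff.2 (by nlinarith [sq_nonneg x])⟩
        have q1 : (r : ℝ) / P ≤ 1 := (div_le_one hP').2 hr'
        have q0 : 0 ≤ (r : ℝ) / P := by positivity
        have b1 := b r
        have b2 := b P
        simp only [hh]
        norm_num
        simp only [neg_mul] at b1 b2
        rw [abs_le]; constructor <;> nlinarith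
      · have hn' : (1 : ℝ) ≤ n := by exact_mod_cast hn
        refine (gs_interp s (n * P) r P hs (by positivity) (by positivity) hr' hP').trans ?_
        rw [mul_pow, mul_div_mul_right _ _ (by positivity)]
        push_cast
        rw [mul_one_div, div_le_div_iff₀ (by positivity) (by positivity)]
        nlinarith
  rw [tsum_zero] at hlim
  have := hlim.add_const ((r : ℝ) / P)
  rw [zero_add] at this
  refine this.congr' ?_
  filter_upwards [self_mem_nhdsWithin] with s hs
  have hs : 0 < s := hs
  have s0 := gs_summable s 0 P hs le_rfl hP
  simp only [add_zero] at s0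
  have s1 := gs_summable s r P hs (by positivity) hP
  have s2 := gs_summable s P P hs (by positivity) hP
  have e2 : ∑' n : ℕ, (Real.exp (-s * ((n : ℝ) * P) ^ 2)
      - Real.exp (-s * ((n : ℝ) * P + P) ^ 2)) = 1 := by
    rw [s0.tsum_sub s2, s0.tsum_eq_zero_add]
    have : ∀ n : ℕ, ((n + 1 : ℕ) : ℝ) * P = n * P + P := fun n => by push_cast; ring
    simp only [this]
    simp
  simp only [hh]
  rw [(s0.sub s1).tsum_sub ((s0.sub s2).mul_left _), tsum_mul_left, e2]
  ring

lemma per_tendsto (P : ℕ) (hP : 0 < P) (f : ℕ → ℂ) (hf : ∀ k, f (k + P) = f k)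
    (h0 : ∑ k ∈ range P, f k = 0) :
    Filter.Tendsto (fun s : ℝ => ∑' k : ℕ, f k * (Real.exp (-s * (k : ℝ) ^ 2) : ℝ))
      (nhdsWithin 0 (Set.Ioi 0)) (nhds (-(∑ k ∈ range P, k * f k) / P)) := by
  have hmul : ∀ n r, f (n * P + r) = f r := by
    intro n r
    induction n with
    | zero => simp
    | succ n ih => rw [← ih, ← hf (n * P + r)]; congr 1; ring
  have hlim : Filter.Tendsto (fun s : ℝ => ∑ r ∈ range P, -f r *
      ((∑' n : ℕ, (Real.exp (-s * ((n : ℝ) * P) ^ 2)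
      - Real.exp (-s * ((n : ℝ) * P + r) ^ 2)) : ℝ) : ℂ)) (nhdsWithin 0 (Set.Ioi 0))
      (nhds (∑ r ∈ range P, -f r * (((r : ℝ) / P : ℝ) : ℂ))) := by
    apply tendsto_finsetSum
    intro r hr
    apply Filter.Tendsto.const_mul
    exact (Complex.continuous_ofReal.tendsto _).comp (gs_tendsto P r hP (mem_range.1 hr).le)
  have e : ∑ r ∈ range P, -f r * (((r : ℝ) / P : ℝ) : ℂ) = -(∑ k ∈ range P, k * f k) / P := by
    rw [← Finset.sum_neg_distrib, Finset.sum_div]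
    refine Finset.sum_congr rfl fun r _ => ?_
    push_cast; ring
  rw [e] at hlim
  refine hlim.congr' ?_
  filter_upwards [self_mem_nhdsWithin] with s hs
  have hs : 0 < s := hs
  have s0 := gs_summable s 0 P hs le_rfl hP
  simp only [add_zero] at s0
  have : NeZero P := ⟨hP.ne'⟩
  have hsum : Summable (fun k : ℕ => f k * (Real.exp (-s * (k : ℝ) ^ 2) : ℝ)) := by
    have h1 := gs_summable s 0 1 hs le_rfl one_pos
    simp only [Nat.cast_one, mul_one, add_zero] at h1
    refine Summable.of_norm_bounded (h1.mul_left (∑ j ∈ range P, ‖f j‖)) fun k => ?_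
    rw [norm_mul, Complex.norm_real, Real.norm_of_nonneg (Real.exp_pos _).le]
    gcongr
    have hk : f k = f (k % P) := by
      conv_lhs => rw [← Nat.div_add_mod' k P]
      exact hmul _ _
    rw [hk]
    exact Finset.single_le_sum (f := fun j => ‖f j‖) (fun _ _ => norm_nonneg _)
      (mem_range.2 (Nat.mod_lt _ hP))
  have hs' := hsum
  rw [← (Nat.divModEquiv P).symm.summable_iff] at hs'
  have hs2 := (Equiv.prodComm (Fin P) ℕ).summable_iff.2 hs'
  simp only [Function.comp_def] at hs2
  rw [← (Nat.divModEquiv P).symm.tsum_eq, ← (Equiv.prodComm (Fin P) ℕ).tsum_eq,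
    Summable.tsum_prod' hs2 (fun r => hs2.prod_factor r), tsum_fintype]
  · rw [Finset.sum_range]
    have e3 : ∀ r : Fin P, ∑' n : ℕ, f (n * P + r) * (Real.exp (-s * ((n * P + r : ℕ) : ℝ) ^ 2) : ℝ)
        = f r * ((∑' n : ℕ, Real.exp (-s * ((n : ℝ) * P + (r : ℕ)) ^ 2) : ℝ) : ℂ) := by
      intro r
      simp only [hmul]
      rw [tsum_mul_left, Complex.ofReal_tsum]
      push_cast
      rfl
    simp only [Equiv.prodComm_apply, Prod.swap_prod_mk, Nat.divModEquiv_symm_apply]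
    rw [Finset.sum_congr rfl fun r _ => e3 r]
    rw [Finset.sum_congr rfl fun (r : Fin P) _ => by
      rw [s0.tsum_sub (gs_summable s (r : ℕ) P hs (by positivity) hP), Complex.ofReal_sub, mul_sub]]
    rw [Finset.sum_sub_distrib, ← Finset.sum_mul, Finset.sum_neg_distrib, ← Finset.sum_range (f := f), h0]
    simp

lemma chi_per (m a : ℕ) (k j : ℤ) : chiL m a (k + 2 * (2 * m - 1) * j) = chiL m a k := by
  unfold chiL
  rw [Int.add_mul_emod_self_left]

lemma chi_odd (m a : ℕ) (hm : 2 ≤ m) (ha : a ≤ m - 2) (k : ℤ) : chiL m a (-k) = -chiL m a k := by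
  have ha' : (a : ℤ) + 2 ≤ m := by omega
  have E : ∀ x y : ℤ, (x % (2 * (2 * m - 1)) = y % (2 * (2 * m - 1))) ↔
      (2 * (2 * (m : ℤ) - 1)) ∣ y - x := fun x y => Int.modEq_iff_dvd
  unfold chiL
  simp only [E]
  have e1 : (2 * (2 * (m : ℤ) - 1)) ∣ 2 * ((m : ℤ) - a - 1) - -k ↔
      (2 * (2 * (m : ℤ) - 1)) ∣ 2 * ((m : ℤ) + a) - k := by
    rw [← dvd_sub_right (dvd_refl (2 * (2 * (m : ℤ) - 1)))]
    ring_nf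
  have e2 : (2 * (2 * (m : ℤ) - 1)) ∣ 2 * ((m : ℤ) + a) - -k ↔
      (2 * (2 * (m : ℤ) - 1)) ∣ 2 * ((m : ℤ) - a - 1) - k := by
    rw [← dvd_sub_right (dvd_refl (2 * (2 * (m : ℤ) - 1)))]
    ring_nf
  have ex : ¬ ((2 * (2 * (m : ℤ) - 1)) ∣ 2 * ((m : ℤ) - a - 1) - k ∧
      (2 * (2 * (m : ℤ) - 1)) ∣ 2 * ((m : ℤ) + a) - k) := by
    rintro ⟨h1, h2⟩
    have h3 := dvd_sub h2 h1
    have := Int.le_of_dvd (by linarith) h3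
    linarith
  simp only [e1, e2]
  split_ifs <;> simp_all

lemma chi_even (m a : ℕ) (k : ℤ) (h : chiL m a k ≠ 0) : ∃ j, k = 2 * j := by
  have E : ∀ x y : ℤ, (x % (2 * (2 * m - 1)) = y % (2 * (2 * m - 1))) ↔
      (2 * (2 * (m : ℤ) - 1)) ∣ y - x := fun x y => Int.modEq_iff_dvd
  unfold chiL at h
  simp only [E] at h
  split_ifs at h with h1 h2
  · obtain ⟨c, hc⟩ := h1
    exact ⟨((m : ℤ) - a - 1) - (2 * m - 1) * c, by linarith⟩
  · obtain ⟨c, hc⟩ := h2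
    exact ⟨((m : ℤ) + a) - (2 * m - 1) * c, by linarith⟩
  · simp at h

/-- the periodic odd coefficient -/
noncomputable def coefF (m a : ℕ) (M : ℤ) (N : ℕ) (k : ℤ) : ℂ :=
  (chiL m a k : ℂ) * Complex.exp (2 * Real.pi * Complex.I * M * (k : ℂ) ^ 2 /
              (4 * (2 * (m : ℂ) - 1) * N))

lemma coefF_odd (m a : ℕ) (hm : 2 ≤ m) (ha : a ≤ m - 2) (M : ℤ) (N : ℕ) (k : ℤ) :
    coefF m a M N (-k) = -coefF m a M N k := by
  unfold coefF
  rw [chi_odd m a hm ha]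
  push_cast
  rw [neg_sq, neg_mul]

lemma mC_ne (m : ℕ) : (2 * (m : ℂ) - 1) ≠ 0 := by
  have : (2 * (m : ℤ) - 1) ≠ 0 := by omega
  exact_mod_cast this

lemma coefF_per (m a : ℕ) (M : ℤ) (N : ℕ) (hN : 0 < N) (k : ℤ) :
    coefF m a M N (k + 2 * (2 * m - 1) * N) = coefF m a M N k := by
  unfold coefF
  rw [chi_per]
  by_cases h : chiL m a k = 0
  · simp [h]
  obtain ⟨j, rfl⟩ := chi_even m a k h
  congr 1
  rw [Complex.exp_eq_exp_iff_exists_int]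
  refine ⟨M * (2 * j + (2 * m - 1) * N), ?_⟩
  have h1 := mC_ne m
  have h2 : (N : ℂ) ≠ 0 := by exact_mod_cast hN.ne'
  push_cast
  field_simp
  ring

theorem stmt16 (m a : ℕ) (hm : 2 ≤ m) (ha : a ≤ m - 2) (M : ℤ) (N : ℕ) (hN : 0 < N)
    (hMN : IsCoprime M (N : ℤ)) :
    Filter.Tendsto
      (fun t : ℝ => ((2 * (m : ℂ) - 1) / 2) *
        ∑' k : ℕ, (chiL m a k : ℂ) *
          Complex.exp ((2 * Real.pi * Complex.I * M / N - t) *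
            ((k : ℂ) ^ 2 / (4 * (2 * (m : ℂ) - 1)))))
      (nhdsWithin 0 (Set.Ioi 0))
      (nhds (-(1 / (8 * (2 * (m : ℂ) - 1) * (N : ℂ) ^ 2)) *
        ∑ k ∈ Finset.range ((4 * m - 2) * N + 1),
          (k : ℂ) ^ 2 * (chiL m a k : ℂ) *
            Complex.exp (2 * Real.pi * Complex.I * M * (k : ℂ) ^ 2 /
              (4 * (2 * (m : ℂ) - 1) * N)))) := by
  have h1 := mC_ne m
  have h2 : (N : ℂ) ≠ 0 := by exact_mod_cast hN.ne'
  obtain ⟨P, hPdef⟩ : ∃ P, P = (4 * m - 2) * N := ⟨_, rfl⟩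
  have hP : 0 < P := by rw [hPdef]; exact Nat.mul_pos (by omega) hN
  have hPZ : (P : ℤ) = 2 * (2 * m - 1) * N := by
    rw [hPdef]; push_cast [Nat.cast_sub (show 2 ≤ 4 * m by omega)]; ring
  have hPC : (P : ℂ) = 2 * (2 * m - 1) * N := by exact_mod_cast hPZ
  have hLpos : (0 : ℝ) < 4 * (2 * m - 1) := by
    have : (2 : ℝ) ≤ m := by exact_mod_cast hm
    linarith
  obtain ⟨f, hfdef⟩ : ∃ f : ℕ → ℂ, f = fun k : ℕ => coefF m a M N k := ⟨_, rfl⟩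
  have hper : ∀ k, f (k + P) = f k := by
    intro k
    simp only [hfdef]
    push_cast
    rw [hPZ, coefF_per m a M N hN]
  have hrefl : ∀ k ≤ P, f (P - k) = -f k := by
    intro k hk
    simp only [hfdef]
    rw [Nat.cast_sub hk, ← coefF_odd m a hm ha, ← coefF_per m a M N hN (-k), ← hPZ]
    congr 1; ring
  have f0 : f 0 = 0 := by
    have := coefF_odd m a hm ha M N 0
    simp only [neg_zero] at this
    simp only [hfdef, Nat.cast_zero]
    exact self_eq_neg.1 this
  have fP : f P = 0 := by rw [← f0, ← hper 0, zero_add]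
  have hR : ∀ w : ℕ → ℂ, ∑ k ∈ range (P + 1), w k * f k =
      -∑ k ∈ range (P + 1), w (P - k) * f k := by
    intro w
    rw [← Finset.sum_range_reflect, ← Finset.sum_neg_distrib]
    refine Finset.sum_congr rfl fun k hk => ?_
    rw [Nat.add_sub_cancel, hrefl k (Nat.lt_succ_iff.1 (mem_range.1 hk)), mul_neg]
  have hS0 : ∑ k ∈ range (P + 1), f k = 0 := by
    have := hR (fun _ => 1)
    simp only [one_mul] at this
    exact self_eq_neg.1 this
  have hS0' : ∑ k ∈ range P, f k = 0 := by
    rwa [Finset.sum_range_succ, fP, add_zero] at hS0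
  have hS2 : ∑ k ∈ range (P + 1), (k : ℂ) ^ 2 * f k = P * ∑ k ∈ range P, (k : ℂ) * f k := by
    have e1 : ∑ k ∈ range (P + 1), (k : ℂ) * f k = ∑ k ∈ range P, (k : ℂ) * f k := by
      rw [Finset.sum_range_succ, fP, mul_zero, add_zero]
    have h := hR (fun k => (k : ℂ) ^ 2)
    have e2 : ∑ k ∈ range (P + 1), ((P - k : ℕ) : ℂ) ^ 2 * f k =
        (P : ℂ) ^ 2 * ∑ k ∈ range (P + 1), f k - 2 * P * ∑ k ∈ range (P + 1), (k : ℂ) * f k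
          + ∑ k ∈ range (P + 1), (k : ℂ) ^ 2 * f k := by
      rw [Finset.mul_sum, Finset.mul_sum, ← Finset.sum_sub_distrib, ← Finset.sum_add_distrib]
      refine Finset.sum_congr rfl fun k hk => ?_
      rw [Nat.cast_sub (Nat.lt_succ_iff.1 (mem_range.1 hk))]
      ring
    rw [e2, hS0, e1] at h
    linear_combination h / 2
  have hlim := per_tendsto P hP f hper hS0'
  have hscale : Filter.Tendsto (fun t : ℝ => t / (4 * (2 * m - 1)))
      (nhdsWithin 0 (Set.Ioi 0)) (nhdsWithin 0 (Set.Ioi 0)) := by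
    apply tendsto_nhdsWithin_of_tendsto_nhds_of_eventually_within
    · have : Continuous (fun t : ℝ => t / (4 * (2 * m - 1))) := by fun_prop
      have h := this.tendsto 0
      rw [zero_div] at h
      exact h.mono_left nhdsWithin_le_nhds
    · filter_upwards [self_mem_nhdsWithin] with t ht
      exact div_pos ht hLpos
  have hfin := (hlim.comp hscale).const_mul ((2 * (m : ℂ) - 1) / 2)
  rw [← hPdef]
  have erhs : ∑ k ∈ range (P + 1), (k : ℂ) ^ 2 * (chiL m a k : ℂ) *
            Complex.exp (2 * Real.pi * Complex.I * M * (k : ℂ) ^ 2 /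
              (4 * (2 * (m : ℂ) - 1) * N)) = ∑ k ∈ range (P + 1), (k : ℂ) ^ 2 * f k := by
    refine Finset.sum_congr rfl fun k _ => ?_
    simp only [hfdef, coefF]
    push_cast
    ring
  rw [erhs, hS2]
  convert hfin using 2
  · rename_i t
    simp only [Function.comp]
    congr 1
    refine tsum_congr fun k => ?_
    simp only [hfdef, coefF]
    rw [mul_assoc (chiL m a k : ℂ), Complex.ofReal_exp, ← Complex.exp_add]
    congr 2
    push_cast
    field_simp
    ring
  · rw [hPC]
    field_simp
    ring
end

section
/- Let m ≥ 2 be an integer and let q be a primitive Nth root of unity with N odd. Then Σ_{n_1,…,n_{2m−3}=0}^{N−1} (−1)^{n_{2m−3}} q^{n_{2m−3}(n_{2m−3}+1)/2 + n_1² + ⋯ + n_{2m−4}² + n_1 + ⋯ + n_{2m−4}} ∏_{i=1}^{2m−4} [n_{i+1} choose n_i]_q = 2·Σ_{n_1,…,n_{m−1}=0}^{N−1} (−1)^{n_{m−1}} q^{n_{m−1}(n_{m−1}+1) + 2n_1² + 2n_1 + ⋯ + 2n_{m−2}² + 2n_{m−2}} · (q;q²)_{n_1}/(−q;q)_{2n_1+1}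 · ∏_{i=1}^{m−2} [n_{i+1} choose n_i]_{q²}. -/
open Finset

/-- The general term of Hikami's multi-sum with `a = 0`: here `n j` denotes `n_{j+1}`
(0-based indexing). -/
noncomputable def Sterm (m a : ℕ) (q : ℂ) (n : ℕ → ℕ) : ℂ :=
  (-1) ^ (n (m - 2)) *
    q ^ (n (m - 2) * (n (m - 2) + 1) / 2 + (∑ j ∈ Finset.range (m - 2), (n j) ^ 2) +
        ∑ j ∈ Finset.Ico a (m - 2), n j) *
    ∏ i ∈ Finset.range (m - 2), qBinom q (n (i + 1) + if i + 1 = a then 1 else 0) (n i)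


namespace Stmt19Aux

/-- Gaussian polynomial, defined by the Pascal recursion. -/
noncomputable def gb (q : ℂ) : ℕ → ℕ → ℂ
  | _, 0 => 1
  | 0, _ + 1 => 0
  | n + 1, k + 1 => gb q n k + q ^ (k + 1) * gb q n (k + 1)

lemma gb_zero_right (q : ℂ) (n : ℕ) : gb q n 0 = 1 := by cases n <;> simp [gb]

lemma gb_succ (q : ℂ) (n k : ℕ) :
    gb q (n + 1) (k + 1) = gb q n k + q ^ (k + 1) * gb q n (k + 1) := by simp [gb]

lemma gb_eq_zero (q : ℂ) : ∀ n k : ℕ, n < k → gb q n k = 0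
  | 0, 0, h => by omega
  | 0, k + 1, _ => by simp [gb]
  | n + 1, 0, h => by omega
  | n + 1, k + 1, h => by
    rw [gb_succ, gb_eq_zero q n k (by omega), gb_eq_zero q n (k + 1) (by omega)]; simp

lemma gb_self (q : ℂ) (n : ℕ) : gb q n n = 1 := by
  induction n with
  | zero => simp [gb]
  | succ n ih => rw [gb_succ, ih, gb_eq_zero q n (n + 1) (by omega)]; simp

lemma qPoch_succ (x q : ℂ) (n : ℕ) : qPoch x q (n + 1) = qPoch x q n * (1 - x * q ^ n) := by
  simp [qPoch, Finset.prod_range_succ]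

lemma qPoch_zero (x q : ℂ) : qPoch x q 0 = 1 := by simp [qPoch]

lemma gb_mul (q : ℂ) : ∀ n k : ℕ,
    gb q (n + k) k * (qPoch q q n * qPoch q q k) = qPoch q q (n + k)
  | n, 0 => by simp [gb_zero_right, qPoch_zero]
  | 0, k + 1 => by simp [gb_self, qPoch_zero]
  | n + 1, k + 1 => by
    have h1 := gb_mul q (n + 1) k
    have h2 := gb_mul q n (k + 1)
    have e : n + 1 + (k + 1) = (n + k + 1) + 1 := by ring
    rw [e, gb_succ]
    rw [show n + 1 + k = n + k + 1 by ring] at h1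
    rw [show n + (k + 1) = n + k + 1 by ring] at h2
    rw [qPoch_succ q q (n + k + 1)]
    have h3 : qPoch q q (n + 1) = qPoch q q n * (1 - q * q ^ n) := qPoch_succ _ _ _
    have h4 : qPoch q q (k + 1) = qPoch q q k * (1 - q * q ^ k) := qPoch_succ _ _ _
    rw [h3] at h1 ⊢
    rw [h4] at h2 ⊢
    ring_nf at h1 h2 ⊢
    linear_combination (1 - q * q ^ k) * h1 + q * q ^ k * (1 - q * q ^ n) * h2
termination_by n k => n + k

lemma absorb (q : ℂ) : ∀ n i : ℕ,
    (1 - q ^ (i + 1)) * gb q (n + 1) (i + 1) = (1 - q ^ (n + 1)) * gb q n i := by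
  intro n
  induction n with
  | zero =>
    intro i
    cases i with
    | zero => simp [gb]
    | succ j => simp [gb]
  | succ n ih =>
    intro i
    cases i with
    | zero =>
      have h := ih 0
      rw [gb_succ, gb_zero_right]
      rw [gb_zero_right] at h
      simp only [zero_add, pow_one] at *
      linear_combination q * h
    | succ j =>
      have h1 := ih j
      have h2 := ih (j + 1)
      have e : gb q (n + 1) (j + 1) = gb q n j + q ^ (j + 1) * gb q n (j + 1) := gb_succ _ _ _
      rw [gb_succ q (n + 1) (j + 1)]
      linear_combination q ^ (j + 2) * h2 + q * h1 - q * (1 - q ^ (n + 1)) * e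

lemma pascal_sum (q : ℂ) (a : ℕ → ℂ) (p : ℕ) :
    ∑ i ∈ range (p + 2), a i * gb q (p + 1) i
      = ∑ i ∈ range (p + 1), (a (i + 1) + a i * q ^ i) * gb q p i := by
  have h : ∑ i ∈ range (p + 1), a i * q ^ i * gb q p i
      = ∑ i ∈ range (p + 1), a (i + 1) * q ^ (i + 1) * gb q p (i + 1) + a 0 := by
    have := Finset.sum_range_succ (fun i => a i * q ^ i * gb q p i) (p + 1)
    rw [Finset.sum_range_succ', gb_eq_zero q p (p + 1) (by omega)] at this
    simp only [gb_zero_right] at this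
    linear_combination -this
  rw [Finset.sum_range_succ', gb_zero_right]
  simp only [add_mul, Finset.sum_add_distrib, h]
  rw [mul_one, ← add_assoc, ← Finset.sum_add_distrib]
  congr 1
  apply Finset.sum_congr rfl
  intro i _
  rw [gb_succ]; ring

/-- Triangular numbers. -/
def tri (k : ℕ) : ℕ := k * (k + 1) / 2

lemma two_tri (k : ℕ) : 2 * tri k = k * (k + 1) :=
  Nat.mul_div_cancel' (Nat.even_mul_succ_self k).two_dvd

lemma tri_add (k i : ℕ) : tri (k + i) = tri k + tri i + k * i := by
  have h1 := two_tri k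
  have h2 := two_tri i
  have h3 := two_tri (k + i)
  nlinarith

lemma tri_succ (k : ℕ) : tri (k + 1) = tri k + (k + 1) := by
  rw [tri_add]; simp [tri]; ring

lemma qbinom_thm (q : ℂ) (p : ℕ) : ∀ x : ℂ,
    ∑ i ∈ range (p + 1), q ^ tri i * x ^ i * gb q p i = ∏ j ∈ range p, (1 + x * q ^ (j + 1)) := by
  induction p with
  | zero => intro x; simp [tri, gb]
  | succ p ih =>
    intro x
    rw [pascal_sum, Finset.prod_range_succ']
    have h := ih (x * q)
    have e : ∏ j ∈ range p, (1 + x * q ^ (j + 1 + 1)) = ∏ j ∈ range p, (1 + x * q * q ^ (j + 1)) :=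
      Finset.prod_congr rfl (fun j _ => by ring)
    rw [e, ← h, Finset.sum_mul]
    apply Finset.sum_congr rfl
    intro i _
    rw [tri_succ]; ring

lemma sum_one (Q x : ℂ) (n : ℕ) :
    ∑ k ∈ range (n + 1), x ^ (n - k) * qPoch x Q k * gb Q n k = 1 := by
  induction n with
  | zero => simp [qPoch, gb]
  | succ n ih =>
    rw [pascal_sum]
    rw [← ih]
    apply Finset.sum_congr rfl
    intro i hi
    have hi' : i ≤ n := by simpa [Nat.lt_succ_iff] using hi
    rw [show n + 1 - i = (n - i) + 1 by omega, show n + 1 - (i + 1) = n - i by omega, qPoch_succ]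
    ring

/-- `(-q;q)_n` -/
noncomputable def P (q : ℂ) (n : ℕ) : ℂ := qPoch (-q) q n

lemma P_zero (q : ℂ) : P q 0 = 1 := by simp [P, qPoch]
lemma P_succ (q : ℂ) (n : ℕ) : P q (n + 1) = P q n * (1 + q ^ (n + 1)) := by
  rw [P, P, qPoch_succ]; ring

lemma P_add (q : ℂ) (k p : ℕ) :
    P q (k + p) = P q k * ∏ j ∈ range p, (1 + q ^ k * q ^ (j + 1)) := by
  induction p with
  | zero => simp
  | succ p ih => rw [← add_assoc, P_succ, ih, Finset.prod_range_succ]; ring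

lemma F_sq (q : ℂ) (n : ℕ) : qPoch (q ^ 2) (q ^ 2) n = qPoch q q n * P q n := by
  induction n with
  | zero => simp [qPoch, P]
  | succ n ih => rw [qPoch_succ, qPoch_succ, P_succ, ih]; ring

lemma P_double (q : ℂ) (k : ℕ) :
    P q (2 * k + 1) = P (q ^ 2) k * qPoch (-q) (q ^ 2) (k + 1) := by
  induction k with
  | zero => simp [P, qPoch]
  | succ k ih =>
    rw [show 2 * (k + 1) + 1 = (2 * k + 1) + 1 + 1 by ring, P_succ, P_succ, ih, P_succ,
      qPoch_succ _ _ (k + 1)]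
    ring

lemma H_sum (q : ℂ) : ∀ p : ℕ, ∑ i ∈ range (p + 1), q ^ i * gb (q ^ 2) p i = P q p
  | 0 => by simp [gb, P, qPoch]
  | 1 => by simp [Finset.sum_range_succ, gb, P, qPoch]
  | p + 2 => by
    have h0 := H_sum q p
    have h1 := H_sum q (p + 1)
    have key : ∑ i ∈ range (p + 2), q ^ i * (1 - (q ^ 2) ^ i) * gb (q ^ 2) (p + 1) i
        = q * (1 - (q ^ 2) ^ (p + 1)) * P q p := by
      rw [Finset.sum_range_succ', ← h0, Finset.mul_sum]
      simp only [pow_zero, sub_self, mul_zero, zero_mul, add_zero]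
      apply Finset.sum_congr rfl
      intro i _
      have := absorb (q ^ 2) p i
      linear_combination q ^ (i + 1) * this
    rw [show p + 2 + 1 = (p + 1) + 2 by ring, pascal_sum]
    have e : ∑ i ∈ range (p + 1 + 1), (q ^ (i + 1) + q ^ i * (q ^ 2) ^ i) * gb (q ^ 2) (p + 1) i
      = (1 + q) * ∑ i ∈ range (p + 2), q ^ i * gb (q ^ 2) (p + 1) i
       - ∑ i ∈ range (p + 2), q ^ i * (1 - (q ^ 2) ^ i) * gb (q ^ 2) (p + 1) i := by
      rw [Finset.mul_sum, ← Finset.sum_sub_distrib]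
      apply Finset.sum_congr rfl
      intro i _; ring
    rw [e, key, h1, P_succ q (p + 1), P_succ q p]
    ring

section root

variable {N : ℕ} {q : ℂ}

lemma F_ne (hq : IsPrimitiveRoot q N) {n : ℕ} (hn : n < N) : qPoch q q n ≠ 0 := by
  rw [qPoch, Finset.prod_ne_zero_iff]
  intro j hj h
  have hj' := Finset.mem_range.1 hj
  have : q ^ (j + 1) = 1 := by linear_combination -h
  exact hq.pow_ne_one_of_pos_of_lt (by omega) (by omega) this

lemma one_add_ne (hq : IsPrimitiveRoot q N) (hN : Odd N) (j : ℕ) : 1 + q ^ j ≠ 0 := by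
  intro h
  have h1 : q ^ j = -1 := by linear_combination h
  have h2 : (q ^ j) ^ N = 1 := by rw [← pow_mul, mul_comm, pow_mul, hq.pow_eq_one, one_pow]
  rw [h1, hN.neg_one_pow] at h2
  norm_num at h2

lemma P_ne (hq : IsPrimitiveRoot q N) (hN : Odd N) (n : ℕ) : P q n ≠ 0 := by
  rw [P, qPoch, Finset.prod_ne_zero_iff]
  intro j _ h
  exact one_add_ne hq hN (j + 1) (by linear_combination h)

lemma sq_prim (hq : IsPrimitiveRoot q N) (hN : Odd N) : IsPrimitiveRoot (q ^ 2) N :=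
  hq.pow_of_coprime 2 (Nat.coprime_two_left.2 hN)

lemma gb_eq (hq : IsPrimitiveRoot q N) {n k : ℕ} (h : n + k < N) :
    gb q (n + k) k = qPoch q q (n + k) / (qPoch q q n * qPoch q q k) := by
  rw [eq_div_iff (mul_ne_zero (F_ne hq (by omega)) (F_ne hq (by omega)))]
  exact gb_mul q n k

lemma qBinom_eq (hq : IsPrimitiveRoot q N) {n k : ℕ} (h : n < N) :
    qBinom q n k = gb q n k := by
  unfold qBinom
  split_ifs with hk
  · obtain ⟨r, rfl⟩ := Nat.exists_eq_add_of_le' hk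
    rw [gb_eq hq h, Nat.add_sub_cancel]
  · rw [gb_eq_zero _ _ _ (by omega)]

lemma gb_trans (hq : IsPrimitiveRoot q N) {k i r : ℕ} (h : k + (i + r) < N) :
    gb q (k + (i + r)) (k + i) * gb q (k + i) k = gb q (k + (i + r)) k * gb q (i + r) i := by
  have e1 := gb_eq hq (n := r) (k := k + i) (by omega)
  have e2 := gb_eq hq (n := i) (k := k) (by omega)
  have e3 := gb_eq hq (n := i + r) (k := k) (by omega)
  have e4 := gb_eq hq (n := r) (k := i) (by omega)
  rw [show r + (k + i) = k + (i + r) by ring] at e1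
  rw [show i + k = k + i by ring] at e2
  rw [show i + r + k = k + (i + r) by ring] at e3
  rw [show r + i = i + r by ring] at e4
  rw [e1, e2, e3, e4]
  have f1 := F_ne hq (n := k) (by omega)
  have f2 := F_ne hq (n := i) (by omega)
  have f3 := F_ne hq (n := r) (by omega)
  have f4 := F_ne hq (n := k + i) (by omega)
  have f5 := F_ne hq (n := i + r) (by omega)
  field_simp

lemma gb_symm (hq : IsPrimitiveRoot q N) {i r : ℕ} (h : i + r < N) :
    gb q (i + r) i = gb q (i + r) r := by
  have e1 := gb_eq hq (n := r) (k := i) (by omega)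
  have e2 := gb_eq hq (n := i) (k := r) (by omega)
  rw [show r + i = i + r by ring] at e1
  rw [e1, e2, mul_comm (qPoch q q r)]

lemma gb_top (hq : IsPrimitiveRoot q N) {k : ℕ} (h : k + 1 < N) : gb q N (k + 1) = 0 := by
  obtain ⟨r, hr⟩ := Nat.exists_eq_add_of_lt h
  have h1 := gb_mul q (r + 1) (k + 1)
  have hN : r + 1 + (k + 1) = N := by omega
  rw [hN] at h1
  have h2 : qPoch q q N = 0 := by
    have : N = (N - 1) + 1 := by omega
    rw [this, qPoch_succ, ← pow_succ', ← this, hq.pow_eq_one]; simp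
  rw [h2] at h1
  rcases mul_eq_zero.1 h1 with h | h
  · exact h
  · exact absurd h (mul_ne_zero (F_ne hq (by omega)) (F_ne hq (by omega)))

lemma z_sum (hq : IsPrimitiveRoot q N) (z : ℂ) (k : ℕ) (hk : k < N) :
    (∑ n ∈ range N, z ^ n * gb q n k) * qPoch z q (k + 1) = z ^ k * (1 - z ^ N) := by
  induction k with
  | zero =>
    simp only [gb_zero_right, qPoch, zero_add, Finset.prod_range_one, pow_zero, mul_one, one_mul]
    exact geom_sum_mul_neg z N
  | succ k ih =>
    have ih := ih (by omega)
    have h1 : ∑ n ∈ range N, z ^ (n + 1) * gb q (n + 1) (k + 1)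
        = ∑ n ∈ range N, z ^ n * gb q n (k + 1) := by
      have := Finset.sum_range_succ (fun n => z ^ n * gb q n (k + 1)) N
      rw [Finset.sum_range_succ', gb_top hq hk, gb_eq_zero q 0 (k + 1) (by omega)] at this
      simpa using this
    have h2 : ∑ n ∈ range N, z ^ (n + 1) * gb q (n + 1) (k + 1)
        = z * ∑ n ∈ range N, z ^ n * gb q n k
          + z * q ^ (k + 1) * ∑ n ∈ range N, z ^ n * gb q n (k + 1) := by
      rw [Finset.mul_sum, Finset.mul_sum, ← Finset.sum_add_distrib]
      apply Finset.sum_congr rfl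
      intro n _
      rw [gb_succ]; ring
    rw [h1] at h2
    rw [qPoch_succ]
    linear_combination z * ih + qPoch z q (k + 1) * h2

lemma reidx (f : ℕ → ℂ) {k p : ℕ} (h : k + p < N) (h1 : ∀ j, j < k → f j = 0)
    (h2 : ∀ j, k + p < j → f j = 0) :
    ∑ j ∈ range N, f j = ∑ i ∈ range (p + 1), f (k + i) := by
  have := Finset.sum_Ico_eq_sum_range f k (k + p + 1)
  rw [show k + p + 1 - k = p + 1 by omega] at this
  rw [← this]
  symm
  apply Finset.sum_subset
  · intro j hj
    simp only [Finset.mem_Ico, Finset.mem_range] at *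
    omega
  · intro j _ hj
    simp only [Finset.mem_Ico, not_and, not_lt] at hj
    by_cases hjk : j < k
    · exact h1 j hjk
    · exact h2 j (by have := hj (by omega); omega)

lemma fin_sum {F : Fin N → ℂ} (f : ℕ → ℂ) (h : ∀ j : Fin N, F j = f j) :
    ∑ j, F j = ∑ j ∈ range N, f j := by
  rw [Finset.sum_range]
  exact Finset.sum_congr rfl (fun j _ => h j)

variable (N) in
/-- half-step matrix -/
noncomputable def S (q : ℂ) : Matrix (Fin N) (Fin N) ℂ :=
  Matrix.of fun n k => P q k * q ^ tri k * gb q n k / P q n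

variable (N) in
/-- full-step matrix -/
noncomputable def T (q : ℂ) : Matrix (Fin N) (Fin N) ℂ :=
  Matrix.of fun n k => gb q n k * q ^ ((k : ℕ) ^ 2 + k)

variable (N) in
/-- base-change matrix -/
noncomputable def A (q : ℂ) : Matrix (Fin N) (Fin N) ℂ :=
  Matrix.of fun n k => q ^ ((n : ℕ) - k) * P q (2 * k + 1) * gb (q ^ 2) n k / P q n

variable (N) in
/-- row vector -/
noncomputable def y (q : ℂ) : Fin N → ℂ := fun n => (-1) ^ (n : ℕ) * P q n

variable (N) in
/-- row vector -/
noncomputable def w (q : ℂ) : Fin N → ℂ := fun n => (-1) ^ (n : ℕ) * q ^ tri n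

variable (N) in
/-- column vector -/
noncomputable def g (q : ℂ) : Fin N → ℂ := fun n => qPoch q (q ^ 2) n / P q (2 * n + 1)

lemma S_sq (hq : IsPrimitiveRoot q N) (hN : Odd N) : S N q * S N q = T N q := by
  ext n k
  obtain ⟨n, hn⟩ := n
  obtain ⟨k, hk⟩ := k
  rw [Matrix.mul_apply]
  simp only [S, T, Matrix.of_apply]
  let f : ℕ → ℂ := fun j => P q k * q ^ tri k / P q n * (q ^ tri j * (gb q n j * gb q j k))
  have e : ∀ j : Fin N, P q j * q ^ tri j * gb q n j / P q n
      * (P q k * q ^ tri k * gb q j k / P q j)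
      = f j := by
    simp only [f]
    intro j
    have := P_ne hq hN j
    have := P_ne hq hN n
    field_simp
  rw [fin_sum f e]
  simp only [f]
  by_cases hkn : k ≤ n
  · obtain ⟨p, rfl⟩ := Nat.exists_eq_add_of_le hkn
    rw [reidx _ hn (fun j hj => by simp [gb_eq_zero q j k hj])
      (fun j hj => by simp [gb_eq_zero q _ j hj])]
    have e2 : ∀ i ∈ range (p + 1), P q k * q ^ tri k / P q (k + p) *
        (q ^ tri (k + i) * (gb q (k + p) (k + i) * gb q (k + i) k))
        = P q k * q ^ tri k / P q (k + p) * gb q (k + p) k * q ^ tri k *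
          (q ^ tri i * (q ^ k) ^ i * gb q p i) := by
      intro i hi
      obtain ⟨r, rfl⟩ := Nat.exists_eq_add_of_le (Nat.lt_succ_iff.1 (Finset.mem_range.1 hi))
      rw [gb_trans hq hn, tri_add]
      ring
    rw [Finset.sum_congr rfl e2, ← Finset.mul_sum, qbinom_thm, P_add]
    have h1 := P_ne hq hN k
    have h2 := P_ne hq hN (k + p)
    rw [P_add] at h2
    have h3 := right_ne_zero_of_mul h2
    rw [show k ^ 2 + k = tri k + tri k by have := two_tri k; nlinarith]
    rw [pow_add]
    field_simp
  · push Not at hkn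
    rw [gb_eq_zero q n k hkn, zero_mul]
    apply Finset.sum_eq_zero
    intro j _
    by_cases h : j < k
    · simp [gb_eq_zero q j k h]
    · simp [gb_eq_zero q n j (by omega)]

lemma qPoch_add (x q : ℂ) (a b : ℕ) :
    qPoch x q (a + b) = qPoch x q a * qPoch (x * q ^ a) q b := by
  induction b with
  | zero => simp [qPoch]
  | succ b ih => rw [← add_assoc, qPoch_succ, qPoch_succ, ih]; ring

lemma pochQ (q : ℂ) (i : ℕ) : ∀ x : ℂ,
    qPoch (-(x * q)) (q ^ 2) i = ∑ r ∈ range (i + 1), q ^ (r ^ 2) * x ^ r * gb (q ^ 2) i r := by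
  induction i with
  | zero => intro x; simp [qPoch, gb]
  | succ i ih =>
    intro x
    rw [pascal_sum, show qPoch (-(x * q)) (q ^ 2) (i + 1) = qPoch (-(x * q)) (q ^ 2) (1 + i) by
      rw [add_comm], qPoch_add]
    have h := ih (x * q ^ 2)
    rw [show -(x * q) * (q ^ 2) ^ 1 = -(x * q ^ 2 * q) by ring, h, Finset.mul_sum]
    apply Finset.sum_congr rfl
    intro r _
    simp only [qPoch, Finset.prod_range_one]
    ring

lemma gb_PP (hq : IsPrimitiveRoot q N) (hN : Odd N) {s j : ℕ} (h : s + j < N) :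
    gb (q ^ 2) (s + j) j * P q s * P q j = gb q (s + j) j * P q (s + j) := by
  rw [gb_eq hq h, gb_eq (sq_prim hq hN) h]
  simp only [F_sq]
  have := F_ne hq (n := s) (by omega)
  have := F_ne hq (n := j) (by omega)
  have := P_ne hq hN s
  have := P_ne hq hN j
  field_simp

lemma rev_sum (hq : IsPrimitiveRoot q N) (hN : Odd N) {p : ℕ} (hp : p < N) :
    ∑ i ∈ range (p + 1), q ^ (p - i) * gb (q ^ 2) p i = P q p := by
  rw [← H_sum, ← Finset.sum_range_reflect]
  apply Finset.sum_congr rfl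
  intro i hi
  obtain ⟨r, rfl⟩ := Nat.exists_eq_add_of_le (Nat.lt_succ_iff.1 (Finset.mem_range.1 hi))
  rw [show i + r + 1 - 1 - i = r by omega, show i + r - r = i by omega,
    gb_symm (sq_prim hq hN) hp]

lemma x_identity (hq : IsPrimitiveRoot q N) (hN : Odd N) (x : ℂ) {p : ℕ} (hp : p < N) :
    ∑ i ∈ range (p + 1), q ^ (p - i) * qPoch (-(x * q)) (q ^ 2) i * gb (q ^ 2) p i
      = ∑ r ∈ range (p + 1), q ^ (r ^ 2) * x ^ r * (gb (q ^ 2) p r * P q (p - r)) := by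
  have h1 : ∀ i ∈ range (p + 1), q ^ (p - i) * qPoch (-(x * q)) (q ^ 2) i * gb (q ^ 2) p i
      = ∑ r ∈ range (p + 1), q ^ (r ^ 2) * x ^ r *
        (q ^ (p - i) * (gb (q ^ 2) p i * gb (q ^ 2) i r)) := by
    intro i hi
    have hi' := Finset.mem_range.1 hi
    rw [pochQ]
    have : ∑ r ∈ range (i + 1), q ^ (r ^ 2) * x ^ r * gb (q ^ 2) i r
        = ∑ r ∈ range (p + 1), q ^ (r ^ 2) * x ^ r * gb (q ^ 2) i r := by
      apply Finset.sum_subset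
      · intro r hr
        simp only [Finset.mem_range] at *
        omega
      · intro r _ hr
        simp only [Finset.mem_range] at hr
        rw [gb_eq_zero _ i r (by omega), mul_zero]
    rw [this, Finset.mul_sum, Finset.sum_mul]
    apply Finset.sum_congr rfl
    intro r _
    ring
  rw [Finset.sum_congr rfl h1, Finset.sum_comm]
  apply Finset.sum_congr rfl
  intro r hr
  rw [← Finset.mul_sum]
  congr 1
  obtain ⟨s, rfl⟩ := Nat.exists_eq_add_of_le (Nat.lt_succ_iff.1 (Finset.mem_range.1 hr))
  rw [reidx (k := r) (p := s) _ (by omega) (fun j hj => by simp [gb_eq_zero (q ^ 2) j r hj])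
    (fun j hj => by simp [gb_eq_zero (q ^ 2) _ j hj])]
  rw [show r + s - r = s by omega, ← rev_sum hq hN (p := s) (by omega), Finset.mul_sum]
  apply Finset.sum_congr rfl
  intro t ht
  obtain ⟨u, rfl⟩ := Nat.exists_eq_add_of_le (Nat.lt_succ_iff.1 (Finset.mem_range.1 ht))
  rw [gb_trans (sq_prim hq hN) hp, show r + (t + u) - (r + t) = t + u - t by omega]
  ring

lemma A_S (hq : IsPrimitiveRoot q N) (hN : Odd N) : A N q * S N (q ^ 2) = T N q * A N q := by
  have hQ := sq_prim hq hN
  ext n k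
  obtain ⟨n, hn⟩ := n
  obtain ⟨k, hk⟩ := k
  rw [Matrix.mul_apply, Matrix.mul_apply]
  simp only [S, T, A, Matrix.of_apply]
  let f1 : ℕ → ℂ := fun j => P (q ^ 2) k * (q ^ 2) ^ tri k / P q n *
    (q ^ (n - j) * qPoch (-q) (q ^ 2) (j + 1) * (gb (q ^ 2) n j * gb (q ^ 2) j k))
  have e1 : ∀ j : Fin N, q ^ (n - (j : ℕ)) * P q (2 * j + 1) * gb (q ^ 2) n j / P q n *
      (P (q ^ 2) k * (q ^ 2) ^ tri k * gb (q ^ 2) j k / P (q ^ 2) j) = f1 j := by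
    intro j
    simp only [f1]
    rw [P_double]
    have := P_ne hQ hN j
    have := P_ne hq hN n
    field_simp
  let f2 : ℕ → ℂ := fun j => P q (2 * k + 1) *
    (gb q n j * q ^ (j ^ 2 + j) * q ^ (j - k) * gb (q ^ 2) j k / P q j)
  have e2 : ∀ j : Fin N, gb q n j * q ^ ((j : ℕ) ^ 2 + j) *
      (q ^ ((j : ℕ) - k) * P q (2 * k + 1) * gb (q ^ 2) j k / P q j) = f2 j := by
    intro j
    simp only [f2]
    ring
  rw [fin_sum f1 e1, fin_sum f2 e2]
  by_cases hkn : k ≤ n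
  · obtain ⟨p, rfl⟩ := Nat.exists_eq_add_of_le hkn
    rw [reidx f1 hn (fun j hj => by simp [f1, gb_eq_zero (q ^ 2) j k hj])
      (fun j hj => by simp [f1, gb_eq_zero (q ^ 2) _ j hj])]
    rw [reidx f2 hn (fun j hj => by simp [f2, gb_eq_zero (q ^ 2) j k hj])
      (fun j hj => by simp [f2, gb_eq_zero q _ j hj])]
    have h1 : ∀ i ∈ range (p + 1), f1 (k + i) =
        P q (2 * k + 1) * (q ^ 2) ^ tri k / P q (k + p) * gb (q ^ 2) (k + p) k *
          (q ^ (p - i) * qPoch (-((q ^ 2) ^ (k + 1) * q)) (q ^ 2) i * gb (q ^ 2) p i) := by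
      intro i hi
      obtain ⟨r, rfl⟩ := Nat.exists_eq_add_of_le (Nat.lt_succ_iff.1 (Finset.mem_range.1 hi))
      simp only [f1]
      rw [gb_trans hQ hn, P_double, show k + i + 1 = (k + 1) + i by ring, qPoch_add,
        show k + (i + r) - (k + i) = i + r - i by omega,
        show -q * (q ^ 2) ^ (k + 1) = -((q ^ 2) ^ (k + 1) * q) by ring]
      ring
    rw [Finset.sum_congr rfl h1, ← Finset.mul_sum, x_identity hq hN _ (by omega), Finset.mul_sum]
    apply Finset.sum_congr rfl
    intro i hi
    obtain ⟨r, rfl⟩ := Nat.exists_eq_add_of_le (Nat.lt_succ_iff.1 (Finset.mem_range.1 hi))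
    simp only [f2]
    have t1 := gb_trans hQ hn
    have t2 := gb_PP hq hN (s := r) (j := k + i) (by omega)
    rw [show r + (k + i) = k + (i + r) by ring] at t2
    have n1 := P_ne hq hN (k + i)
    have n2 := P_ne hq hN (k + (i + r))
    rw [show i + r - i = r by omega, show k + i - k = i by omega]
    have ex : q ^ ((k + i) ^ 2 + (k + i)) * q ^ i
        = (q ^ 2) ^ tri k * (q ^ i ^ 2 * ((q ^ 2) ^ (k + 1)) ^ i) := by
      rw [← pow_mul q 2 (tri k), two_tri]
      ring
    have key : gb (q ^ 2) (k + (i + r)) k * (gb (q ^ 2) (i + r) i * P q r) / P q (k + (i + r))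
        = gb q (k + (i + r)) (k + i) * gb (q ^ 2) (k + i) k / P q (k + i) := by
      rw [div_eq_div_iff n2 n1]
      linear_combination gb (q ^ 2) (k + i) k * t2 - P q r * P q (k + i) * t1
    linear_combination P q (2 * k + 1) * (q ^ 2) ^ tri k *
      (q ^ i ^ 2 * ((q ^ 2) ^ (k + 1)) ^ i) * key - P q (2 * k + 1) *
      (gb q (k + (i + r)) (k + i) * gb (q ^ 2) (k + i) k / P q (k + i)) * ex
  · push Not at hkn
    rw [Finset.sum_eq_zero, Finset.sum_eq_zero]
    · intro j _
      by_cases h : j < k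
      · simp [f2, gb_eq_zero (q ^ 2) j k h]
      · simp [f2, gb_eq_zero q n j (by omega)]
    · intro j _
      by_cases h : j < k
      · simp [f1, gb_eq_zero (q ^ 2) j k h]
      · simp [f1, gb_eq_zero (q ^ 2) n j (by omega)]

lemma yS (hq : IsPrimitiveRoot q N) (hN : Odd N) : Matrix.vecMul (y N q) (S N q) = w N q := by
  ext ⟨k, hk⟩
  simp only [Matrix.vecMul, dotProduct, y, S, w, Matrix.of_apply]
  let f : ℕ → ℂ := fun n => P q k * q ^ tri k * ((-1) ^ n * gb q n k)
  have e : ∀ n : Fin N, (-1) ^ (n : ℕ) * P q n * (P q k * q ^ tri k * gb q n k / P q n)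
      = f n := by
    simp only [f]
    intro n
    have := P_ne hq hN n
    field_simp
  rw [fin_sum f e]
  simp only [f]
  rw [← Finset.mul_sum]
  have h := z_sum hq (-1) k hk
  have h2 : qPoch (-1) q (k + 1) = 2 * P q k := by
    rw [qPoch, Finset.prod_range_succ', P, qPoch, mul_comm]
    congr 1
    · norm_num
    · exact Finset.prod_congr rfl (fun j _ => by ring)
  rw [h2, hN.neg_one_pow] at h
  linear_combination (q ^ tri k / 2) * h

lemma yA (hq : IsPrimitiveRoot q N) (hN : Odd N) :
    Matrix.vecMul (y N q) (A N q) = (2 : ℂ) • y N (q ^ 2) := by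
  ext ⟨k, hk⟩
  simp only [Matrix.vecMul, dotProduct, y, A, Matrix.of_apply, Pi.smul_apply, smul_eq_mul]
  have hq0 : q ≠ 0 := hq.ne_zero (by omega)
  let f : ℕ → ℂ := fun n => P q (2 * k + 1) / q ^ k * ((-q) ^ n * gb (q ^ 2) n k)
  have e : ∀ n : Fin N, (-1) ^ (n : ℕ) * P q n *
      (q ^ ((n : ℕ) - k) * P q (2 * k + 1) * gb (q ^ 2) n k / P q n)
      = f n := by
    simp only [f]
    intro n
    have := P_ne hq hN n
    by_cases h : k ≤ (n : ℕ)
    · obtain ⟨r, hr⟩ := Nat.exists_eq_add_of_le h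
      simp only [hr] at *
      rw [show k + r - k = r by omega, neg_pow q]
      field_simp
      ring
    · rw [gb_eq_zero (q ^ 2) n k (by omega)]; simp [gb_eq_zero (q ^ 2) n k (by omega)]
  rw [fin_sum f e]
  simp only [f]
  rw [← Finset.mul_sum]
  have h := z_sum (sq_prim hq hN) (-q) k hk
  rw [hN.neg_pow, hq.pow_eq_one, neg_pow q k] at h
  rw [P_double]
  have : q ^ k ≠ 0 := pow_ne_zero _ hq0
  field_simp
  linear_combination P (q ^ 2) k * h

lemma SAg (hq : IsPrimitiveRoot q N) (hN : Odd N) :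
    Matrix.mulVec (S N q) (Matrix.mulVec (A N q) (g N q)) = fun _ => 1 := by
  have h1 : Matrix.mulVec (A N q) (g N q) = fun n : Fin N => 1 / P q n := by
    ext ⟨n, hn⟩
    simp only [Matrix.mulVec, dotProduct, A, g, Matrix.of_apply]
    let f : ℕ → ℂ := fun k => 1 / P q n * (q ^ (n - k) * qPoch q (q ^ 2) k * gb (q ^ 2) n k)
    have e : ∀ k : Fin N, q ^ (n - (k : ℕ)) * P q (2 * k + 1) * gb (q ^ 2) n k / P q n *
        (qPoch q (q ^ 2) k / P q (2 * k + 1))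
        = f k := by
      simp only [f]
      intro k
      have := P_ne hq hN (2 * k + 1)
      have := P_ne hq hN n
      field_simp
    rw [fin_sum f e]
    simp only [f]
    rw [reidx (k := 0) (p := n) _ (by omega)
      (by intro j hj; omega) (fun j hj => by simp [gb_eq_zero (q ^ 2) n j (by omega)]),
      ← Finset.mul_sum]
    simp only [zero_add]
    rw [sum_one, mul_one]
  rw [h1]
  ext ⟨n, hn⟩
  simp only [Matrix.mulVec, dotProduct, S, Matrix.of_apply]
  let f : ℕ → ℂ := fun k => 1 / P q n * (q ^ tri k * 1 ^ k * gb q n k)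
  have e : ∀ k : Fin N, P q k * q ^ tri k * gb q n k / P q n * (1 / P q k)
        = f k := by
    simp only [f]
    intro k
    have := P_ne hq hN k
    have := P_ne hq hN n
    field_simp
    simp
  rw [fin_sum f e]
  simp only [f]
  rw [reidx (k := 0) (p := n) _ (by omega)
      (by intro j hj; omega) (fun j hj => by simp [gb_eq_zero q n j (by omega)]),
      ← Finset.mul_sum]
  simp only [zero_add]
  rw [qbinom_thm]
  have h2 := P_add q 0 n
  have h3 := P_ne hq hN n
  simp only [zero_add, pow_zero, P_zero, one_mul] at h2
  simp only [one_mul]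
  rw [← h2]
  field_simp

lemma main_matrix (hq : IsPrimitiveRoot q N) (hN : Odd N) (l : ℕ) :
    w N q ⬝ᵥ (T N q ^ (2 * l)).mulVec (fun _ => 1)
      = 2 * (w N (q ^ 2) ⬝ᵥ (T N (q ^ 2) ^ l).mulVec (g N q)) := by
  have hQ := sq_prim hq hN
  have c1 : ∀ j : ℕ, S N q * T N q ^ j * S N q = T N q ^ (j + 1) := by
    intro j
    rw [← S_sq hq hN, ← pow_two, ← pow_mul, ← pow_mul, ← pow_succ', ← pow_succ]
    congr 1
  have c2 : ∀ j : ℕ, T N q ^ j * A N q = A N q * S N (q ^ 2) ^ j := by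
    intro j
    induction j with
    | zero => simp
    | succ j ih => rw [pow_succ, mul_assoc, ← A_S hq hN, ← mul_assoc, ih, mul_assoc, ← pow_succ]
  rw [← SAg hq hN, Matrix.mulVec_mulVec, Matrix.mulVec_mulVec, ← yS hq hN, ← yS hQ hN,
    Matrix.dotProduct_mulVec, Matrix.vecMul_vecMul, Matrix.dotProduct_mulVec,
    Matrix.vecMul_vecMul]
  rw [← mul_assoc, ← mul_assoc, c1, c2, ← Matrix.vecMul_vecMul, yA hq hN, Matrix.smul_vecMul,
    smul_dotProduct, smul_eq_mul, ← S_sq hQ hN, ← pow_two, ← pow_mul, ← pow_succ']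

end root

lemma pi_snoc (N l : ℕ) (f : (Fin (l + 1) → ℕ) → ℂ) :
    ∑ n ∈ Fintype.piFinset (fun _ : Fin (l + 1) => Finset.range N), f n
      = ∑ a ∈ range N, ∑ n ∈ Fintype.piFinset (fun _ : Fin l => Finset.range N),
        f (Fin.snoc (α := fun _ => ℕ) n a) := by
  rw [← Finset.sum_product']
  refine Finset.sum_nbij' (fun n => (n (Fin.last l), Fin.init n))
    (fun p => Fin.snoc (α := fun _ => ℕ) p.2 p.1) ?_ ?_ ?_ ?_ ?_
  · intro n hn
    simp only [Fintype.mem_piFinset, Finset.mem_product] at *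
    exact ⟨hn _, fun i => hn _⟩
  · rintro ⟨a, n⟩ hn
    simp only [Fintype.mem_piFinset, Finset.mem_product] at *
    intro i
    refine Fin.lastCases ?_ (fun j => ?_) i
    · simpa using hn.1
    · simpa using hn.2 j
  · intro n _
    simp
  · rintro ⟨a, n⟩ _
    simp
  · intro n _
    simp

lemma pad_snoc_lt {l : ℕ} (n : Fin l → ℕ) (a j : ℕ) (h : j < l) :
    pad (l + 1) (Fin.snoc (α := fun _ => ℕ) n a) j = pad l n j := by
  simp [pad, h, Fin.snoc, Nat.lt_succ_of_lt h]

lemma pad_snoc_last {l : ℕ} (n : Fin l → ℕ) (a : ℕ) :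
    pad (l + 1) (Fin.snoc (α := fun _ => ℕ) n a) l = a := by
  simp [pad, Fin.snoc]

lemma pad_lt {N l : ℕ} (hN : 0 < N) {n : Fin l → ℕ}
    (hn : n ∈ Fintype.piFinset (fun _ : Fin l => Finset.range N)) (j : ℕ) : pad l n j < N := by
  unfold pad
  split_ifs with h
  · simpa using (Fintype.mem_piFinset.1 hn) ⟨j, h⟩
  · exact hN

/-- generic chain sum -/
lemma chain_sum (N : ℕ) (B : ℕ → ℕ → ℂ) (h : ℕ → ℂ) (l : ℕ) : ∀ W : ℕ → ℂ,
    ∑ n ∈ Fintype.piFinset (fun _ : Fin (l + 1) => Finset.range N),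
      (W (pad (l + 1) n l) * (∏ i ∈ range l, B (pad (l + 1) n (i + 1)) (pad (l + 1) n i))
        * h (pad (l + 1) n 0))
    = (fun n : Fin N => W n) ⬝ᵥ
      ((Matrix.of fun n k : Fin N => B n k) ^ l).mulVec (fun n : Fin N => h n) := by
  induction l with
  | zero =>
    intro W
    rw [pi_snoc]
    simp only [pad_snoc_last]
    simp [dotProduct, Finset.sum_range]
  | succ l ih =>
    intro W
    rw [pi_snoc, pow_succ', ← Matrix.mulVec_mulVec]
    have e : ∀ a ∈ range N, ∑ n ∈ Fintype.piFinset (fun _ : Fin (l + 1) => Finset.range N),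
        (W (pad (l + 1 + 1) (Fin.snoc (α := fun _ => ℕ) n a) (l + 1)) *
          (∏ i ∈ range (l + 1), B (pad (l + 1 + 1) (Fin.snoc (α := fun _ => ℕ) n a) (i + 1))
            (pad (l + 1 + 1) (Fin.snoc (α := fun _ => ℕ) n a) i))
          * h (pad (l + 1 + 1) (Fin.snoc (α := fun _ => ℕ) n a) 0))
        = (fun k : Fin N => W a * B a k) ⬝ᵥ
      ((Matrix.of fun n k : Fin N => B n k) ^ l).mulVec (fun n : Fin N => h n) := by
      intro a _
      rw [← ih (fun k => W a * B a k)]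
      apply Finset.sum_congr rfl
      intro n _
      rw [Finset.prod_range_succ, pad_snoc_last, pad_snoc_lt _ _ l (by omega),
        pad_snoc_lt _ _ 0 (by omega)]
      have : ∀ i ∈ range l, B (pad (l + 1 + 1) (Fin.snoc (α := fun _ => ℕ) n a) (i + 1))
            (pad (l + 1 + 1) (Fin.snoc (α := fun _ => ℕ) n a) i)
          = B (pad (l + 1) n (i + 1)) (pad (l + 1) n i) := by
        intro i hi
        have := Finset.mem_range.1 hi
        rw [pad_snoc_lt _ _ (i + 1) (by omega), pad_snoc_lt _ _ i (by omega)]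
      rw [Finset.prod_congr rfl this]
      ring
    rw [Finset.sum_congr rfl e, Finset.sum_range]
    simp only [dotProduct, Matrix.mulVec, Matrix.of_apply, Finset.mul_sum]
    simp only [mul_assoc]

end Stmt19Aux

open Stmt19Aux in
theorem stmt19 (m : ℕ) (hm : 2 ≤ m) (N : ℕ) (hNodd : Odd N) (q : ℂ)
    (hqN : q ^ N = 1) (hprim : ∀ j : ℕ, 1 ≤ j → j < N → q ^ j ≠ 1) :
    (∑ n ∈ Fintype.piFinset (fun _ : Fin (2 * m - 3) => Finset.range N),
        Sterm (2 * m - 2) 0 q (pad (2 * m - 3) n)) =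
      2 * ∑ n ∈ Fintype.piFinset (fun _ : Fin (m - 1) => Finset.range N),
        Gterm m q (pad (m - 1) n) := by
  have hN0 : 0 < N := hNodd.pos
  have hq : IsPrimitiveRoot q N :=
    IsPrimitiveRoot.mk_of_lt q hN0 hqN (fun j h1 h2 => hprim j h1 h2)
  have hQ := sq_prim hq hNodd
  obtain ⟨l, rfl⟩ := Nat.exists_eq_add_of_le' hm
  rw [show 2 * (l + 2) - 3 = 2 * l + 1 by omega, show 2 * (l + 2) - 2 = 2 * l + 2 by omega,
    show l + 2 - 1 = l + 1 by omega]
  have hL : ∀ n ∈ Fintype.piFinset (fun _ : Fin (2 * l + 1) => Finset.range N),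
      Sterm (2 * l + 2) 0 q (pad (2 * l + 1) n)
      = (fun a : ℕ => (-1) ^ a * q ^ tri a) (pad (2 * l + 1) n (2 * l)) *
        (∏ i ∈ range (2 * l), (fun a b : ℕ => gb q a b * q ^ (b ^ 2 + b))
          (pad (2 * l + 1) n (i + 1)) (pad (2 * l + 1) n i))
        * (fun _ : ℕ => (1 : ℂ)) (pad (2 * l + 1) n 0) := by
    intro n hn
    have hlt := pad_lt hN0 hn
    unfold Sterm
    rw [show 2 * l + 2 - 2 = 2 * l by omega]
    generalize pad (2 * l + 1) n = u at *
    simp only [Nat.add_eq_zero_iff, one_ne_zero, and_false, if_false, add_zero,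
      ← Finset.range_eq_Ico, mul_one]
    rw [Finset.prod_congr rfl (fun i _ => qBinom_eq hq (hlt (i + 1))), Finset.prod_mul_distrib,
      Finset.prod_pow_eq_pow_sum, Finset.sum_add_distrib, add_assoc, pow_add, tri]
    ring
  have hR : ∀ n ∈ Fintype.piFinset (fun _ : Fin (l + 1) => Finset.range N),
      Gterm (l + 2) q (pad (l + 1) n)
      = (fun a : ℕ => (-1) ^ a * (q ^ 2) ^ tri a) (pad (l + 1) n l) *
        (∏ i ∈ range l, (fun a b : ℕ => gb (q ^ 2) a b * (q ^ 2) ^ (b ^ 2 + b))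
          (pad (l + 1) n (i + 1)) (pad (l + 1) n i))
        * (fun a : ℕ => qPoch q (q ^ 2) a / P q (2 * a + 1)) (pad (l + 1) n 0) := by
    intro n hn
    have hlt := pad_lt hN0 hn
    unfold Gterm
    rw [show l + 2 - 2 = l by omega]
    generalize pad (l + 1) n = u at *
    simp only
    rw [Finset.prod_congr rfl (fun i _ => qBinom_eq hQ (hlt (i + 1))), Finset.prod_mul_distrib,
      Finset.prod_pow_eq_pow_sum, ← pow_mul q 2 (tri _), two_tri, ← pow_mul, pow_add, P,
      Finset.mul_sum, Finset.sum_congr rfl (fun j _ => (mul_add 2 (u j ^ 2) (u j)))]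
    ring
  rw [Finset.sum_congr rfl hL, Finset.sum_congr rfl hR,
    chain_sum N (fun a b : ℕ => gb q a b * q ^ (b ^ 2 + b)) (fun _ => 1) (2 * l)
      (fun a : ℕ => (-1) ^ a * q ^ tri a),
    chain_sum N (fun a b : ℕ => gb (q ^ 2) a b * (q ^ 2) ^ (b ^ 2 + b))
      (fun a : ℕ => qPoch q (q ^ 2) a / P q (2 * a + 1)) l
      (fun a : ℕ => (-1) ^ a * (q ^ 2) ^ tri a)]
  exact main_matrix hq hNodd l
end
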